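/- arXiv:2407.11903 — 3 statements merged into one kernel-verified Lean document; each statement's English description precedes it below -/
import Mathlib

section
/- (Yuan's rigidity theorem for the special Lagrangian equation) Let n ≥ 2, let Θ be a real constant with |Θ| > (n−2)π/2, and let u : ℝⁿ → ℝ be a smooth function such that ∑_{i=1}^n arctan λᵢ(x) = Θ for every x ∈ ℝⁿ, where λ₁(x),…,λₙ(x) are the eigenvalues of D²u(x). Then u is a quadratic polynomial. -/
open Real

/-- Second partial derivative matrix (Hessian) of `u` at `x`. -/
noncomputable def hessianMatrix {n : ℕ} (u : EuclideanSpace ℝ (Fin n) → ℝ)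
    (x : EuclideanSpace ℝ (Fin n)) : Matrix (Fin n) (Fin n) ℝ :=
  Matrix.of fun i j =>
    fderiv ℝ (fun y => fderiv ℝ u y (EuclideanSpace.single j 1)) x (EuclideanSpace.single i 1)

/-- `u` is a quadratic polynomial. -/
def IsQuadraticPoly {n : ℕ} (u : EuclideanSpace ℝ (Fin n) → ℝ) : Prop :=
  ∃ (A : Matrix (Fin n) (Fin n) ℝ) (b : Fin n → ℝ) (c : ℝ), A.IsSymm ∧
    ∀ x, u x = (1/2) * (∑ i, ∑ j, A i j * x i * x j) + (∑ i, b i * x i) + c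


namespace YuanSL

open MeasureTheory Set

abbrev EE (n : ℕ) := EuclideanSpace ℝ (Fin n)

/-- partial derivative -/
noncomputable def pd {n : ℕ} (k : Fin n) (f : EE n → ℝ) (x : EE n) : ℝ :=
  fderiv ℝ f x (EuclideanSpace.single k 1)

/-- smooth -/
abbrev Sm {n : ℕ} (f : EE n → ℝ) : Prop := ContDiff ℝ (⊤ : ℕ∞) f

variable {n : ℕ}

lemma Sm.diff {f : EE n → ℝ} (hf : Sm f) (x : EE n) : DifferentiableAt ℝ f x :=
  hf.differentiable (by simp) x

lemma Sm.pd {f : EE n → ℝ} (hf : Sm f) (k : Fin n) : Sm (pd k f) := by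
  have : ContDiff ℝ (⊤ : ℕ∞) (fderiv ℝ f) := hf.fderiv_right (by simp)
  exact this.clm_apply contDiff_const

lemma contDiff_pd {f : EE n → ℝ} {m m' : WithTop ℕ∞} (hf : ContDiff ℝ m' f) (h : m + 1 ≤ m')
    (k : Fin n) : ContDiff ℝ m (pd k f) :=
  (hf.fderiv_right h).clm_apply contDiff_const

lemma pd_add {f g : EE n → ℝ} {x : EE n} (hf : DifferentiableAt ℝ f x)
    (hg : DifferentiableAt ℝ g x) (k : Fin n) :
    pd k (fun y => f y + g y) x = pd k f x + pd k g x := by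
  simp [pd, fderiv_fun_add hf hg]

lemma pd_sub {f g : EE n → ℝ} {x : EE n} (hf : DifferentiableAt ℝ f x)
    (hg : DifferentiableAt ℝ g x) (k : Fin n) :
    pd k (fun y => f y - g y) x = pd k f x - pd k g x := by
  simp [pd, fderiv_fun_sub hf hg]

lemma pd_mul {f g : EE n → ℝ} {x : EE n} (hf : DifferentiableAt ℝ f x)
    (hg : DifferentiableAt ℝ g x) (k : Fin n) :
    pd k (fun y => f y * g y) x = pd k f x * g x + f x * pd k g x := by
  simp [pd, fderiv_fun_mul hf hg]; ring

lemma pd_const (c : ℝ) (k : Fin n) (x : EE n) : pd k (fun _ => c) x = 0 := by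
  simp [pd]

lemma pd_const_mul {f : EE n → ℝ} {x : EE n} (hf : DifferentiableAt ℝ f x) (c : ℝ)
    (k : Fin n) : pd k (fun y => c * f y) x = c * pd k f x := by
  rw [pd_mul (by fun_prop) hf, pd_const]; ring

lemma pd_sum {ι : Type*} (s : Finset ι) {f : ι → EE n → ℝ} {x : EE n}
    (hf : ∀ i ∈ s, DifferentiableAt ℝ (f i) x) (k : Fin n) :
    pd k (fun y => ∑ i ∈ s, f i y) x = ∑ i ∈ s, pd k (f i) x := by
  simp [pd, fderiv_fun_sum hf]

lemma pd_comp {φ : ℝ → ℝ} {f : EE n → ℝ} {x : EE n} {φ' : ℝ} (hφ : HasDerivAt φ φ' (f x))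
    (hf : DifferentiableAt ℝ f x) (k : Fin n) :
    pd k (fun y => φ (f y)) x = φ' * pd k f x := by
  have := hφ.comp_hasFDerivAt x hf.hasFDerivAt
  have h2 := this.fderiv
  simp only [pd]
  rw [show (fun y => φ (f y)) = φ ∘ f from rfl, h2]
  simp

lemma pd_coord (k i : Fin n) (x : EE n) : pd k (fun y : EE n => y i) x = if k = i then 1 else 0 := by
  have : (fun y : EE n => y i) = (EuclideanSpace.proj i : EE n →L[ℝ] ℝ) := by ext; simp
  simp only [pd]
  rw [this, ContinuousLinearMap.fderiv]
  simp [eq_comm]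

lemma pd_comm {f : EE n → ℝ} (hf : ContDiff ℝ 2 f) (k l : Fin n) (x : EE n) :
    pd k (pd l f) x = pd l (pd k f) x := by
  have hd : DifferentiableAt ℝ (fderiv ℝ f) x :=
    (hf.fderiv_right (m := 1) (by norm_num)).differentiable (by simp) x
  have key : ∀ a b : Fin n, pd a (pd b f) x =
      fderiv ℝ (fderiv ℝ f) x (EuclideanSpace.single a 1) (EuclideanSpace.single b 1) := by
    intro a b
    have : pd b f = fun y => fderiv ℝ f y (EuclideanSpace.single b 1) := rfl
    rw [pd, this, fderiv_clm_apply hd (by fun_prop)]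
    simp
  rw [key, key]
  have hs : IsSymmSndFDerivAt ℝ f x := hf.contDiffAt.isSymmSndFDerivAt (by simp)
  exact hs _ _

lemma fderiv_eq_sum {f : EE n → ℝ} (x v : EE n) :
    fderiv ℝ f x v = ∑ k, v k * pd k f x := by
  have hv : v = ∑ k, v k • (EuclideanSpace.single k (1:ℝ) : EE n) := by
    ext i; simp [Finset.sum_apply, Pi.single_apply]
  conv_lhs => rw [hv]
  simp [map_sum, pd]

lemma norm_fderiv_le {f : EE n → ℝ} (x : EE n) :
    ‖fderiv ℝ f x‖ ^ 2 ≤ ∑ k, pd k f x ^ 2 := by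
  have h0 : 0 ≤ ∑ k, pd k f x ^ 2 := Finset.sum_nonneg fun _ _ => sq_nonneg _
  have : ‖fderiv ℝ f x‖ ≤ √(∑ k, pd k f x ^ 2) := by
    refine ContinuousLinearMap.opNorm_le_bound _ (sqrt_nonneg _) fun v => ?_
    rw [fderiv_eq_sum, Real.norm_eq_abs, EuclideanSpace.norm_eq, ← Real.sqrt_mul h0]
    apply Real.abs_le_sqrt
    have := Finset.sum_mul_sq_le_sq_mul_sq Finset.univ (fun k => v k) (fun k => pd k f x)
    simp only [Real.norm_eq_abs, sq_abs]
    linarith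
  calc ‖fderiv ℝ f x‖ ^ 2 ≤ √(∑ k, pd k f x ^ 2) ^ 2 := by gcongr
    _ = _ := Real.sq_sqrt h0

lemma hasCompactSupport_pd {f : EE n → ℝ} (hf : HasCompactSupport f) (k : Fin n) :
    HasCompactSupport (pd k f) := by
  have := hf.fderiv (𝕜 := ℝ)
  exact this.comp_left (g := fun L : EE n →L[ℝ] ℝ => L (EuclideanSpace.single k 1)) (by simp)

lemma integral_pd_eq_zero {f : EE n → ℝ} (hf : ContDiff ℝ 1 f) (hc : HasCompactSupport f)
    (k : Fin n) : ∫ x, pd k f x = 0 := by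
  have h := integral_mul_fderiv_eq_neg_fderiv_mul_of_integrable (μ := (volume : Measure (EE n)))
    (f := fun _ : EE n => (1:ℝ)) (g := f) (v := EuclideanSpace.single k 1)
    (by simp) ?_ ?_ (fun _ _ => by fun_prop) (fun x _ => hf.differentiable (by simp) x)
  · simpa [pd] using h
  · simp only [one_mul]
    exact (contDiff_pd (m := 0) hf (by simp) k).continuous.integrable_of_hasCompactSupport
      (hasCompactSupport_pd hc k)
  · simp only [one_mul]
    exact hf.continuous.integrable_of_hasCompactSupport hc

/-- positive part power -/
lemma hasDerivAt_pp (m : ℕ) (t : ℝ) :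
    HasDerivAt (fun t : ℝ => (max t 0) ^ (m + 2)) ((m + 2) * (max t 0) ^ (m + 1)) t := by
  rcases lt_trichotomy t 0 with h | h | h
  · have : (fun t : ℝ => (max t 0) ^ (m + 2)) =ᶠ[nhds t] fun _ => 0 := by
      filter_upwards [Iio_mem_nhds h] with s hs
      have hs' : s < 0 := hs
      simp [max_eq_right hs'.le]
    rw [max_eq_right h.le]
    simpa using (hasDerivAt_const t (0:ℝ)).congr_of_eventuallyEq this
  · subst h
    simp only [max_self, ne_eq, Nat.add_eq_zero_iff, one_ne_zero, and_false, not_false_eq_true,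
      zero_pow, mul_zero]
    rw [hasDerivAt_iff_isLittleO]
    simp only [max_self, ne_eq, Nat.add_eq_zero_iff, OfNat.ofNat_ne_zero, and_false,
      not_false_eq_true, zero_pow, sub_zero, smul_zero]
    have h1 : (fun t : ℝ => (max t 0) ^ (m + 2)) =O[nhds 0] fun t : ℝ => t ^ (m + 2) := by
      refine Asymptotics.IsBigO.of_bound 1 (Filter.Eventually.of_forall fun t => ?_)
      rw [norm_pow, norm_pow, one_mul]
      gcongr
      rw [Real.norm_eq_abs, Real.norm_eq_abs, abs_of_nonneg (le_max_right _ _)]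
      exact max_le (le_abs_self _) (abs_nonneg _)
    refine h1.trans_isLittleO ?_
    have := Asymptotics.isLittleO_pow_pow (𝕜 := ℝ) (m := 1) (n := m + 2) (by omega)
    simpa using this
  · have : (fun t : ℝ => (max t 0) ^ (m + 2)) =ᶠ[nhds t] fun t => t ^ (m + 2) := by
      filter_upwards [Ioi_mem_nhds h] with s hs
      have hs' : 0 < s := hs
      simp [max_eq_left hs'.le]
    rw [max_eq_left h.le]
    have h2 := (hasDerivAt_pow (m + 2) t).congr_of_eventuallyEq this
    simpa using h2

lemma contDiff_pp (m : ℕ) : ContDiff ℝ (m + 1 : ℕ) (fun t : ℝ => (max t 0) ^ (m + 2)) := by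
  induction m with
  | zero =>
    have := contDiff_succ_iff_deriv (𝕜 := ℝ) (n := 0) (f := fun t : ℝ => (max t 0) ^ (0 + 2))
    simp only [Nat.zero_add] at *
    rw [show ((1 : ℕ) : WithTop ℕ∞) = 0 + 1 by simp]
    rw [this]
    refine ⟨fun t => (hasDerivAt_pp 0 t).differentiableAt, by simp, ?_⟩
    rw [contDiff_zero]
    have : deriv (fun t : ℝ => (max t 0) ^ 2) = fun t => (((0:ℕ):ℝ) + 2) * (max t 0) ^ (0 + 1) := by
      ext t; exact (hasDerivAt_pp 0 t).deriv
    rw [this]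
    fun_prop
  | succ m ih =>
    have := contDiff_succ_iff_deriv (𝕜 := ℝ) (n := ((m + 1 : ℕ) : WithTop ℕ∞))
      (f := fun t : ℝ => (max t 0) ^ (m + 1 + 2))
    rw [show ((m + 1 + 1 : ℕ) : WithTop ℕ∞) = ((m + 1 : ℕ) : WithTop ℕ∞) + 1 by push_cast; rfl]
    rw [this]
    refine ⟨fun t => (hasDerivAt_pp (m+1) t).differentiableAt, by simp, ?_⟩
    have : deriv (fun t : ℝ => (max t 0) ^ (m + 1 + 2)) =
        fun t => (((m + 1 : ℕ) : ℝ) + 2) * (max t 0) ^ (m + 2) := by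
      ext t; exact (hasDerivAt_pp (m+1) t).deriv
    rw [this]
    exact contDiff_const.mul ih

end YuanSL

namespace YuanSL

open MeasureTheory Set

/-- The analytic data: divergence free elliptic coefficients with a distance-like function. -/
structure Ctx (n : ℕ) where
  a : Fin n → Fin n → EE n → ℝ
  a_sm : ∀ i j, Sm (a i j)
  a_sym : ∀ i j x, a i j x = a j i x
  a_div : ∀ j x, ∑ i, pd i (a i j) x = 0
  lam : ℝ
  lam_pos : 0 < lam
  ell : ∀ x (ξ : Fin n → ℝ), lam * ∑ i, ξ i ^ 2 ≤ ∑ i, ∑ j, a i j x * ξ i * ξ j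
  J : EE n → ℝ
  J_cont : Continuous J
  J_one : ∀ x, 1 ≤ J x
  CJ : ℝ
  J_le : ∀ x, J x ≤ CJ
  s : EE n → EE n → ℝ
  s_sm : ∀ x₀, Sm (s x₀)
  K : ℝ
  s_ge : ∀ x₀ x, ‖x - x₀‖ ^ 2 ≤ s x₀ x
  s_le : ∀ x₀ x, s x₀ x ≤ K * ‖x - x₀‖ ^ 2
  K_one : 1 ≤ K
  s_lap : ∀ x₀ x, ∑ i, ∑ j, a i j x * pd i (pd j (s x₀)) x = 2 * n * J x
  s_grad : ∀ x₀ x, ∑ i, ∑ j, a i j x * pd i (s x₀) x * pd j (s x₀) x ≤ 4 * s x₀ x * J x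

namespace Ctx

variable {n : ℕ} (c : Ctx n)

/-- weighted Laplacian -/
noncomputable def lap (f : EE n → ℝ) (x : EE n) : ℝ := ∑ i, ∑ j, c.a i j x * pd i (pd j f) x

/-- carre du champ -/
noncomputable def gam (f g : EE n → ℝ) (x : EE n) : ℝ :=
  ∑ i, ∑ j, c.a i j x * pd i f x * pd j g x

lemma gam_comm (f g : EE n → ℝ) (x : EE n) : c.gam f g x = c.gam g f x := by
  unfold gam
  rw [Finset.sum_comm]
  refine Finset.sum_congr rfl fun i _ => Finset.sum_congr rfl fun j _ => ?_
  rw [c.a_sym j i]; ring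

lemma quad_nonneg (x : EE n) (ξ : Fin n → ℝ) : 0 ≤ ∑ i, ∑ j, c.a i j x * ξ i * ξ j :=
  le_trans (mul_nonneg c.lam_pos.le (Finset.sum_nonneg fun _ _ => sq_nonneg _)) (c.ell x ξ)

lemma continuous_lap {f : EE n → ℝ} (hf : ContDiff ℝ 2 f) : Continuous (c.lap f) := by
  unfold lap
  refine continuous_finsetSum _ fun i _ => continuous_finsetSum _ fun j _ => ?_
  exact (c.a_sm i j).continuous.mul
    (contDiff_pd (m := 0) (contDiff_pd (m := 1) hf (by norm_num) j) (by simp) i).continuous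

lemma continuous_gam {f g : EE n → ℝ} (hf : ContDiff ℝ 1 f) (hg : ContDiff ℝ 1 g) :
    Continuous (c.gam f g) := by
  unfold gam
  refine continuous_finsetSum _ fun i _ => continuous_finsetSum _ fun j _ => ?_
  exact ((c.a_sm i j).continuous.mul
    (contDiff_pd (m := 0) hf (by simp) i).continuous).mul
    (contDiff_pd (m := 0) hg (by simp) j).continuous

lemma ibp {φ χ : EE n → ℝ} (hφ : ContDiff ℝ 1 φ) (hχ : ContDiff ℝ 2 χ)
    (hc : HasCompactSupport φ ∨ HasCompactSupport χ) :
    ∫ x, (φ x * c.lap χ x + c.gam φ χ x) = 0 := by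
  have h1 : ∀ j, ContDiff ℝ 1 (pd j χ) := fun j => contDiff_pd (m := 1) hχ (by norm_num) j
  have ha : ∀ i j, ContDiff ℝ 1 (c.a i j) := fun i j => (c.a_sm i j).of_le (by simp)
  set F : Fin n → Fin n → EE n → ℝ := fun i j x => φ x * (c.a i j x * pd j χ x) with hF
  have hFc : ∀ i j, ContDiff ℝ 1 (F i j) := fun i j => hφ.mul ((ha i j).mul (h1 j))
  have hFs : ∀ i j, HasCompactSupport (F i j) := by
    intro i j
    rcases hc with h | h
    · exact h.mul_right
    · exact ((hasCompactSupport_pd h j).mul_left).mul_left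
  have hint : ∀ i j, Integrable (pd i (F i j)) := fun i j =>
    (contDiff_pd (m := 0) (hFc i j) (by simp) i).continuous.integrable_of_hasCompactSupport
      (hasCompactSupport_pd (hFs i j) i)
  have key : ∀ x, φ x * c.lap χ x + c.gam φ χ x = ∑ i, ∑ j, pd i (F i j) x := by
    intro x
    have hd : ∀ i j, pd i (F i j) x = pd i φ x * (c.a i j x * pd j χ x) +
        φ x * (pd i (c.a i j) x * pd j χ x + c.a i j x * pd i (pd j χ) x) := by
      intro i j
      have d1 := hφ.differentiable (by simp) x
      have d2 := (ha i j).differentiable (by simp) x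
      have d3 := (h1 j).differentiable (by simp) x
      rw [hF]
      simp only []
      rw [pd_mul d1 (d2.fun_mul d3), pd_mul d2 d3]
    have hz : ∑ i, ∑ j, φ x * (pd i (c.a i j) x * pd j χ x) = 0 := by
      rw [Finset.sum_comm]
      refine Finset.sum_eq_zero fun j _ => ?_
      rw [← Finset.mul_sum, ← Finset.sum_mul, c.a_div]; simp
    simp only [hd, lap, gam]
    have : ∀ i j, pd i φ x * (c.a i j x * pd j χ x) +
        φ x * (pd i (c.a i j) x * pd j χ x + c.a i j x * pd i (pd j χ) x)
        = c.a i j x * pd i φ x * pd j χ x + φ x * (pd i (c.a i j) x * pd j χ x)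
        + φ x * (c.a i j x * pd i (pd j χ) x) := by intros; ring
    simp only [this, Finset.sum_add_distrib, hz, Finset.mul_sum]
    ring
  simp only [key]
  rw [integral_finsetSum _ fun i _ => integrable_finsetSum _ fun j _ => hint i j]
  refine Finset.sum_eq_zero fun i _ => ?_
  rw [integral_finsetSum _ fun j _ => hint i j]
  exact Finset.sum_eq_zero fun j _ => integral_pd_eq_zero (hFc i j) (hFs i j) i

lemma hasCompactSupport_lap {f : EE n → ℝ} (hf : HasCompactSupport f) :
    HasCompactSupport (c.lap f) := by
  refine HasCompactSupport.of_support_subset_isCompact hf.isCompact ?_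
  intro x hx
  by_contra h
  apply hx
  unfold lap
  refine Finset.sum_eq_zero fun i _ => Finset.sum_eq_zero fun j _ => ?_
  have : x ∉ tsupport (pd i (pd j f)) := by
    intro h'
    apply h
    have h2 : tsupport (pd i (pd j f)) ⊆ tsupport (pd j f) :=
      (closure_mono fun y hy => by
        intro h0; apply hy; simp [pd, h0]).trans (tsupport_fderiv_subset ℝ (f := pd j f))
    have h3 : tsupport (pd j f) ⊆ tsupport f :=
      (closure_mono fun y hy => by
        intro h0; apply hy; simp [pd, h0]).trans (tsupport_fderiv_subset ℝ (f := f))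
    exact h3 (h2 h')
  simp [image_eq_zero_of_notMem_tsupport this]

lemma green {f ψ : EE n → ℝ} (hf : ContDiff ℝ 2 f) (hψ : ContDiff ℝ 2 ψ)
    (hc : HasCompactSupport ψ) : ∫ x, f x * c.lap ψ x = ∫ x, ψ x * c.lap f x := by
  have hf1 : ContDiff ℝ 1 f := hf.of_le (by norm_num)
  have hψ1 : ContDiff ℝ 1 ψ := hψ.of_le (by norm_num)
  have e1 := c.ibp hf1 hψ (Or.inr hc)
  have e2 := c.ibp hψ1 hf (Or.inl hc)
  have i1 : Integrable fun x => f x * c.lap ψ x :=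
    (hf.continuous.mul (c.continuous_lap hψ)).integrable_of_hasCompactSupport
      ((c.hasCompactSupport_lap hc).mul_left)
  have i2 : Integrable fun x => ψ x * c.lap f x :=
    (hψ.continuous.mul (c.continuous_lap hf)).integrable_of_hasCompactSupport hc.mul_right
  have i3 : Integrable fun x => c.gam f ψ x := by
    refine (c.continuous_gam hf1 hψ1).integrable_of_hasCompactSupport ?_
    refine HasCompactSupport.of_support_subset_isCompact hc.isCompact ?_
    intro x hx
    by_contra h
    apply hx
    have : fderiv ℝ ψ x = 0 := by
      by_contra h0
      exact h (tsupport_fderiv_subset ℝ (subset_tsupport _ h0))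
    simp [gam, pd, this]
  simp only [c.gam_comm ψ f] at e2
  rw [integral_add i1 i3] at e1
  rw [integral_add i2 i3] at e2
  linarith

lemma lap_comp {φ φ' : ℝ → ℝ} {φ'' : ℝ} {f : EE n → ℝ} (hf : ContDiff ℝ 2 f) (x : EE n)
    (h1 : ∀ y, HasDerivAt φ (φ' (f y)) (f y)) (h2 : HasDerivAt φ' φ'' (f x)) :
    c.lap (fun y => φ (f y)) x = φ' (f x) * c.lap f x + φ'' * c.gam f f x := by
  have hd : ∀ y, DifferentiableAt ℝ f y := fun y => hf.differentiable (by simp) y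
  have e1 : ∀ j, pd j (fun y => φ (f y)) = fun y => φ' (f y) * pd j f y := fun j => by
    ext y; exact pd_comp (h1 y) (hd y) j
  have e2 : ∀ i j, pd i (fun y => φ' (f y) * pd j f y) x =
      φ'' * pd i f x * pd j f x + φ' (f x) * pd i (pd j f) x := fun i j => by
    rw [pd_mul _ _, pd_comp h2 (hd x)]
    · exact h2.differentiableAt.comp x (hd x)
    · exact (contDiff_pd (m := 1) hf (by norm_num) j).differentiable (by simp) x
  unfold lap gam
  simp only [e1, e2]
  simp only [Finset.mul_sum, ← Finset.sum_add_distrib]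
  refine Finset.sum_congr rfl fun i _ => Finset.sum_congr rfl fun j _ => ?_
  ring

lemma gam_comp_left {φ φ' : ℝ → ℝ} {f g : EE n → ℝ} (hf : ContDiff ℝ 1 f) (x : EE n)
    (h1 : ∀ y, HasDerivAt φ (φ' (f y)) (f y)) :
    c.gam (fun y => φ (f y)) g x = φ' (f x) * c.gam f g x := by
  unfold gam
  simp only [pd_comp (h1 x) (hf.differentiable (by simp) x), Finset.mul_sum]
  refine Finset.sum_congr rfl fun i _ => Finset.sum_congr rfl fun j _ => ?_
  ring

end Ctx

end YuanSL

namespace YuanSL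

open MeasureTheory Set

namespace Ctx

variable {n : ℕ} (c : Ctx n)

lemma s_nonneg (x₀ x : EE n) : 0 ≤ c.s x₀ x := le_trans (sq_nonneg _) (c.s_ge x₀ x)

/-- cutoff -/
noncomputable def tau (x₀ : EE n) (r : ℝ) (x : EE n) : ℝ := max (1 - c.s x₀ x / r ^ 2) 0

lemma tau_nonneg (x₀ : EE n) (r : ℝ) (x : EE n) : 0 ≤ c.tau x₀ r x := le_max_right _ _

lemma tau_le_one (x₀ : EE n) (r : ℝ) (x : EE n) : c.tau x₀ r x ≤ 1 := by
  refine max_le ?_ zero_le_one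
  have : 0 ≤ c.s x₀ x / r ^ 2 := div_nonneg (c.s_nonneg _ _) (sq_nonneg _)
  linarith

lemma tau_eq_zero {x₀ : EE n} {r : ℝ} (hr : 0 < r) {x : EE n} (hx : r ≤ ‖x - x₀‖) :
    c.tau x₀ r x = 0 := by
  refine max_eq_right ?_
  have h1 : r ^ 2 ≤ c.s x₀ x := le_trans (by gcongr) (c.s_ge x₀ x)
  have : 1 ≤ c.s x₀ x / r ^ 2 := by rw [le_div_iff₀ (by positivity)]; linarith
  linarith

lemma s_lt_of_tau {x₀ : EE n} {r : ℝ} (hr : 0 < r) {x : EE n} (hx : c.tau x₀ r x ≠ 0) :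
    c.s x₀ x < r ^ 2 := by
  by_contra h
  push Not at h
  apply hx
  refine max_eq_right ?_
  have : 1 ≤ c.s x₀ x / r ^ 2 := by rw [le_div_iff₀ (by positivity)]; linarith
  linarith

lemma continuous_tau (x₀ : EE n) (r : ℝ) : Continuous (c.tau x₀ r) := by
  have := (c.s_sm x₀).continuous
  unfold tau
  fun_prop

lemma compact_tau_pow (x₀ : EE n) {r : ℝ} (hr : 0 < r) (m : ℕ) :
    HasCompactSupport (fun x => c.tau x₀ r x ^ (m + 1)) := by
  refine HasCompactSupport.of_support_subset_isCompact (isCompact_closedBall x₀ r) ?_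
  intro x hx
  by_contra h
  rw [Metric.mem_closedBall, dist_eq_norm] at h
  apply hx
  simp [c.tau_eq_zero hr (le_of_not_ge h)]

lemma contDiff_tau_pow (x₀ : EE n) (r : ℝ) (m : ℕ) :
    ContDiff ℝ (m + 1 : ℕ) (fun x => c.tau x₀ r x ^ (m + 2)) := by
  have h1 : ContDiff ℝ (m + 1 : ℕ) (fun x => 1 - c.s x₀ x / r ^ 2) := by
    have : ContDiff ℝ (m + 1 : ℕ) (c.s x₀) := (c.s_sm x₀).of_le (by exact_mod_cast le_top)
    exact contDiff_const.sub (this.div_const _)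
  exact (contDiff_pp m).comp h1

/-- derivative in s -/
lemma hasDerivAt_phi (r : ℝ) (m : ℕ) (t : ℝ) :
    HasDerivAt (fun t : ℝ => (max (1 - t / r ^ 2) 0) ^ (m + 2))
      (-((m + 2) / r ^ 2) * (max (1 - t / r ^ 2) 0) ^ (m + 1)) t := by
  have h1 : HasDerivAt (fun t : ℝ => 1 - t / r ^ 2) (-(1 / r ^ 2)) t := by
    simpa using ((hasDerivAt_id t).div_const (r ^ 2)).const_sub 1
  have := (hasDerivAt_pp m (1 - t / r ^ 2)).comp t h1
  convert! this using 1
  ring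

/-- the mass -/
noncomputable def mass (f : EE n → ℝ) (x₀ : EE n) (r : ℝ) : ℝ :=
  ∫ x, f x * c.J x * c.tau x₀ r x ^ 2

lemma hasDerivAt_mass {f : EE n → ℝ} (hf : Continuous f) (hf0 : ∀ x, 0 ≤ f x) (x₀ : EE n)
    {r : ℝ} (hr : 0 < r) :
    HasDerivAt (c.mass f x₀) (∫ x, f x * c.J x * (4 * c.tau x₀ r x * c.s x₀ x / r ^ 3)) r := by
  have hs := (c.s_sm x₀).continuous
  have hJ := c.J_cont
  have hτ := fun r => c.continuous_tau x₀ r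
  unfold mass
  have hJ0 : ∀ x, 0 ≤ c.J x := fun x => zero_le_one.trans (c.J_one x)
  refine (hasDerivAt_integral_of_dominated_loc_of_deriv_le (𝕜 := ℝ)
    (F := fun r x => f x * c.J x * c.tau x₀ r x ^ 2)
    (F' := fun r x => f x * c.J x * (4 * c.tau x₀ r x * c.s x₀ x / r ^ 3))
    (s := Metric.ball r (r / 2))
    (bound := (Metric.closedBall x₀ (2 * r)).indicator
      fun x => f x * c.J x * (4 * 1 * c.s x₀ x / (r / 2) ^ 3))
    (Metric.ball_mem_nhds r (by positivity)) ?_ ?_ ?_ ?_ ?_ ?_).2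
  · refine Filter.Eventually.of_forall fun r => ?_
    exact ((hf.mul hJ).mul ((hτ r).pow 2)).aestronglyMeasurable
  · exact ((hf.mul hJ).mul ((hτ r).pow 2)).integrable_of_hasCompactSupport
      ((c.compact_tau_pow x₀ hr 1).mul_left)
  · exact ((hf.mul hJ).mul ((((hτ r).const_mul 4).mul hs).div_const _)).aestronglyMeasurable
  · refine Filter.Eventually.of_forall fun x t ht => ?_
    rw [Metric.mem_ball, Real.dist_eq, abs_lt] at ht
    have ht1 : r / 2 < t := by linarith
    have ht2 : t < 2 * r := by linarith
    have ht0 : 0 < t := by linarith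
    by_cases hx : x ∈ Metric.closedBall x₀ (2 * r)
    · rw [indicator_of_mem hx, Real.norm_eq_abs, abs_of_nonneg]
      · have := c.s_nonneg x₀ x
        have := c.tau_nonneg x₀ t x
        have := c.tau_le_one x₀ t x
        have := hf0 x
        have := hJ0 x
        gcongr
      · have := c.s_nonneg x₀ x
        have := c.tau_nonneg x₀ t x
        have := hf0 x
        have := hJ0 x
        positivity
    · rw [indicator_of_notMem hx]
      rw [Metric.mem_closedBall, dist_eq_norm, not_le] at hx
      simp [c.tau_eq_zero ht0 (le_of_lt (ht2.trans hx))]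
  · rw [integrable_indicator_iff Metric.isClosed_closedBall.measurableSet]
    refine ContinuousOn.integrableOn_compact (isCompact_closedBall _ _) ?_
    exact ((hf.mul hJ).mul ((hs.const_mul (4 * 1)).div_const _)).continuousOn
  · refine Filter.Eventually.of_forall fun x t ht => ?_
    rw [Metric.mem_ball, Real.dist_eq, abs_lt] at ht
    have ht0 : t ≠ 0 := by linarith
    have h1 : HasDerivAt (fun t : ℝ => 1 - c.s x₀ x / t ^ 2) (2 * c.s x₀ x / t ^ 3) t := by
      have := ((hasDerivAt_const t (c.s x₀ x)).div (hasDerivAt_pow 2 t) (by positivity)).const_sub 1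
      convert! this using 1
      field_simp
      push_cast
      ring
    have h2 := ((hasDerivAt_pp 0 _).comp t h1).const_mul (f x * c.J x)
    convert! h2 using 1
    simp only [tau]
    push_cast
    ring

lemma mass_ineq {f : EE n → ℝ} (hf : Sm f) (hf0 : ∀ x, 0 ≤ f x) (hL : ∀ x, 0 ≤ c.lap f x)
    (x₀ : EE n) {r : ℝ} (hr : 0 < r) :
    n * c.mass f x₀ r ≤ r * ∫ x, f x * c.J x * (4 * c.tau x₀ r x * c.s x₀ x / r ^ 3) := by
  have hs := (c.s_sm x₀).continuous
  have hJ := c.J_cont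
  have hτ := c.continuous_tau x₀ r
  have hfc := hf.continuous
  have hf2 : ContDiff ℝ 2 f := hf.of_le (WithTop.coe_le_coe.2 (le_top : (2:ℕ∞) ≤ ⊤))
  have hs2 : ContDiff ℝ 2 (c.s x₀) := (c.s_sm x₀).of_le (WithTop.coe_le_coe.2 (le_top : (2:ℕ∞) ≤ ⊤))
  have hψ : ContDiff ℝ 2 (fun x => c.tau x₀ r x ^ 3) := by
    have := c.contDiff_tau_pow x₀ r 1
    norm_num at this
    exact this
  have hψc : HasCompactSupport (fun x => c.tau x₀ r x ^ 3) := c.compact_tau_pow x₀ hr 2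
  have hlap : ∀ x, c.lap (fun x => c.tau x₀ r x ^ 3) x =
      -(3 / r ^ 2) * c.tau x₀ r x ^ 2 * (2 * n * c.J x) +
      6 / r ^ 4 * c.tau x₀ r x * c.gam (c.s x₀) (c.s x₀) x := by
    intro x
    have := c.lap_comp (φ := fun t : ℝ => (max (1 - t / r ^ 2) 0) ^ 3)
      (φ' := fun t => -(3 / r ^ 2) * (max (1 - t / r ^ 2) 0) ^ 2)
      (φ'' := -(3 / r ^ 2) * (-(2 / r ^ 2) * (max (1 - c.s x₀ x / r ^ 2) 0) ^ 1)) hs2 x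
      (fun y => by
        have := hasDerivAt_phi r 1 (c.s x₀ y)
        norm_num at this ⊢
        exact this)
      (by
        have := (hasDerivAt_phi r 0 (c.s x₀ x)).const_mul (-(3 / r ^ 2))
        norm_num at this ⊢
        exact this)
    unfold tau
    rw [this]
    have h3 : c.lap (c.s x₀) x = 2 * n * c.J x := c.s_lap x₀ x
    rw [h3]
    ring
  have hg := c.green hf2 hψ hψc
  have h0 : 0 ≤ ∫ x, f x * c.lap (fun x => c.tau x₀ r x ^ 3) x := by
    rw [hg]
    exact integral_nonneg fun x => mul_nonneg (pow_nonneg (c.tau_nonneg _ _ _) _) (hL x)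
  have i1 : Integrable fun x => f x * c.J x * c.tau x₀ r x ^ 2 :=
    ((hfc.mul hJ).mul (hτ.pow 2)).integrable_of_hasCompactSupport
      ((c.compact_tau_pow x₀ hr 1).mul_left)
  have i2 : Integrable fun x => f x * c.J x * (4 * c.tau x₀ r x * c.s x₀ x / r ^ 3) := by
    refine ((hfc.mul hJ).mul (((hτ.const_mul 4).mul hs).div_const _)).integrable_of_hasCompactSupport ?_
    have hcc := c.compact_tau_pow x₀ hr 0
    simp only [zero_add, pow_one] at hcc
    have h5 := ((hcc.mul_left (f := fun x => 4 * (f x * c.J x) / r ^ 3))).mul_right (f' := c.s x₀)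
    convert! h5 using 1
    ext x
    simp only [Pi.mul_apply]
    ring
  have i0 : Integrable fun x => f x * c.lap (fun x => c.tau x₀ r x ^ 3) x :=
    (hfc.mul (c.continuous_lap hψ)).integrable_of_hasCompactSupport
      ((c.hasCompactSupport_lap hψc).mul_left)
  have hle : ∫ x, f x * c.lap (fun x => c.tau x₀ r x ^ 3) x ≤
      ∫ x, (-(6 * n / r ^ 2) * (f x * c.J x * c.tau x₀ r x ^ 2) +
        6 / r * (f x * c.J x * (4 * c.tau x₀ r x * c.s x₀ x / r ^ 3))) := by
    refine integral_mono i0 ((i1.const_mul _).add (i2.const_mul _)) fun x => ?_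
    simp only []
    rw [hlap]
    have hG : c.gam (c.s x₀) (c.s x₀) x ≤ 4 * c.s x₀ x * c.J x := c.s_grad x₀ x
    have h5 : f x * (6 / r ^ 4 * c.tau x₀ r x * c.gam (c.s x₀) (c.s x₀) x) ≤
        f x * (6 / r ^ 4 * c.tau x₀ r x * (4 * c.s x₀ x * c.J x)) := by
      have := hf0 x
      have := c.tau_nonneg x₀ r x
      gcongr
    have e : f x * (6 / r ^ 4 * c.tau x₀ r x * (4 * c.s x₀ x * c.J x)) =
       6 / r * (f x * c.J x * (4 * c.tau x₀ r x * c.s x₀ x / r ^ 3)) := by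
      field_simp
    rw [← e]
    have e2 : f x * (-(3 / r ^ 2) * c.tau x₀ r x ^ 2 * (2 * n * c.J x)) =
      -(6 * n / r ^ 2) * (f x * c.J x * c.tau x₀ r x ^ 2) := by ring
    rw [mul_add, e2]
    linarith
  rw [integral_add (i1.const_mul _) (i2.const_mul _), integral_const_mul, integral_const_mul] at hle
  have h6 := h0.trans hle
  unfold mass
  set A := ∫ x, f x * c.J x * c.tau x₀ r x ^ 2
  set B := ∫ x, f x * c.J x * (4 * c.tau x₀ r x * c.s x₀ x / r ^ 3)
  have : 0 ≤ (r ^ 2 / 6) * (-(6 * n / r ^ 2) * A + 6 / r * B) := by positivity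
  have e : (r ^ 2 / 6) * (-(6 * n / r ^ 2) * A + 6 / r * B) = -(n * A) + r * B := by
    field_simp
  linarith

lemma mass_mono {f : EE n → ℝ} (hf : Sm f) (hf0 : ∀ x, 0 ≤ f x) (hL : ∀ x, 0 ≤ c.lap f x)
    (x₀ : EE n) : MonotoneOn (fun r => c.mass f x₀ r / r ^ n) (Ioi 0) := by
  have hd : ∀ r ∈ Ioi (0:ℝ), HasDerivAt (fun r => c.mass f x₀ r / r ^ n) _ r := fun r hr =>
    (c.hasDerivAt_mass hf.continuous hf0 x₀ hr).div (hasDerivAt_pow n r) (pow_ne_zero _ (ne_of_gt hr))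
  refine monotoneOn_of_deriv_nonneg (convex_Ioi 0)
    (fun r hr => (hd r hr).continuousAt.continuousWithinAt) ?_ ?_
  · rw [interior_Ioi]
    exact fun r hr => (hd r hr).differentiableAt.differentiableWithinAt
  · rw [interior_Ioi]
    intro r hr
    rw [(hd r hr).deriv]
    have hr' : 0 < r := hr
    have := c.mass_ineq hf hf0 hL x₀ hr'
    apply div_nonneg _ (by positivity)
    rcases Nat.eq_zero_or_pos n with h0 | h0
    · have h7 : 0 ≤ r * ∫ x, f x * c.J x * (4 * c.tau x₀ r x * c.s x₀ x / r ^ 3) := by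
        refine le_trans ?_ this
        rw [show (n:ℝ) = 0 by exact_mod_cast h0]; simp
      have h8 := nonneg_of_mul_nonneg_right h7 hr'
      rw [show (n:ℝ) = 0 by exact_mod_cast h0]
      simp only [zero_mul, mul_zero, sub_zero]
      positivity
    · obtain ⟨m, rfl⟩ : ∃ m, n = m + 1 := ⟨n - 1, by omega⟩
      have e : r ^ (m + 1) = r ^ m * r := pow_succ _ _
      simp only [Nat.add_sub_cancel]
      rw [e]
      have : 0 ≤ r ^ m := by positivity
      nlinarith

end Ctx

end YuanSL

namespace YuanSL

open MeasureTheory Set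

variable {n : ℕ}

/-- volume of the unit ball -/
noncomputable def om (n : ℕ) : ℝ := (volume : Measure (EE n)).real (Metric.ball 0 1)

lemma om_pos (n : ℕ) : 0 < om n := by
  unfold om
  rw [measureReal_def]
  exact ENNReal.toReal_pos (Metric.measure_ball_pos _ _ one_pos).ne' measure_ball_lt_top.ne

lemma vol_ball (x : EE n) {r : ℝ} (hr : 0 < r) :
    (volume : Measure (EE n)).real (Metric.ball x r) = r ^ n * om n := by
  unfold om
  rw [measureReal_def, Measure.addHaar_ball_of_pos _ _ hr]
  simp [measureReal_def, hr.le]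

open ENNReal in
lemma lintegral_affine (h : EE n → ℝ≥0∞) (hh : Measurable h) (b : EE n) {t : ℝ}
    (ht : 1 / 2 ≤ t) : ∫⁻ x, h (b + t • x) ≤ 2 ^ n * ∫⁻ x, h x := by
  have ht0 : 0 < t := by linarith
  have h1 : ∫⁻ x, h (b + t • x) = ∫⁻ y, h (b + y) ∂(Measure.map (t • ·) volume) := by
    rw [lintegral_map (by fun_prop) (by fun_prop)]
  rw [h1, Measure.map_addHaar_smul _ ht0.ne', lintegral_smul_measure,
    lintegral_add_left_eq_self (fun y => h y) b]
  rw [smul_eq_mul]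
  gcongr
  have : |(t ^ Module.finrank ℝ (EE n))⁻¹| ≤ 2 ^ n := by
    rw [abs_of_pos (by positivity), finrank_euclideanSpace_fin, ← inv_pow]
    gcongr
    rw [inv_le_comm₀ ht0 (by norm_num)]; linarith
  calc ENNReal.ofReal |(t ^ Module.finrank ℝ (EE n))⁻¹| ≤ ENNReal.ofReal (2 ^ n) :=
        ENNReal.ofReal_le_ofReal this
    _ = 2 ^ n := by rw [ENNReal.ofReal_pow (by norm_num)]; simp

open ENNReal in
lemma poincare_pt {f : EE n → ℝ} (hf : ContDiff ℝ 1 f) (x₀ : EE n) {R : ℝ} (hR : 0 < R)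
    {x y : EE n} (hx : x ∈ Metric.ball x₀ R) (hy : y ∈ Metric.ball x₀ R) :
    ENNReal.ofReal |f x - f y| ≤ ENNReal.ofReal (2 * R) * ∫⁻ t in Ioo (0:ℝ) 1,
      (Metric.ball x₀ R).indicator (fun z => ENNReal.ofReal ‖fderiv ℝ f z‖) ((1 - t) • y + t • x) := by
  have hmem : ∀ t ∈ Icc (0:ℝ) 1, (1 - t) • y + t • x ∈ Metric.ball x₀ R := fun t ht =>
    (convex_ball x₀ R) hy hx (by linarith [ht.2]) ht.1 (by ring)
  have hcl : Continuous (fun t : ℝ => (1 - t) • y + t • x) := by fun_prop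
  have hfd : Continuous (fderiv ℝ f) := hf.continuous_fderiv (by simp)
  have hder : ∀ t : ℝ, HasDerivAt (fun t : ℝ => f ((1 - t) • y + t • x))
      (fderiv ℝ f ((1 - t) • y + t • x) (x - y)) t := by
    intro t
    have h1 : HasDerivAt (fun t : ℝ => (1 - t) • y + t • x) (x - y) t := by
      have h2 : HasDerivAt (fun t : ℝ => (1 - t)) (-1) t := by
        simpa using (hasDerivAt_id t).const_sub 1
      have := (h2.smul_const y).add ((hasDerivAt_id t).smul_const x)
      convert! this using 1
      simp; abel
    exact ((hf.differentiable (by simp) _).hasFDerivAt).comp_hasDerivAt t h1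
  have hc' : Continuous (fun t : ℝ => fderiv ℝ f ((1 - t) • y + t • x) (x - y)) :=
    (hfd.comp hcl).clm_apply continuous_const
  have hftc := intervalIntegral.integral_eq_sub_of_hasDerivAt (a := 0) (b := 1)
    (fun t _ => hder t) (hc'.intervalIntegrable _ _)
  simp only [sub_zero, one_smul, zero_smul, add_zero, sub_self, zero_add] at hftc
  rw [← hftc]
  have hnorm : ‖x - y‖ ≤ 2 * R := by
    have h1 := Metric.mem_ball.1 hx
    have h2 := Metric.mem_ball'.1 hy
    rw [← dist_eq_norm]
    linarith [dist_triangle x x₀ y]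
  have hle : |∫ t in (0:ℝ)..1, fderiv ℝ f ((1 - t) • y + t • x) (x - y)| ≤
      ∫ t in (0:ℝ)..1, (2 * R) * ‖fderiv ℝ f ((1 - t) • y + t • x)‖ := by
    have h1 := intervalIntegral.norm_integral_le_of_norm_le (a := 0) (b := 1) (μ := volume)
      (f := fun t => fderiv ℝ f ((1 - t) • y + t • x) (x - y))
      (g := fun t => (2 * R) * ‖fderiv ℝ f ((1 - t) • y + t • x)‖) zero_le_one
      (Filter.Eventually.of_forall fun t _ => by
        refine (ContinuousLinearMap.le_opNorm _ _).trans ?_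
        rw [mul_comm]; gcongr)
      ((continuous_const.mul (hfd.comp hcl).norm).intervalIntegrable _ _)
    simpa [Real.norm_eq_abs] using h1
  refine (ENNReal.ofReal_le_ofReal hle).trans ?_
  rw [intervalIntegral.integral_const_mul, ENNReal.ofReal_mul (by positivity)]
  gcongr
  rw [intervalIntegral.integral_of_le zero_le_one, integral_Ioc_eq_integral_Ioo,
    ofReal_integral_eq_lintegral_ofReal]
  · refine setLIntegral_mono' measurableSet_Ioo fun t ht => ?_
    rw [indicator_of_mem (hmem t (Ioo_subset_Icc_self ht))]
  · exact ((hfd.comp hcl).norm.integrableOn_Icc (a := 0) (b := 1)).mono_set Ioo_subset_Icc_self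
  · exact Filter.Eventually.of_forall fun t => norm_nonneg _

open ENNReal in
lemma poincare_lint {f : EE n → ℝ} (hf : ContDiff ℝ 1 f) (x₀ : EE n) {R : ℝ} (hR : 0 < R) :
    ∫⁻ x in Metric.ball x₀ R, ∫⁻ y in Metric.ball x₀ R, ENNReal.ofReal |f x - f y| ≤
      ENNReal.ofReal (2 * R) * (2 ^ n * volume (Metric.ball x₀ R) *
        ∫⁻ z in Metric.ball x₀ R, ENNReal.ofReal ‖fderiv ℝ f z‖) := by
  set B := Metric.ball x₀ R with hB
  have hBm : MeasurableSet B := Metric.isOpen_ball.measurableSet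
  have hfd : Continuous (fderiv ℝ f) := hf.continuous_fderiv (by simp)
  set h : EE n → ℝ≥0∞ := B.indicator (fun z => ENNReal.ofReal ‖fderiv ℝ f z‖) with hh
  have hhm : Measurable h := (ENNReal.measurable_ofReal.comp hfd.norm.measurable).indicator hBm
  have hint : ∫⁻ z, h z = ∫⁻ z in B, ENNReal.ofReal ‖fderiv ℝ f z‖ := lintegral_indicator hBm _
  rw [← hint]
  set I := ∫⁻ z, h z
  calc ∫⁻ x in B, ∫⁻ y in B, ENNReal.ofReal |f x - f y|
      ≤ ∫⁻ x in B, ∫⁻ y in B, ENNReal.ofReal (2 * R) * ∫⁻ t in Ioo (0:ℝ) 1,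
          h ((1 - t) • y + t • x) := by
        refine setLIntegral_mono' hBm fun x hx => setLIntegral_mono' hBm fun y hy => ?_
        exact poincare_pt hf x₀ hR hx hy
    _ = ENNReal.ofReal (2 * R) * ∫⁻ x in B, ∫⁻ y in B, ∫⁻ t in Ioo (0:ℝ) 1,
          h ((1 - t) • y + t • x) := by
        rw [← lintegral_const_mul' _ _ ENNReal.ofReal_ne_top]
        congr 1; ext x
        rw [← lintegral_const_mul' _ _ ENNReal.ofReal_ne_top]
    _ = ENNReal.ofReal (2 * R) * ∫⁻ t in Ioo (0:ℝ) 1, ∫⁻ x in B, ∫⁻ y in B,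
          h ((1 - t) • y + t • x) := by
        congr 1
        have e1 : ∀ x, ∫⁻ y in B, ∫⁻ t in Ioo (0:ℝ) 1, h ((1 - t) • y + t • x) =
            ∫⁻ t in Ioo (0:ℝ) 1, ∫⁻ y in B, h ((1 - t) • y + t • x) := by
          intro x
          refine lintegral_lintegral_swap ?_
          refine (hhm.comp ?_).aemeasurable
          exact (by fun_prop : Continuous fun p : EE n × ℝ => (1 - p.2) • p.1 + p.2 • x).measurable
        simp only [e1]
        refine lintegral_lintegral_swap ?_
        refine Measurable.aemeasurable ?_
        have : Measurable (fun p : (EE n × ℝ) × EE n => h ((1 - p.1.2) • p.2 + p.1.2 • p.1.1)) :=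
          hhm.comp (by fun_prop : Continuous fun p : (EE n × ℝ) × EE n =>
            (1 - p.1.2) • p.2 + p.1.2 • p.1.1).measurable
        exact this.lintegral_prod_right'
    _ ≤ ENNReal.ofReal (2 * R) * ∫⁻ t in Ioo (0:ℝ) 1, (2 ^ n * I * volume B) := by
        gcongr with t
        rcases le_total (1 / 2) t with ht | ht
        · have e1 : ∫⁻ x in B, ∫⁻ y in B, h ((1 - t) • y + t • x) =
            ∫⁻ y in B, ∫⁻ x in B, h ((1 - t) • y + t • x) := by
            refine lintegral_lintegral_swap ?_
            exact (hhm.comp (by fun_prop : Continuous fun p : EE n × EE n =>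
              (1 - t) • p.2 + t • p.1).measurable).aemeasurable
          rw [e1]
          calc ∫⁻ y in B, ∫⁻ x in B, h ((1 - t) • y + t • x)
              ≤ ∫⁻ y in B, 2 ^ n * I := by
                refine lintegral_mono fun y => ?_
                exact (setLIntegral_le_lintegral _ _).trans (lintegral_affine h hhm _ ht)
            _ = _ := by rw [setLIntegral_const]
        · calc ∫⁻ x in B, ∫⁻ y in B, h ((1 - t) • y + t • x)
              ≤ ∫⁻ x in B, 2 ^ n * I := by
                refine lintegral_mono fun x => ?_
                refine (setLIntegral_le_lintegral _ _).trans ?_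
                have := lintegral_affine h hhm (t • x) (t := 1 - t) (by linarith)
                simpa only [add_comm] using this
            _ = _ := by rw [setLIntegral_const]
    _ = _ := by
        rw [setLIntegral_const]
        simp
        ring

lemma integrableOn_ball {f : EE n → ℝ} (hf : Continuous f) (x₀ : EE n) (R : ℝ) :
    IntegrableOn f (Metric.ball x₀ R) :=
  (hf.continuousOn.integrableOn_compact (isCompact_closedBall x₀ R)).mono_set
    Metric.ball_subset_closedBall

lemma poincare {f : EE n → ℝ} (hf : ContDiff ℝ 1 f) (hf0 : ∀ x, 0 ≤ f x) (x₀ : EE n) {R : ℝ}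
    (hR : 0 < R) {A : Set (EE n)} (hA : A ⊆ Metric.ball x₀ R) (hAm : MeasurableSet A) {l : ℝ}
    (hl0 : 0 ≤ l) (hl : ∀ x ∈ A, f x ≤ l) :
    volume.real A * ∫ x in Metric.ball x₀ R, f x ≤
      volume.real A * volume.real (Metric.ball x₀ R) * l +
      2 * R * (2 ^ n * volume.real (Metric.ball x₀ R) *
        ∫ z in Metric.ball x₀ R, ‖fderiv ℝ f z‖) := by
  set B := Metric.ball x₀ R with hB
  have hBm : MeasurableSet B := Metric.isOpen_ball.measurableSet
  have hfd : Continuous (fderiv ℝ f) := hf.continuous_fderiv (by simp)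
  have hBt : volume B ≠ ⊤ := measure_ball_lt_top.ne
  have hAt : volume A ≠ ⊤ := (measure_mono hA |>.trans_lt measure_ball_lt_top).ne
  have key : volume A * ∫⁻ x in B, ENNReal.ofReal (f x) ≤
      volume A * volume B * ENNReal.ofReal l + ENNReal.ofReal (2 * R) * (2 ^ n * volume B *
        ∫⁻ z in B, ENNReal.ofReal ‖fderiv ℝ f z‖) := by
    refine le_trans ?_ (add_le_add le_rfl (poincare_lint hf x₀ hR))
    rw [← lintegral_const_mul' _ _ hAt]
    have e : volume A * volume B * ENNReal.ofReal l = ∫⁻ x in B, volume A * ENNReal.ofReal l := by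
      rw [setLIntegral_const]; ring
    rw [e, ← lintegral_add_left measurable_const]
    refine lintegral_mono fun x => ?_
    calc volume A * ENNReal.ofReal (f x) = ∫⁻ y in A, ENNReal.ofReal (f x) := by
          rw [setLIntegral_const]; ring
      _ ≤ ∫⁻ y in A, (ENNReal.ofReal l + ENNReal.ofReal |f x - f y|) := by
          refine setLIntegral_mono' hAm fun y hy => ?_
          rw [← ENNReal.ofReal_add hl0 (abs_nonneg _)]
          refine ENNReal.ofReal_le_ofReal ?_
          have := hl y hy
          have := le_abs_self (f x - f y)
          linarith
      _ = volume A * ENNReal.ofReal l + ∫⁻ y in A, ENNReal.ofReal |f x - f y| := by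
          rw [lintegral_add_left measurable_const, setLIntegral_const]; ring
      _ ≤ _ := by
          gcongr
  rw [← ofReal_integral_eq_lintegral_ofReal (integrableOn_ball hf.continuous _ _)
      (Filter.Eventually.of_forall hf0),
    ← ofReal_integral_eq_lintegral_ofReal (integrableOn_ball hfd.norm _ _)
      (Filter.Eventually.of_forall fun _ => norm_nonneg _), ← hB] at key
  have I1 : 0 ≤ ∫ x in B, f x := integral_nonneg hf0
  have I2 : 0 ≤ ∫ z in B, ‖fderiv ℝ f z‖ := integral_nonneg fun _ => norm_nonneg _
  have k2 := ENNReal.toReal_mono (by finiteness) key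
  rw [ENNReal.toReal_add (by finiteness) (by finiteness)] at k2
  simp only [ENNReal.toReal_mul, ENNReal.toReal_ofReal I1, ENNReal.toReal_ofReal I2,
    ENNReal.toReal_ofReal hl0, ENNReal.toReal_ofReal (by positivity : 0 ≤ 2 * R),
    ENNReal.toReal_pow, ENNReal.toReal_ofNat] at k2
  exact k2

end YuanSL

namespace YuanSL

open MeasureTheory Set

variable {n : ℕ}

lemma Sm.two {f : EE n → ℝ} (hf : Sm f) : ContDiff ℝ 2 f :=
  hf.of_le (WithTop.coe_le_coe.2 (le_top : (2:ℕ∞) ≤ ⊤))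

lemma Sm.one {f : EE n → ℝ} (hf : Sm f) : ContDiff ℝ 1 f := hf.of_le (by simp)

namespace Ctx

variable (c : Ctx n)

lemma CJ_one : 1 ≤ c.CJ := (c.J_one 0).trans (c.J_le 0)

/-- scale factor -/
noncomputable def kap : ℝ := √(2 * c.K)

lemma kap_pos : 0 < c.kap := Real.sqrt_pos.2 (by have := c.K_one; linarith)

lemma kap_sq : c.kap ^ 2 = 2 * c.K := Real.sq_sqrt (by have := c.K_one; linarith)

lemma one_le_kap : 1 ≤ c.kap := by
  have := c.K_one
  exact Real.one_le_sqrt.2 (by linarith)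

lemma half_le_tau {x₀ x : EE n} {r : ℝ} (hr : 0 < r) (hx : c.kap * ‖x - x₀‖ ≤ r) :
    1 / 2 ≤ c.tau x₀ r x := by
  refine le_trans ?_ (le_max_left _ _)
  have h1 : (c.kap * ‖x - x₀‖) ^ 2 ≤ r ^ 2 := by
    have := c.kap_pos
    gcongr
  rw [mul_pow, c.kap_sq] at h1
  have h2 := c.s_le x₀ x
  have : c.s x₀ x / r ^ 2 ≤ 1 / 2 := by
    rw [div_le_iff₀ (by positivity)]; linarith
  linarith

lemma mass_le {f : EE n → ℝ} (hf : Continuous f) (hf0 : ∀ x, 0 ≤ f x) (x₀ : EE n) {R : ℝ}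
    (hR : 0 < R) : c.mass f x₀ R ≤ c.CJ * ∫ x in Metric.ball x₀ R, f x := by
  have hBm : MeasurableSet (Metric.ball x₀ R) := Metric.isOpen_ball.measurableSet
  unfold mass
  rw [← integral_const_mul, ← integral_indicator hBm]
  refine integral_mono ?_ ?_ fun x => ?_
  · exact ((hf.mul c.J_cont).mul ((c.continuous_tau x₀ R).pow 2)).integrable_of_hasCompactSupport
      ((c.compact_tau_pow x₀ hR 1).mul_left)
  · rw [integrable_indicator_iff hBm]
    exact (integrableOn_ball hf x₀ R).const_mul _
  · by_cases hx : x ∈ Metric.ball x₀ R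
    · simp only [indicator_of_mem hx]
      have h1 := c.tau_nonneg x₀ R x
      have h2 := c.tau_le_one x₀ R x
      have h3 := hf0 x
      have h4 := c.J_le x
      have h5 : 0 ≤ c.J x := zero_le_one.trans (c.J_one x)
      have h6 : c.tau x₀ R x ^ 2 ≤ 1 := pow_le_one₀ h1 h2
      calc f x * c.J x * c.tau x₀ R x ^ 2 ≤ f x * c.CJ * 1 := by
            have := c.CJ_one
            gcongr
        _ = _ := by ring
    · simp only [indicator_of_notMem hx]
      rw [Metric.mem_ball, dist_eq_norm, not_lt] at hx
      simp [c.tau_eq_zero hR hx]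

lemma le_mass {f : EE n → ℝ} (hf : Continuous f) (hf0 : ∀ x, 0 ≤ f x) (x₀ : EE n) {r m : ℝ}
    (hr : 0 < r) (hm0 : 0 ≤ m) (hm : ∀ x ∈ Metric.ball x₀ r, m ≤ f x) :
    m / 4 * ((r / c.kap) ^ n * om n) ≤ c.mass f x₀ r := by
  have hk := c.kap_pos
  have hrk : 0 < r / c.kap := by positivity
  have hBm : MeasurableSet (Metric.ball x₀ (r / c.kap)) := Metric.isOpen_ball.measurableSet
  rw [← vol_ball x₀ hrk]
  have e : m / 4 * volume.real (Metric.ball x₀ (r / c.kap)) =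
      ∫ x in Metric.ball x₀ (r / c.kap), m / 4 := by
    rw [setIntegral_const, smul_eq_mul]; ring
  rw [e, ← integral_indicator hBm]
  unfold mass
  refine integral_mono ?_ ?_ fun x => ?_
  · rw [integrable_indicator_iff hBm]
    exact integrableOn_ball continuous_const _ _
  · exact ((hf.mul c.J_cont).mul ((c.continuous_tau x₀ r).pow 2)).integrable_of_hasCompactSupport
      ((c.compact_tau_pow x₀ hr 1).mul_left)
  · have h5 := c.J_one x
    by_cases hx : x ∈ Metric.ball x₀ (r / c.kap)
    · simp only [indicator_of_mem hx]
      rw [Metric.mem_ball, dist_eq_norm, lt_div_iff₀ hk, mul_comm] at hx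
      have h1 := c.half_le_tau hr hx.le
      have h2 : m ≤ f x := by
        apply hm
        rw [Metric.mem_ball, dist_eq_norm]
        have := c.one_le_kap
        nlinarith [norm_nonneg (x - x₀)]
      calc m / 4 = m * 1 * (1 / 2) ^ 2 := by ring
        _ ≤ f x * c.J x * c.tau x₀ r x ^ 2 := by
          have := hf0 x
          gcongr
    · simp only [indicator_of_notMem hx]
      have := hf0 x
      have := c.tau_nonneg x₀ r x
      positivity

lemma mean_value : ∃ C : ℝ, 0 < C ∧ ∀ f : EE n → ℝ, Sm f → (∀ x, 0 ≤ f x) →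
    (∀ x, 0 ≤ c.lap f x) → ∀ (x₀ : EE n) (R : ℝ), 0 < R →
    f x₀ * R ^ n ≤ C * ∫ x in Metric.ball x₀ R, f x := by
  have hk := c.kap_pos
  have hω := om_pos n
  have hCJ := c.CJ_one
  refine ⟨8 * c.kap ^ n / om n * c.CJ, by positivity, ?_⟩
  intro f hf hf0 hL x₀ R hR
  rcases (hf0 x₀).eq_or_lt with h0 | h0
  · rw [← h0, zero_mul]
    have : 0 ≤ ∫ x in Metric.ball x₀ R, f x := integral_nonneg hf0
    positivity
  have hcont := hf.continuous
  have hev : ∀ᶠ x in nhds x₀, f x₀ / 2 < f x :=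
    hcont.continuousAt.eventually (lt_mem_nhds (by linarith))
  obtain ⟨ρ, hρ, hball⟩ := Metric.eventually_nhds_iff_ball.1 hev
  have hr : 0 < min R ρ := lt_min hR hρ
  have h1 := c.le_mass hcont hf0 x₀ hr (m := f x₀ / 2) (by linarith) (fun x hx =>
    (hball x (Metric.ball_subset_ball (min_le_right _ _) hx)).le)
  have h2 := c.mass_mono hf hf0 hL x₀ (mem_Ioi.2 hr) (mem_Ioi.2 hR) (min_le_left _ _)
  simp only [] at h2
  have h3 := c.mass_le hcont hf0 x₀ hR
  have h4 : f x₀ / 2 / 4 * (om n / c.kap ^ n) ≤ c.mass f x₀ (min R ρ) / (min R ρ) ^ n := by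
    rw [le_div_iff₀ (by positivity)]
    refine le_trans (le_of_eq ?_) h1
    rw [div_pow]; ring
  have h5 : f x₀ / 2 / 4 * (om n / c.kap ^ n) ≤ c.CJ * (∫ x in Metric.ball x₀ R, f x) / R ^ n :=
    h4.trans (h2.trans (by gcongr))
  rw [le_div_iff₀ (by positivity)] at h5
  have e : f x₀ * R ^ n = 8 * c.kap ^ n / om n * (f x₀ / 2 / 4 * (om n / c.kap ^ n) * R ^ n) := by
    field_simp
    norm_num
  rw [e, mul_assoc (8 * c.kap ^ n / om n)]
  gcongr

lemma caccioppoli : ∃ C : ℝ, 0 < C ∧ ∀ f : EE n → ℝ, Sm f →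
    (∀ x, c.gam f f x ≤ c.lap f x) → ∀ (x₀ : EE n) (R : ℝ), 0 < R →
    R ^ 2 * ∫ x in Metric.ball x₀ R, ∑ k, pd k f x ^ 2 ≤ C * R ^ n := by
  have hk := c.kap_pos
  have hω := om_pos n
  have hCJ := c.CJ_one
  have hlam := c.lam_pos
  refine ⟨64 * c.CJ / c.lam / c.kap ^ 2 * c.kap ^ n * om n, by positivity, ?_⟩
  intro f hf hG x₀ R hR
  set ρ := c.kap * R with hρdef
  have hρ : 0 < ρ := by positivity
  have hs1 : ContDiff ℝ 1 (c.s x₀) := (c.s_sm x₀).one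
  have hψ : ContDiff ℝ 1 (fun x => c.tau x₀ ρ x ^ 2) := by
    have := c.contDiff_tau_pow x₀ ρ 0
    norm_num at this
    exact this
  have hψc : HasCompactSupport (fun x => c.tau x₀ ρ x ^ 2) := c.compact_tau_pow x₀ hρ 1
  have hibp := c.ibp hψ hf.two (Or.inl hψc)
  have hgam : ∀ x, c.gam (fun x => c.tau x₀ ρ x ^ 2) f x =
      -(2 / ρ ^ 2) * c.tau x₀ ρ x * c.gam (c.s x₀) f x := by
    intro x
    have := c.gam_comp_left (g := f) (φ := fun t : ℝ => (max (1 - t / ρ ^ 2) 0) ^ 2)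
      (φ' := fun t => -(2 / ρ ^ 2) * (max (1 - t / ρ ^ 2) 0) ^ 1) hs1 x
      (fun y => by
        have := hasDerivAt_phi ρ 0 (c.s x₀ y)
        norm_num at this ⊢
        exact this)
    simp only [pow_one] at this
    exact this
  have hBR : MeasurableSet (Metric.ball x₀ R) := Metric.isOpen_ball.measurableSet
  have hBρ : MeasurableSet (Metric.ball x₀ ρ) := Metric.isOpen_ball.measurableSet
  have hpt : ∀ x, (Metric.ball x₀ R).indicator (fun x => c.lam / 8 * ∑ k, pd k f x ^ 2) x -
      (Metric.ball x₀ ρ).indicator (fun _ => 8 * c.CJ / ρ ^ 2) x ≤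
      c.tau x₀ ρ x ^ 2 * c.lap f x + c.gam (fun x => c.tau x₀ ρ x ^ 2) f x := by
    intro x
    rw [hgam]
    set τ := c.tau x₀ ρ x with hτ
    have hτ0 : 0 ≤ τ := c.tau_nonneg _ _ _
    have hell : c.lam * ∑ k, pd k f x ^ 2 ≤ c.gam f f x := c.ell x fun k => pd k f x
    have hsum : 0 ≤ ∑ k, pd k f x ^ 2 := Finset.sum_nonneg fun _ _ => sq_nonneg _
    have hgff : 0 ≤ c.gam f f x := le_trans (by positivity) hell
    -- first term
    have t1 : (Metric.ball x₀ R).indicator (fun x => c.lam / 8 * ∑ k, pd k f x ^ 2) x ≤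
        1 / 2 * τ ^ 2 * c.gam f f x := by
      by_cases hx : x ∈ Metric.ball x₀ R
      · rw [indicator_of_mem hx]
        rw [Metric.mem_ball, dist_eq_norm] at hx
        have h1 : 1 / 2 ≤ τ := c.half_le_tau hρ (by rw [hρdef]; gcongr)
        calc c.lam / 8 * ∑ k, pd k f x ^ 2 = 1 / 2 * (1 / 2) ^ 2 * (c.lam * ∑ k, pd k f x ^ 2) := by
              ring
          _ ≤ _ := by gcongr
      · rw [indicator_of_notMem hx]; positivity
    have t2 : 2 / ρ ^ 2 * τ * c.gam (c.s x₀) f x ≤ 1 / 2 * τ ^ 2 * c.gam f f x +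
        (Metric.ball x₀ ρ).indicator (fun _ => 8 * c.CJ / ρ ^ 2) x := by
      by_cases h0 : τ = 0
      · rw [h0]
        simp only [mul_zero, zero_mul, ne_eq, OfNat.ofNat_ne_zero, not_false_eq_true, zero_pow,
          zero_add]
        exact indicator_nonneg (fun _ _ => by positivity) _
      have hsl := c.s_lt_of_tau hρ h0
      have hx : x ∈ Metric.ball x₀ ρ := by
        by_contra hx
        rw [Metric.mem_ball, dist_eq_norm, not_lt] at hx
        exact h0 (c.tau_eq_zero hρ hx)
      rw [indicator_of_mem hx]
      have hq := c.quad_nonneg x fun k => τ * pd k f x - 2 / ρ ^ 2 * pd k (c.s x₀) x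
      have hexp : ∑ i, ∑ j, c.a i j x * (τ * pd i f x - 2 / ρ ^ 2 * pd i (c.s x₀) x) *
          (τ * pd j f x - 2 / ρ ^ 2 * pd j (c.s x₀) x) =
          τ ^ 2 * c.gam f f x - 2 / ρ ^ 2 * τ * c.gam (c.s x₀) f x
          - 2 / ρ ^ 2 * τ * c.gam f (c.s x₀) x
          + (2 / ρ ^ 2) ^ 2 * c.gam (c.s x₀) (c.s x₀) x := by
        unfold gam
        simp only [Finset.mul_sum, ← Finset.sum_add_distrib, ← Finset.sum_sub_distrib]
        refine Finset.sum_congr rfl fun i _ => Finset.sum_congr rfl fun j _ => ?_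
        ring
      rw [hexp, c.gam_comm f (c.s x₀)] at hq
      have hgs : c.gam (c.s x₀) (c.s x₀) x ≤ 4 * c.s x₀ x * c.J x := c.s_grad x₀ x
      have hgs2 : 4 * c.s x₀ x * c.J x ≤ 4 * ρ ^ 2 * c.CJ := by
        have := c.s_nonneg x₀ x
        have := c.J_le x
        have := c.J_one x
        gcongr
      have h8 : (2 / ρ ^ 2) ^ 2 * c.gam (c.s x₀) (c.s x₀) x ≤ 16 * c.CJ / ρ ^ 2 := by
        calc (2 / ρ ^ 2) ^ 2 * c.gam (c.s x₀) (c.s x₀) x ≤ (2 / ρ ^ 2) ^ 2 * (4 * ρ ^ 2 * c.CJ) := by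
              gcongr; linarith
          _ = _ := by field_simp; norm_num
      have e16 : 16 * c.CJ / ρ ^ 2 = 2 * (8 * c.CJ / ρ ^ 2) := by ring
      linarith
    have t3 : τ ^ 2 * c.gam f f x ≤ τ ^ 2 * c.lap f x := by
      have := hG x
      gcongr
    have e : -(2 / ρ ^ 2) * τ * c.gam (c.s x₀) f x = -(2 / ρ ^ 2 * τ * c.gam (c.s x₀) f x) := by ring
    rw [e]
    linarith
  have hcsum : Continuous fun x => ∑ k, pd k f x ^ 2 :=
    continuous_finsetSum _ fun k _ => ((hf.pd k).continuous).pow 2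
  have i1 : Integrable ((Metric.ball x₀ R).indicator (fun x => c.lam / 8 * ∑ k, pd k f x ^ 2)) := by
    rw [integrable_indicator_iff hBR]
    exact integrableOn_ball (hcsum.const_mul _) _ _
  have i2 : Integrable ((Metric.ball x₀ ρ).indicator (fun _ : EE n => 8 * c.CJ / ρ ^ 2)) := by
    rw [integrable_indicator_iff hBρ]
    exact integrableOn_ball continuous_const _ _
  have i3 : Integrable fun x => c.tau x₀ ρ x ^ 2 * c.lap f x +
      c.gam (fun x => c.tau x₀ ρ x ^ 2) f x := by
    refine (((hψ.continuous).mul (c.continuous_lap hf.two)).add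
      (c.continuous_gam hψ hf.one)).integrable_of_hasCompactSupport ?_
    refine HasCompactSupport.of_support_subset_isCompact (isCompact_closedBall x₀ ρ) ?_
    intro x hx
    by_contra h
    rw [Metric.mem_closedBall, dist_eq_norm] at h
    apply hx
    show c.tau x₀ ρ x ^ 2 * c.lap f x + c.gam (fun x => c.tau x₀ ρ x ^ 2) f x = 0
    rw [hgam]
    simp [c.tau_eq_zero hρ (le_of_not_ge h)]
  have hfin := integral_mono (i1.sub i2) i3 hpt
  rw [hibp] at hfin
  have hsub : ∫ x, ((Metric.ball x₀ R).indicator (fun x => c.lam / 8 * ∑ k, pd k f x ^ 2) x -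
      (Metric.ball x₀ ρ).indicator (fun _ => 8 * c.CJ / ρ ^ 2) x) =
      c.lam / 8 * (∫ x in Metric.ball x₀ R, ∑ k, pd k f x ^ 2) - 8 * c.CJ / ρ ^ 2 * (ρ ^ n * om n) := by
    rw [integral_sub i1 i2, integral_indicator hBR, integral_indicator hBρ, integral_const_mul,
      setIntegral_const, vol_ball x₀ hρ, smul_eq_mul]
    ring
  have hfin2 : c.lam / 8 * (∫ x in Metric.ball x₀ R, ∑ k, pd k f x ^ 2) -
      8 * c.CJ / ρ ^ 2 * (ρ ^ n * om n) ≤ 0 := hsub ▸ hfin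
  set S := ∫ x in Metric.ball x₀ R, ∑ k, pd k f x ^ 2
  have h9 : R ^ 2 * (8 / c.lam) * (c.lam / 8 * S) ≤
      R ^ 2 * (8 / c.lam) * (8 * c.CJ / ρ ^ 2 * (ρ ^ n * om n)) :=
    mul_le_mul_of_nonneg_left (by linarith) (by positivity)
  have e1 : R ^ 2 * (8 / c.lam) * (c.lam / 8 * S) = R ^ 2 * S := by field_simp
  have e2 : R ^ 2 * (8 / c.lam) * (8 * c.CJ / ρ ^ 2 * (ρ ^ n * om n)) =
      64 * c.CJ / c.lam / c.kap ^ 2 * c.kap ^ n * om n * R ^ n := by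
    rw [hρdef, mul_pow, mul_pow]; field_simp; norm_num
  linarith

theorem weak_harnack {θ : ℝ} (hθ : 0 < θ) : ∃ κ : ℝ, 0 < κ ∧ ∀ w : EE n → ℝ, Sm w →
    (∀ x, 0 < w x) → (∀ x, c.lap w x ≤ 0) → ∀ (x₀ : EE n) (R ε : ℝ), 0 < R → 0 < ε →
    θ * (R ^ n * om n) ≤ volume.real ({x | ε ≤ w x} ∩ Metric.ball x₀ R) → κ * ε ≤ w x₀ := by
  obtain ⟨C1, hC1, hmv⟩ := c.mean_value
  obtain ⟨C2, hC2, hcac⟩ := c.caccioppoli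
  have hω := om_pos n
  set C3 := C1 * (om n * log 2 + 2 ^ n * (C2 + om n) / θ) with hC3
  refine ⟨exp (-C3), exp_pos _, ?_⟩
  intro w hw hw0 hL x₀ R ε hR hε hA
  set f : EE n → ℝ := fun x => log (w x + ε) - log (w x) with hfdef
  have hwne : ∀ x, w x ≠ 0 := fun x => (hw0 x).ne'
  have hwe : ∀ x, 0 < w x + ε := fun x => by have := hw0 x; linarith
  have hf : Sm f := by
    refine ContDiff.sub ?_ ?_
    · exact ContDiff.log (hw.add contDiff_const) fun x => (hwe x).ne'
    · exact ContDiff.log hw hwne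
  have hf0 : ∀ x, 0 ≤ f x := fun x => by
    have := Real.log_le_log (hw0 x) (by linarith : w x ≤ w x + ε)
    simp only [hfdef]; linarith
  have h1 : ∀ y, HasDerivAt (fun t => log (t + ε) - log t) ((fun t => (t + ε)⁻¹ - t⁻¹) (w y)) (w y) := by
    intro y
    have a1 := ((hasDerivAt_id (w y)).add_const ε).log (hwe y).ne'
    have a2 := Real.hasDerivAt_log (hwne y)
    have := a1.sub a2
    simp only [id] at this
    convert! this using 1
    simp
  have h2 : ∀ y, HasDerivAt (fun t => (t + ε)⁻¹ - t⁻¹)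
      (-((w y + ε) ^ 2)⁻¹ + ((w y) ^ 2)⁻¹) (w y) := by
    intro y
    have a1 := ((hasDerivAt_id (w y)).add_const ε).inv (hwe y).ne'
    have a2 := hasDerivAt_inv (hwne y)
    have := a1.sub a2
    simp only [id] at this
    convert! this using 1
    rw [neg_div, one_div]; ring
  have hlapf : ∀ x, c.lap f x = ((w x + ε)⁻¹ - (w x)⁻¹) * c.lap w x +
      (-((w x + ε) ^ 2)⁻¹ + ((w x) ^ 2)⁻¹) * c.gam w w x := fun x =>
    c.lap_comp (φ := fun t => log (t + ε) - log t) (φ' := fun t => (t + ε)⁻¹ - t⁻¹) hw.two x h1 (h2 x)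
  have hgamf : ∀ x, c.gam f f x = ((w x + ε)⁻¹ - (w x)⁻¹) ^ 2 * c.gam w w x := by
    intro x
    have e1 : ∀ g, c.gam f g x = ((w x + ε)⁻¹ - (w x)⁻¹) * c.gam w g x := fun g =>
      c.gam_comp_left (φ := fun t => log (t + ε) - log t) (φ' := fun t => (t + ε)⁻¹ - t⁻¹) hw.one x h1
    rw [e1, c.gam_comm, e1]; ring
  have hgw : ∀ x, 0 ≤ c.gam w w x := fun x => c.quad_nonneg x fun k => pd k w x
  have hinv : ∀ x, (w x + ε)⁻¹ ≤ (w x)⁻¹ := fun x => by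
    have := hw0 x
    gcongr; linarith
  have hG : ∀ x, c.gam f f x ≤ c.lap f x := by
    intro x
    rw [hlapf, hgamf]
    have a1 := hinv x
    have a2 : 0 < (w x + ε)⁻¹ := inv_pos.2 (hwe x)
    have a3 : 0 ≤ ((w x + ε)⁻¹ - (w x)⁻¹) * c.lap w x :=
      mul_nonneg_of_nonpos_of_nonpos (by linarith) (hL x)
    have a4 : ((w x + ε)⁻¹ - (w x)⁻¹) ^ 2 ≤ (-((w x + ε) ^ 2)⁻¹ + ((w x) ^ 2)⁻¹) := by
      rw [← inv_pow, ← inv_pow]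
      nlinarith
    have := mul_le_mul_of_nonneg_right a4 (hgw x)
    linarith
  have hLf : ∀ x, 0 ≤ c.lap f x := fun x => by
    refine le_trans ?_ (hG x)
    rw [hgamf]
    have := hgw x
    positivity
  have hmv1 := hmv f hf hf0 hLf x₀ R hR
  have hcac1 := hcac f hf hG x₀ R hR
  have hAm : MeasurableSet ({x | ε ≤ w x} ∩ Metric.ball x₀ R) :=
    (measurableSet_le measurable_const hw.continuous.measurable).inter
      Metric.isOpen_ball.measurableSet
  have hlog2 : 0 < log 2 := Real.log_pos (by norm_num)
  have hpo := poincare hf.one hf0 x₀ hR (l := log 2) inter_subset_right hAm hlog2.le (by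
    rintro x ⟨hx, -⟩
    have hx' : ε ≤ w x := hx
    simp only [hfdef]
    have a1 : log (w x + ε) ≤ log (2 * w x) := Real.log_le_log (hwe x) (by linarith)
    rw [Real.log_mul (by norm_num) (hwne x)] at a1
    linarith)
  rw [vol_ball x₀ hR] at hpo
  set VA := volume.real ({x | ε ≤ w x} ∩ Metric.ball x₀ R)
  set If := ∫ x in Metric.ball x₀ R, f x
  set S := ∫ x in Metric.ball x₀ R, ∑ k, pd k f x ^ 2
  set D := ∫ x in Metric.ball x₀ R, ‖fderiv ℝ f x‖
  have hfd : Continuous (fderiv ℝ f) := hf.one.continuous_fderiv (by simp)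
  have hcsum : Continuous fun x => ∑ k, pd k f x ^ 2 :=
    continuous_finsetSum _ fun k _ => ((hf.pd k).continuous).pow 2
  have hD : R * D ≤ 1 / 2 * (R ^ 2 * S + R ^ n * om n) := by
    have : ∫ x in Metric.ball x₀ R, R * ‖fderiv ℝ f x‖ ≤
        ∫ x in Metric.ball x₀ R, (1 / 2 * R ^ 2 * (∑ k, pd k f x ^ 2) + 1 / 2) := by
      refine setIntegral_mono (integrableOn_ball (hfd.norm.const_mul R) _ _)
        (integrableOn_ball ((hcsum.const_mul _).add continuous_const) _ _) fun x => ?_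
      have b1 := norm_fderiv_le (f := f) x
      simp only []
      have b2 : R ^ 2 * ‖fderiv ℝ f x‖ ^ 2 ≤ R ^ 2 * ∑ k, pd k f x ^ 2 := by gcongr
      nlinarith [sq_nonneg (R * ‖fderiv ℝ f x‖ - 1)]
    rw [integral_const_mul, integral_add (integrableOn_ball (hcsum.const_mul _) _ _)
      (integrableOn_ball continuous_const _ _), integral_const_mul, setIntegral_const,
      vol_ball x₀ hR, smul_eq_mul] at this
    linarith
  have hRn : 0 < R ^ n := by positivity
  have hVA : 0 < VA := lt_of_lt_of_le (by positivity) hA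
  have hIf : If ≤ R ^ n * (om n * log 2 + 2 ^ n * (C2 + om n) / θ) := by
    have b1 : VA * If ≤ VA * (R ^ n * om n) * log 2 + 2 ^ n * (R ^ n * om n) * ((C2 + om n) * R ^ n) := by
      refine hpo.trans ?_
      have : 2 * R * (2 ^ n * (R ^ n * om n) * D) = 2 ^ n * (R ^ n * om n) * (2 * (R * D)) := by ring
      rw [this]
      refine add_le_add le_rfl (mul_le_mul_of_nonneg_left ?_ (by positivity))
      have e : (C2 + om n) * R ^ n = C2 * R ^ n + R ^ n * om n := by ring
      rw [e]
      linarith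
    have b2 : 2 ^ n * (R ^ n * om n) * ((C2 + om n) * R ^ n) ≤
        VA * (2 ^ n * (C2 + om n) / θ * R ^ n) := by
      calc 2 ^ n * (R ^ n * om n) * ((C2 + om n) * R ^ n) =
          θ * (R ^ n * om n) * (2 ^ n * (C2 + om n) / θ * R ^ n) := by field_simp
        _ ≤ _ := by gcongr
    have b3 : VA * If ≤ VA * (R ^ n * (om n * log 2 + 2 ^ n * (C2 + om n) / θ)) := by
      refine (b1.trans (add_le_add le_rfl b2)).trans (le_of_eq ?_)
      ring
    exact le_of_mul_le_mul_left b3 hVA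
  have hfx : f x₀ ≤ C3 := by
    have : f x₀ * R ^ n ≤ C3 * R ^ n := by
      refine hmv1.trans ?_
      rw [hC3]
      calc C1 * If ≤ C1 * (R ^ n * (om n * log 2 + 2 ^ n * (C2 + om n) / θ)) := by gcongr
        _ = _ := by ring
    exact le_of_mul_le_mul_right this hRn
  simp only [hfdef] at hfx
  rw [← Real.log_div (hwe x₀).ne' (hwne x₀), Real.log_le_iff_le_exp (div_pos (hwe x₀) (hw0 x₀)),
    div_le_iff₀ (hw0 x₀)] at hfx
  rw [exp_neg, inv_mul_le_iff₀ (exp_pos _)]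
  have := hw0 x₀
  linarith

end Ctx

end YuanSL

namespace YuanSL
open MeasureTheory Set

theorem tan_superadd {a b : ℝ} (ha : 0 ≤ a) (hb : 0 ≤ b) (hab : a + b < π / 2) :
    tan a + tan b ≤ tan (a + b) := by
  have ca : 0 < cos a := cos_pos_of_mem_Ioo ⟨by linarith [pi_pos], by linarith⟩
  have cb : 0 < cos b := cos_pos_of_mem_Ioo ⟨by linarith [pi_pos], by linarith⟩
  have cab : 0 < cos (a + b) := cos_pos_of_mem_Ioo ⟨by linarith [pi_pos], by linarith⟩
  have sa : 0 ≤ sin a := sin_nonneg_of_nonneg_of_le_pi ha (by linarith [pi_pos])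
  have sb : 0 ≤ sin b := sin_nonneg_of_nonneg_of_le_pi hb (by linarith [pi_pos])
  have sab : 0 ≤ sin (a + b) := sin_nonneg_of_nonneg_of_le_pi (by linarith) (by linarith [pi_pos])
  have e : tan a + tan b = sin (a + b) / (cos a * cos b) := by
    rw [tan_eq_sin_div_cos, tan_eq_sin_div_cos, sin_add]; field_simp
  rw [e, tan_eq_sin_div_cos]
  apply div_le_div_of_nonneg_left sab cab
  rw [cos_add]; nlinarith [mul_nonneg sa sb]

theorem sum_tan_le {ι : Type*} (S : Finset ι) (φ : ι → ℝ) (h0 : ∀ i ∈ S, 0 ≤ φ i)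
    (hS : ∑ i ∈ S, φ i < π / 2) : ∑ i ∈ S, tan (φ i) ≤ tan (∑ i ∈ S, φ i) := by
  classical
  induction S using Finset.induction_on with
  | empty => simp
  | insert a s ha ih =>
    rw [Finset.sum_insert ha] at hS ⊢
    rw [Finset.sum_insert ha]
    have h1 : 0 ≤ φ a := h0 a (by simp)
    have h2 : 0 ≤ ∑ i ∈ s, φ i := Finset.sum_nonneg fun i hi => h0 i (by simp [hi])
    have := ih (fun i hi => h0 i (by simp [hi])) (by linarith)
    have := tan_superadd h1 h2 hS
    linarith

section
variable {n : ℕ} {Θ : ℝ} {θ : Fin n → ℝ}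

theorem pair_pos (hθ : ∀ i, |θ i| < π / 2) (hs : ∑ i, θ i = Θ) (hΘ : ((n : ℝ) - 2) * π / 2 < Θ)
    {i j : Fin n} (hij : i ≠ j) : 0 < θ i + θ j := by
  classical
  have h1 : ∑ k, (π / 2 - θ k) = n * (π / 2) - Θ := by
    rw [Finset.sum_sub_distrib, hs]; simp
  have h2 : ∑ k ∈ ({i, j} : Finset (Fin n)), (π / 2 - θ k) ≤ ∑ k, (π / 2 - θ k) :=
    Finset.sum_le_sum_of_subset_of_nonneg (Finset.subset_univ _) fun k _ _ => by
      have := (abs_lt.1 (hθ k)).2; linarith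
  rw [h1, Finset.sum_pair hij] at h2
  linarith

theorem tan_pair (hθ : ∀ i, |θ i| < π / 2) (hs : ∑ i, θ i = Θ) (hΘ : ((n : ℝ) - 2) * π / 2 < Θ)
    {i j : Fin n} (hij : i ≠ j) : 0 < tan (θ i) + tan (θ j) := by
  have h := pair_pos hθ hs hΘ hij
  have h1 := abs_lt.1 (hθ i)
  have h2 := abs_lt.1 (hθ j)
  have := tan_lt_tan_of_lt_of_lt_pi_div_two (x := - θ j) (y := θ i) (by linarith) (by linarith) (by linarith)
  rw [tan_neg] at this
  linarith

theorem diag_ineq (hθ : ∀ i, |θ i| < π / 2) (hs : ∑ i, θ i = Θ) (hΘ : ((n : ℝ) - 2) * π / 2 < Θ)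
    (y : Fin n → ℝ) (hy : ∑ i, y i = 0) : 0 ≤ ∑ i, tan (θ i) * y i ^ 2 := by
  classical
  by_cases hall : ∀ i, 0 ≤ θ i
  · exact Finset.sum_nonneg fun i _ => mul_nonneg
      (tan_nonneg_of_nonneg_of_le_pi_div_two (hall i) (abs_lt.1 (hθ i)).2.le) (sq_nonneg _)
  push Not at hall
  obtain ⟨m, hm⟩ := hall
  set S := Finset.univ.erase m with hS
  have hpos : ∀ i ∈ S, 0 < θ i := fun i hi => by
    have := pair_pos hθ hs hΘ (Finset.ne_of_mem_erase hi); linarith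
  have htp : ∀ i ∈ S, 0 < tan (θ i) := fun i hi =>
    tan_pos_of_pos_of_lt_pi_div_two (hpos i hi) (abs_lt.1 (hθ i)).2
  have sp : ∀ f : Fin n → ℝ, ∑ i, f i = f m + ∑ i ∈ S, f i := fun f =>
    (Finset.add_sum_erase _ f (Finset.mem_univ m)).symm
  rw [sp] at hy ⊢
  have hcs : (∑ i ∈ S, y i) ^ 2 ≤ (∑ i ∈ S, tan (π / 2 - θ i)) * ∑ i ∈ S, tan (θ i) * y i ^ 2 := by
    apply Finset.sum_sq_le_sum_mul_sum_of_sq_le_mul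
    · intro i hi; rw [tan_pi_div_two_sub]; exact (inv_pos.2 (htp i hi)).le
    · intro i hi; exact mul_nonneg (htp i hi).le (sq_nonneg _)
    · intro i hi; rw [tan_pi_div_two_sub]; have := (htp i hi).ne'; exact le_of_eq (by field_simp)
  have hsum : ∑ i ∈ S, (π / 2 - θ i) < π / 2 + θ m := by
    have h1 : ∑ k, (π / 2 - θ k) = n * (π / 2) - Θ := by
      rw [Finset.sum_sub_distrib, hs]; simp
    rw [sp] at h1
    linarith
  have h0 : 0 ≤ ∑ i ∈ S, (π / 2 - θ i) := Finset.sum_nonneg fun i _ => by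
    have := (abs_lt.1 (hθ i)).2; linarith
  have ht := sum_tan_le S (fun i => π / 2 - θ i) (fun i _ => by
    have := (abs_lt.1 (hθ i)).2; linarith) (by linarith)
  have ht2 : tan (∑ i ∈ S, (π / 2 - θ i)) ≤ tan (π / 2 + θ m) :=
    (tan_lt_tan_of_nonneg_of_lt_pi_div_two h0 (by linarith) hsum).le
  have e : tan (π / 2 + θ m) = (- tan (θ m))⁻¹ := by
    rw [← tan_neg, ← tan_pi_div_two_sub]; congr 1; ring
  have hl : 0 < - tan (θ m) := by
    rw [← tan_neg]; exact tan_pos_of_pos_of_lt_pi_div_two (by linarith) (by have := (abs_lt.1 (hθ m)).1; linarith)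
  set Q := ∑ i ∈ S, tan (θ i) * y i ^ 2
  have hQ : 0 ≤ Q := Finset.sum_nonneg fun i hi => mul_nonneg (htp i hi).le (sq_nonneg _)
  have h3 : (∑ i ∈ S, y i) ^ 2 ≤ (- tan (θ m))⁻¹ * Q := by
    refine hcs.trans (mul_le_mul_of_nonneg_right ?_ hQ)
    rw [← e]; exact ht.trans ht2
  have h4 : (- tan (θ m)) * (∑ i ∈ S, y i) ^ 2 ≤ Q := by
    calc _ ≤ (- tan (θ m)) * ((- tan (θ m))⁻¹ * Q) := by gcongr
      _ = Q := mul_inv_cancel_left₀ hl.ne' Q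
  have e5 : y m ^ 2 = (∑ i ∈ S, y i) ^ 2 := by
    have : y m = - ∑ i ∈ S, y i := by linarith
    rw [this, neg_sq]
  rw [e5]; linarith

theorem quad_ineq (hθ : ∀ i, |θ i| < π / 2) (hs : ∑ i, θ i = Θ) (hΘ : ((n : ℝ) - 2) * π / 2 < Θ)
    (B : Matrix (Fin n) (Fin n) ℝ) (hB : ∑ i, cos (θ i) ^ 2 * B i i = 0) :
    0 ≤ ∑ i, ∑ j, cos (θ i) ^ 2 * cos (θ j) ^ 2 * (tan (θ i) + tan (θ j)) * B i j ^ 2 := by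
  classical
  have h := diag_ineq hθ hs hΘ (fun i => cos (θ i) ^ 2 * B i i) hB
  calc (0:ℝ) ≤ ∑ i, 2 * (tan (θ i) * (cos (θ i) ^ 2 * B i i) ^ 2) := by
        rw [← Finset.mul_sum]; linarith
    _ ≤ _ := Finset.sum_le_sum fun i _ => by
        rw [← Finset.add_sum_erase _ _ (Finset.mem_univ i)]
        have : 0 ≤ ∑ j ∈ Finset.univ.erase i,
            cos (θ i) ^ 2 * cos (θ j) ^ 2 * (tan (θ i) + tan (θ j)) * B i j ^ 2 :=
          Finset.sum_nonneg fun j hj => by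
            have := tan_pair hθ hs hΘ (Finset.ne_of_mem_erase hj).symm
            positivity
        nlinarith
end
end YuanSL

namespace YuanSL
open MeasureTheory Set Matrix

section
variable {n : ℕ}

/-- Hessians with controlled special Lagrangian angles. -/
def SLmat (Θ α : ℝ) (H : Matrix (Fin n) (Fin n) ℝ) : Prop :=
  ∃ (U : Matrix (Fin n) (Fin n) ℝ) (θ : Fin n → ℝ), U * Uᵀ = 1 ∧ Uᵀ * U = 1 ∧
    H = U * diagonal (fun i => tan (θ i)) * Uᵀ ∧ (∀ j, |θ j| ≤ π / 2 - α) ∧ ∑ i, θ i = Θ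

/-- conjugated diagonal -/
def cd (U : Matrix (Fin n) (Fin n) ℝ) (f : Fin n → ℝ) : Matrix (Fin n) (Fin n) ℝ :=
  U * diagonal f * Uᵀ

variable {U : Matrix (Fin n) (Fin n) ℝ}

theorem cd_mul (h : Uᵀ * U = 1) (f g : Fin n → ℝ) : cd U f * cd U g = cd U (fun i => f i * g i) := by
  unfold cd
  calc U * diagonal f * Uᵀ * (U * diagonal g * Uᵀ) = U * diagonal f * (Uᵀ * U) * diagonal g * Uᵀ := by
        simp only [Matrix.mul_assoc]
    _ = _ := by rw [h, Matrix.mul_one, Matrix.mul_assoc U, diagonal_mul_diagonal]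

theorem cd_one (h : U * Uᵀ = 1) : cd U (fun _ => 1) = 1 := by
  unfold cd; simp [h]

theorem cd_add (f g : Fin n → ℝ) : cd U f + cd U g = cd U (fun i => f i + g i) := by
  unfold cd
  rw [← Matrix.add_mul, ← Matrix.mul_add, diagonal_add]

theorem cd_symm (f : Fin n → ℝ) : (cd U f)ᵀ = cd U f := by
  unfold cd
  simp [Matrix.transpose_mul, Matrix.mul_assoc]

theorem cd_quad (f ξ : Fin n → ℝ) : ξ ⬝ᵥ (cd U f *ᵥ ξ) = ∑ i, f i * ((Uᵀ *ᵥ ξ) i) ^ 2 := by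
  unfold cd
  rw [Matrix.mul_assoc, ← Matrix.mulVec_mulVec, dotProduct_mulVec, ← mulVec_transpose,
    ← Matrix.mulVec_mulVec, dotProduct]
  refine Finset.sum_congr rfl fun i _ => ?_
  rw [mulVec_diagonal]; ring

theorem norm_rot (h : U * Uᵀ = 1) (ξ : Fin n → ℝ) : ∑ i, ((Uᵀ *ᵥ ξ) i) ^ 2 = ∑ i, ξ i ^ 2 := by
  have := cd_quad (U := U) (fun _ => 1) ξ
  rw [cd_one h, one_mulVec] at this
  simp only [one_mul] at this
  rw [← this, dotProduct]
  exact Finset.sum_congr rfl fun i _ => by ring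

theorem trace_rot (f : Fin n → ℝ) (T : Matrix (Fin n) (Fin n) ℝ) :
    (cd U f * T).trace = ∑ i, f i * (Uᵀ * T * U) i i := by
  unfold cd
  calc (U * diagonal f * Uᵀ * T).trace = (U * (diagonal f * (Uᵀ * T))).trace := by
        simp only [Matrix.mul_assoc]
    _ = (diagonal f * (Uᵀ * T * U)).trace := by rw [Matrix.trace_mul_comm, Matrix.mul_assoc]
    _ = _ := by
      rw [trace]
      exact Finset.sum_congr rfl fun i _ => by rw [diag_apply, diagonal_mul]

theorem cos_pos' {α t : ℝ} (hα : 0 < α) (ht : |t| ≤ π / 2 - α) : 0 < cos t := by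
  have := abs_le.1 ht
  exact cos_pos_of_mem_Ioo ⟨by linarith, by linarith⟩

theorem sin_le_cos {α t : ℝ} (hα : 0 < α) (ht : |t| ≤ π / 2 - α) : sin α ≤ cos t := by
  rw [← cos_abs, ← cos_pi_div_two_sub]
  exact cos_le_cos_of_nonneg_of_le_pi (abs_nonneg _) (by linarith [pi_pos]) ht

variable {Θ α : ℝ} {H : Matrix (Fin n) (Fin n) ℝ}

/-- inverse metric -/
noncomputable def Gm (H : Matrix (Fin n) (Fin n) ℝ) : Matrix (Fin n) (Fin n) ℝ := (1 + H * H)⁻¹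

theorem metric_cd {θ : Fin n → ℝ} (h1 : U * Uᵀ = 1) (h2 : Uᵀ * U = 1)
    (h3 : ∀ i, 0 < cos (θ i)) (h4 : H = cd U (fun i => tan (θ i))) :
    (1 + H * H) * cd U (fun i => cos (θ i) ^ 2) = 1 := by
  rw [h4, cd_mul h2, ← cd_one h1, cd_add, cd_mul h2]
  congr 1
  funext i
  have := (h3 i).ne'
  rw [tan_eq_sin_div_cos]; field_simp
  rw [add_comm, sin_sq_add_cos_sq]

theorem Gm_eq_cd {θ : Fin n → ℝ} (h1 : U * Uᵀ = 1) (h2 : Uᵀ * U = 1)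
    (h3 : ∀ i, 0 < cos (θ i)) (h4 : H = cd U (fun i => tan (θ i))) :
    Gm H = cd U (fun i => cos (θ i) ^ 2) :=
  Matrix.inv_eq_right_inv (metric_cd h1 h2 h3 h4)

namespace SLmat
variable (h : SLmat Θ α H) (hα : 0 < α)

include h in
theorem symm : Hᵀ = H := by
  obtain ⟨U, θ, h1, h2, h3, h4, h5⟩ := h
  rw [h3]; exact cd_symm _

include h hα

theorem mulG : (1 + H * H) * Gm H = 1 := by
  obtain ⟨U, θ, h1, h2, h3, h4, h5⟩ := h
  rw [Gm_eq_cd h1 h2 (fun i => cos_pos' hα (h4 i)) h3]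
  exact metric_cd h1 h2 (fun i => cos_pos' hα (h4 i)) h3

theorem Gmul : Gm H * (1 + H * H) = 1 := by
  have := h.mulG hα
  exact mul_eq_one_comm.1 this

theorem det_ne : (1 + H * H).det ≠ 0 := by
  have := congrArg det (h.mulG hα)
  rw [det_mul, det_one] at this
  intro h0
  rw [h0] at this
  simp at this

theorem Gsymm : (Gm H)ᵀ = Gm H := by
  obtain ⟨U, θ, h1, h2, h3, h4, h5⟩ := h
  rw [Gm_eq_cd h1 h2 (fun i => cos_pos' hα (h4 i)) h3]
  exact cd_symm _

theorem GH : Gm H * H = H * Gm H := by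
  obtain ⟨U, θ, h1, h2, h3, h4, h5⟩ := h
  rw [Gm_eq_cd h1 h2 (fun i => cos_pos' hα (h4 i)) h3, h3]
  change _ * cd _ _ = cd _ _ * _
  rw [cd_mul h2, cd_mul h2]
  simp only [mul_comm]

theorem Gell (hα2 : α < π / 2) (ξ : Fin n → ℝ) : sin α ^ 2 * ∑ i, ξ i ^ 2 ≤ ξ ⬝ᵥ (Gm H *ᵥ ξ) := by
  obtain ⟨U, θ, h1, h2, h3, h4, h5⟩ := h
  rw [Gm_eq_cd h1 h2 (fun i => cos_pos' hα (h4 i)) h3, cd_quad, ← norm_rot h1 ξ, Finset.mul_sum]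
  have hs : 0 ≤ sin α := sin_nonneg_of_nonneg_of_le_pi hα.le (by linarith [pi_pos])
  refine Finset.sum_le_sum fun i _ => ?_
  have := sin_le_cos hα (h4 i)
  gcongr

theorem row_bound (hα2 : α < π / 2) (i : Fin n) : ∑ k, H i k ^ 2 ≤ (sin α ^ 2)⁻¹ := by
  obtain ⟨U, θ, h1, h2, h3, h4, h5⟩ := h
  have hsy : Hᵀ = H := by rw [h3]; exact cd_symm _
  have hs : 0 < sin α := sin_pos_of_pos_of_lt_pi hα (by linarith [pi_pos])
  have e1 : ∑ k, H i k ^ 2 = Pi.single i 1 ⬝ᵥ ((H * H) *ᵥ Pi.single i 1) := by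
    rw [mulVec_single_one, single_one_dotProduct, col_apply, Matrix.mul_apply]
    refine Finset.sum_congr rfl fun k _ => ?_
    have : H k i = H i k := by conv_lhs => rw [← hsy, transpose_apply]
    rw [this]; ring
  have e2 : H * H = cd U (fun i => tan (θ i) * tan (θ i)) := by
    rw [h3]; exact cd_mul h2 _ _
  rw [e1, e2, cd_quad]
  calc _ ≤ ∑ j, (sin α ^ 2)⁻¹ * ((Uᵀ *ᵥ Pi.single i 1) j) ^ 2 := by
        refine Finset.sum_le_sum fun j _ => mul_le_mul_of_nonneg_right ?_ (sq_nonneg _)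
        have hc := sin_le_cos hα (h4 j)
        have hc0 := cos_pos' hα (h4 j)
        have : tan (θ j) * tan (θ j) ≤ (cos (θ j) ^ 2)⁻¹ := by
          rw [← Real.inv_one_add_tan_sq hc0.ne', inv_inv]; nlinarith
        refine this.trans ?_
        gcongr
    _ = (sin α ^ 2)⁻¹ := by
      rw [← Finset.mul_sum, norm_rot h1]
      simp [Pi.single_apply]

theorem trace_ineq (hΘ : ((n : ℝ) - 2) * π / 2 < Θ) (T : Matrix (Fin n) (Fin n) ℝ) (hT : Tᵀ = T)
    (h0 : (Gm H * T).trace = 0) : 0 ≤ (Gm H * (T * H + H * T) * Gm H * T).trace := by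
  obtain ⟨U, θ, h1, h2, h3, h4, h5⟩ := h
  have hG := Gm_eq_cd h1 h2 (fun i => cos_pos' hα (h4 i)) h3
  set B := Uᵀ * T * U with hBdef
  have hBs : ∀ i j, B j i = B i j := fun i j => by
    have : Bᵀ = B := by rw [hBdef]; simp [Matrix.transpose_mul, hT, Matrix.mul_assoc]
    conv_rhs => rw [← this, transpose_apply]
  rw [hG, trace_rot] at h0
  have hq := quad_ineq (fun i => (h4 i).trans_lt (by linarith)) h5 hΘ B h0
  have hTB : T = U * B * Uᵀ := by
    rw [hBdef]
    calc T = (U * Uᵀ) * T * (U * Uᵀ) := by rw [h1]; simp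
      _ = _ := by simp only [Matrix.mul_assoc]
  have key : Gm H * (T * H + H * T) * Gm H * T = cd U (fun i => cos (θ i) ^ 2) *
      (U * ((B * diagonal (fun i => tan (θ i)) + diagonal (fun i => tan (θ i)) * B) *
        diagonal (fun i => cos (θ i) ^ 2) * B) * Uᵀ) := by
    rw [hG, h3, Matrix.mul_assoc, Matrix.mul_assoc]
    congr 1
    have e1 : T * (U * diagonal (fun i => tan (θ i)) * Uᵀ) = U * (B * diagonal (fun i => tan (θ i))) * Uᵀ := by
      rw [hTB]
      calc _ = U * B * (Uᵀ * U) * diagonal (fun i => tan (θ i)) * Uᵀ := by simp only [Matrix.mul_assoc]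
        _ = _ := by rw [h2]; simp only [Matrix.mul_assoc, Matrix.one_mul]
    have e2 : (U * diagonal (fun i => tan (θ i)) * Uᵀ) * T = U * (diagonal (fun i => tan (θ i)) * B) * Uᵀ := by
      rw [hTB]
      calc _ = U * diagonal (fun i => tan (θ i)) * (Uᵀ * U) * B * Uᵀ := by simp only [Matrix.mul_assoc]
        _ = _ := by rw [h2]; simp only [Matrix.mul_assoc, Matrix.one_mul]
    have e3 : cd U (fun i => cos (θ i) ^ 2) * T = U * (diagonal (fun i => cos (θ i) ^ 2) * B) * Uᵀ := by
      rw [hTB]; unfold cd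
      calc _ = U * diagonal (fun i => cos (θ i) ^ 2) * (Uᵀ * U) * B * Uᵀ := by simp only [Matrix.mul_assoc]
        _ = _ := by rw [h2]; simp only [Matrix.mul_assoc, Matrix.one_mul]
    rw [e1, e2, e3, ← Matrix.add_mul, ← Matrix.mul_add]
    calc _ = U * (B * diagonal (fun i => tan (θ i)) + diagonal (fun i => tan (θ i)) * B) * (Uᵀ * U) *
          (diagonal (fun i => cos (θ i) ^ 2) * B) * Uᵀ := by simp only [Matrix.mul_assoc]
      _ = _ := by rw [h2]; simp only [Matrix.mul_assoc, Matrix.one_mul]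
  rw [key, trace_rot]
  refine hq.trans (le_of_eq ?_)
  refine Finset.sum_congr rfl fun i _ => ?_
  have e4 : ∀ M : Matrix (Fin n) (Fin n) ℝ, Uᵀ * (U * M * Uᵀ) * U = M := fun M => by
    calc _ = (Uᵀ * U) * M * (Uᵀ * U) := by simp only [Matrix.mul_assoc]
      _ = M := by rw [h2]; simp
  rw [e4, Matrix.mul_apply, Finset.mul_sum]
  refine Finset.sum_congr rfl fun j _ => ?_
  rw [mul_diagonal, Matrix.add_apply, mul_diagonal, diagonal_mul, hBs i j]
  ring

/-- projection inequality -/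
theorem proj_ineq (p q : Fin n → ℝ) :
    (p + H *ᵥ q) ⬝ᵥ (Gm H *ᵥ (p + H *ᵥ q)) ≤ ∑ i, p i ^ 2 + ∑ i, q i ^ 2 := by
  set y := p + H *ᵥ q with hy
  set z := Gm H *ᵥ y with hz
  have e0 : (1 + H * H) *ᵥ z = y := by rw [hz, mulVec_mulVec, h.mulG hα, one_mulVec]
  have sy : ∀ a b : Fin n → ℝ, a ⬝ᵥ (H *ᵥ b) = (H *ᵥ a) ⬝ᵥ b := fun a b => by
    rw [dotProduct_mulVec, ← mulVec_transpose, h.symm]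
  have e1 : y ⬝ᵥ z = ∑ i, z i ^ 2 + ∑ i, (H *ᵥ z) i ^ 2 := by
    rw [dotProduct_comm]
    conv_lhs => rw [← e0]
    rw [add_mulVec, one_mulVec, dotProduct_add, ← mulVec_mulVec, sy]
    simp only [dotProduct, sq]
  have e2 : y ⬝ᵥ z = ∑ i, (p i * z i + q i * (H *ᵥ z) i) := by
    rw [hy, add_dotProduct, ← sy, Finset.sum_add_distrib]; rfl
  have e3 : ∑ i, (p i * z i + q i * (H *ᵥ z) i) ≤
      ∑ i, (1 / 2 * (z i ^ 2 + (H *ᵥ z) i ^ 2) + 1 / 2 * (p i ^ 2 + q i ^ 2)) :=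
    Finset.sum_le_sum fun i _ => by
      nlinarith [sq_nonneg (p i - z i), sq_nonneg (q i - (H *ᵥ z) i)]
  have e4 : ∑ i, (1 / 2 * (z i ^ 2 + (H *ᵥ z) i ^ 2) + 1 / 2 * (p i ^ 2 + q i ^ 2)) =
      1 / 2 * (∑ i, z i ^ 2 + ∑ i, (H *ᵥ z) i ^ 2) + 1 / 2 * (∑ i, p i ^ 2 + ∑ i, q i ^ 2) := by
    simp only [Finset.sum_add_distrib, Finset.mul_sum, mul_add]
  linarith

end SLmat
end
end YuanSL

namespace YuanSL
open MeasureTheory Set Matrix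

section
variable {n : ℕ}

/-- complexification of matrices -/
noncomputable def cx : Matrix (Fin n) (Fin n) ℝ →+* Matrix (Fin n) (Fin n) ℂ :=
  Complex.ofRealHom.mapMatrix

theorem cx_apply (M : Matrix (Fin n) (Fin n) ℝ) (i j : Fin n) : cx M i j = (M i j : ℂ) := rfl

theorem cx_trace (M : Matrix (Fin n) (Fin n) ℝ) : (cx M).trace = (M.trace : ℂ) := by
  simp [trace, cx_apply]

theorem cx_smul (r : ℝ) (M : Matrix (Fin n) (Fin n) ℝ) : cx (r • M) = (r : ℂ) • cx M := by
  ext i j; simp [cx_apply]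

theorem cx_diag (f : Fin n → ℝ) : cx (diagonal f) = diagonal (fun i => (f i : ℂ)) := by
  ext i j; simp [cx_apply, diagonal_apply]; split_ifs <;> simp

/-- the complex matrix `1 + i H` -/
noncomputable def cM (H : Matrix (Fin n) (Fin n) ℝ) : Matrix (Fin n) (Fin n) ℂ :=
  1 + Complex.I • cx H

theorem one_add_I_tan {t : ℝ} (h : cos t ≠ 0) :
    (1 : ℂ) + Complex.I * (tan t : ℝ) = ((cos t)⁻¹ : ℝ) * Complex.exp (Complex.I * t) := by
  rw [mul_comm Complex.I (t : ℂ), Complex.exp_mul_I, tan_eq_sin_div_cos]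
  have : (cos t : ℂ) ≠ 0 := by exact_mod_cast h
  push_cast
  have h2 : Complex.cos t ≠ 0 := by rw [← Complex.ofReal_cos]; exact this
  field_simp

theorem SLmat.det_cM {Θ α : ℝ} {H : Matrix (Fin n) (Fin n) ℝ} (h : SLmat Θ α H) (hα : 0 < α)
    (hα2 : α < π / 2) :
    ∃ J : ℝ, 1 ≤ J ∧ J ≤ ((sin α)⁻¹) ^ n ∧ (cM H).det = J * Complex.exp (Complex.I * Θ) := by
  obtain ⟨U, θ, h1, h2, h3, h4, h5⟩ := h
  have hs : 0 < sin α := sin_pos_of_pos_of_lt_pi hα (by linarith [pi_pos])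
  refine ⟨∏ i, (cos (θ i))⁻¹, ?_, ?_, ?_⟩
  · calc (1:ℝ) = ∏ i : Fin n, 1 := by simp
      _ ≤ _ := Finset.prod_le_prod (fun _ _ => zero_le_one) fun i _ =>
        one_le_inv_iff₀.2 ⟨cos_pos' hα (h4 i), cos_le_one _⟩
  · calc ∏ i, (cos (θ i))⁻¹ ≤ ∏ i : Fin n, (sin α)⁻¹ :=
        Finset.prod_le_prod (fun i _ => (inv_pos.2 (cos_pos' hα (h4 i))).le) fun i _ => by
          have := sin_le_cos hα (h4 i)
          gcongr
      _ = _ := by simp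
  · have e : cM H = cx U * diagonal (fun i => 1 + Complex.I * (tan (θ i) : ℝ)) * cx Uᵀ := by
      unfold cM
      rw [h3, map_mul, map_mul, cx_diag]
      have : (diagonal (fun i => 1 + Complex.I * (tan (θ i) : ℝ)) : Matrix (Fin n) (Fin n) ℂ) =
          1 + Complex.I • diagonal (fun i => ((tan (θ i) : ℝ) : ℂ)) := by
        ext i j
        by_cases hij : i = j
        · subst hij; simp
        · simp [hij]
      rw [this, Matrix.mul_add, Matrix.add_mul, Matrix.mul_one, ← map_mul, h1, map_one,
        Matrix.mul_smul, Matrix.smul_mul]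
    have hd : (cx U).det * (cx Uᵀ).det = 1 := by
      rw [← det_mul, ← map_mul, h1, map_one, det_one]
    rw [e, det_mul, det_mul, det_diagonal]
    have e2 : (∏ i, ((1 : ℂ) + Complex.I * (tan (θ i) : ℝ))) =
        ((∏ i, (cos (θ i))⁻¹ : ℝ) : ℂ) * Complex.exp (Complex.I * Θ) := by
      rw [Finset.prod_congr rfl fun i _ => one_add_I_tan (cos_pos' hα (h4 i)).ne',
        Finset.prod_mul_distrib, ← Complex.exp_sum, ← Finset.mul_sum, ← h5]
      push_cast; rfl
    rw [e2]
    linear_combination ((∏ i, (cos (θ i))⁻¹ : ℝ) : ℂ) * Complex.exp (Complex.I * Θ) * hd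

theorem cM_inv {H G : Matrix (Fin n) (Fin n) ℝ} (h1 : (1 + H * H) * G = 1) (h2 : G * H = H * G) :
    cM H * (cx G - Complex.I • cx (G * H)) = 1 := by
  unfold cM
  have e : cx G + cx (H * (G * H)) = 1 := by
    rw [← map_add, h2, ← Matrix.mul_assoc, ← map_one cx, ← h1, Matrix.add_mul, Matrix.one_mul]
  rw [Matrix.add_mul, Matrix.one_mul, Matrix.mul_sub, Matrix.smul_mul, Matrix.smul_mul,
    Matrix.mul_smul, smul_smul, Complex.I_mul_I, ← map_mul, ← map_mul, ← h2, ← e]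
  module

/-- the determinant function on arrays -/
noncomputable def Fdet (M : Fin n → Fin n → ℝ) : ℂ := (cM (Matrix.of M)).det

theorem Fdet_contDiff : ContDiff ℝ (⊤ : ℕ∞) (Fdet (n := n)) := by
  unfold Fdet
  simp only [det_apply']
  refine ContDiff.sum fun σ _ => ContDiff.mul contDiff_const ?_
  refine contDiff_prod fun i _ => ?_
  simp only [cM, Matrix.add_apply, Matrix.smul_apply, cx_apply, Matrix.of_apply, smul_eq_mul]
  refine contDiff_const.add (contDiff_const.mul ?_)
  exact Complex.ofRealCLM.contDiff.comp (contDiff_apply_apply ℝ ℝ (σ i) i)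

theorem Fdet_fderiv {H : Matrix (Fin n) (Fin n) ℝ} (h1 : (1 + H * H) * Gm H = 1)
    (h2 : Gm H * H = H * Gm H) (B : Matrix (Fin n) (Fin n) ℝ) :
    fderiv ℝ Fdet (fun i j => H i j) (fun i j => B i j) = Fdet (fun i j => H i j) *
      (((Gm H * H * B).trace : ℝ) + Complex.I * ((Gm H * B).trace : ℝ)) := by
  have hd : DifferentiableAt ℝ Fdet (fun i j => H i j) :=
    (Fdet_contDiff.differentiable (by simp)).differentiableAt
  have l1 := hd.hasFDerivAt.hasLineDerivAt (fun i j => B i j)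
  have l2 : HasLineDerivAt ℝ Fdet (Fdet (fun i j => H i j) *
      (((Gm H * H * B).trace : ℝ) + Complex.I * ((Gm H * B).trace : ℝ)))
      (fun i j => H i j) (fun i j => B i j) := by
    unfold HasLineDerivAt
    set C := cx (Gm H) - Complex.I • cx (Gm H * H) with hC
    have hCi := cM_inv h1 h2
    rw [← hC] at hCi
    set N := C * (Complex.I • cx B) with hN
    have htr : N.trace = (((Gm H * H * B).trace : ℝ) + Complex.I * ((Gm H * B).trace : ℝ)) := by
      rw [hN, hC, Matrix.sub_mul, Matrix.mul_smul, Matrix.smul_mul, Matrix.mul_smul, smul_smul,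
        Complex.I_mul_I, ← map_mul, ← map_mul, trace_sub, trace_smul, trace_smul, cx_trace, cx_trace]
      simp; ring
    have hN2 : cM H * N = Complex.I • cx B := by
      rw [hN, ← Matrix.mul_assoc, hCi, Matrix.one_mul]
    have hform : ∀ r : ℝ, Fdet ((fun i j => H i j) + r • (fun i j => B i j)) =
        (cM H).det * (1 + (r : ℂ) • N).det := fun r => by
      rw [← det_mul, Matrix.mul_add, Matrix.mul_one, Matrix.mul_smul, hN2]
      unfold Fdet
      congr 1
      ext i j
      simp [cM, cx_apply]; ring
    have hz : Fdet (fun i j => H i j) = (cM H).det := rfl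
    have key : ∀ r : ℝ, Fdet ((fun i j => H i j) + r • (fun i j => B i j)) =
        (cM H).det * (1 + N.trace * (r : ℂ) +
          (det (1 + (Polynomial.X : Polynomial ℂ) • N.map Polynomial.C)).divX.divX.eval (r : ℂ) * (r : ℂ) ^ 2) := by
      intro r
      rw [hform, det_one_add_smul]
    have hr : HasDerivAt (fun r : ℝ => (r : ℂ)) 1 0 := Complex.ofRealCLM.hasDerivAt
    set p := (det (1 + (Polynomial.X : Polynomial ℂ) • N.map Polynomial.C)).divX.divX
    have hp : HasDerivAt (fun r : ℝ => p.eval (r : ℂ)) (p.derivative.eval ((0:ℝ) : ℂ)) 0 :=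
      (p.hasDerivAt ((0:ℝ):ℂ)).comp_ofReal
    have := (((hr.const_mul N.trace).const_add 1).add (hp.mul (hr.pow 2))).const_mul (cM H).det
    simp only [key]
    rw [hz, ← htr]
    convert! this using 1
    simp
  exact l1.unique l2

end
end YuanSL

namespace YuanSL
open MeasureTheory Set Matrix

section
variable {n : ℕ}

/-- smooth matrix field -/
def SmM (F : EE n → Matrix (Fin n) (Fin n) ℝ) : Prop := ∀ i j, Sm (fun x => F x i j)

/-- entrywise partial derivative -/
noncomputable def pdM (k : Fin n) (F : EE n → Matrix (Fin n) (Fin n) ℝ) (x : EE n) :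
    Matrix (Fin n) (Fin n) ℝ := Matrix.of fun i j => pd k (fun y => F y i j) x

theorem pdM_apply (k : Fin n) (F : EE n → Matrix (Fin n) (Fin n) ℝ) (x : EE n) (i j : Fin n) :
    pdM k F x i j = pd k (fun y => F y i j) x := rfl

theorem SmM.mul {F K : EE n → Matrix (Fin n) (Fin n) ℝ} (hF : SmM F) (hK : SmM K) :
    SmM (fun x => F x * K x) := fun i j => by
  simp only [Matrix.mul_apply]
  exact ContDiff.sum fun k _ => (hF i k).mul (hK k j)

theorem SmM.add {F K : EE n → Matrix (Fin n) (Fin n) ℝ} (hF : SmM F) (hK : SmM K) :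
    SmM (fun x => F x + K x) := fun i j => by
  simp only [Matrix.add_apply]
  exact (hF i j).add (hK i j)

theorem SmM.const (C : Matrix (Fin n) (Fin n) ℝ) : SmM (fun _ : EE n => C) := fun _ _ =>
  contDiff_const

theorem SmM.pdM {F : EE n → Matrix (Fin n) (Fin n) ℝ} (hF : SmM F) (k : Fin n) :
    SmM (pdM k F) := fun i j => (hF i j).pd k

theorem SmM.det {F : EE n → Matrix (Fin n) (Fin n) ℝ} (hF : SmM F) : Sm (fun x => (F x).det) := by
  simp only [Matrix.det_apply']
  exact ContDiff.sum fun σ _ => contDiff_const.mul (contDiff_prod fun i _ => hF _ _)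

theorem SmM.inv {F : EE n → Matrix (Fin n) (Fin n) ℝ} (hF : SmM F) (h0 : ∀ x, (F x).det ≠ 0) :
    SmM (fun x => (F x)⁻¹) := fun i j => by
  simp only [Matrix.inv_def, Matrix.smul_apply, Ring.inverse_eq_inv', smul_eq_mul,
    Matrix.adjugate_apply]
  refine ContDiff.mul (hF.det.inv h0) ?_
  refine SmM.det (F := fun x => (F x).updateRow j (Pi.single i 1)) fun a b => ?_
  simp only [Matrix.updateRow_apply]
  by_cases h : a = j
  · simp only [h, if_true]; exact contDiff_const
  · simp only [h, if_false]; exact hF a b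

theorem pdM_mul {F K : EE n → Matrix (Fin n) (Fin n) ℝ} (hF : SmM F) (hK : SmM K) (k : Fin n)
    (x : EE n) : pdM k (fun x => F x * K x) x = pdM k F x * K x + F x * pdM k K x := by
  ext i j
  simp only [pdM_apply, Matrix.add_apply, Matrix.mul_apply]
  rw [pd_sum (f := fun l y => F y i l * K y l j) _
    (fun l _ => ((hF i l).diff x).mul ((hK l j).diff x)), ← Finset.sum_add_distrib]
  exact Finset.sum_congr rfl fun l _ => pd_mul ((hF i l).diff x) ((hK l j).diff x) k

theorem pdM_add {F K : EE n → Matrix (Fin n) (Fin n) ℝ} (hF : SmM F) (hK : SmM K) (k : Fin n)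
    (x : EE n) : pdM k (fun x => F x + K x) x = pdM k F x + pdM k K x := by
  ext i j
  exact pd_add ((hF i j).diff x) ((hK i j).diff x) k

theorem pdM_const (C : Matrix (Fin n) (Fin n) ℝ) (k : Fin n) (x : EE n) :
    pdM k (fun _ => C) x = 0 := by
  ext i j; exact pd_const _ _ _

theorem pd_trace {F : EE n → Matrix (Fin n) (Fin n) ℝ} (hF : SmM F) (k : Fin n) (x : EE n) :
    pd k (fun y => (F y).trace) x = (pdM k F x).trace := by
  simp only [trace, diag_apply, pdM_apply]
  exact pd_sum _ (fun i _ => (hF i i).diff x) k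

/-- special Lagrangian gradient data -/
structure Dat (n : ℕ) where
  Θ : ℝ
  α : ℝ
  hΘ : ((n : ℝ) - 2) * π / 2 < Θ
  hα : 0 < α
  hα2 : α < π / 2
  V : Fin n → EE n → ℝ
  V_sm : ∀ i, Sm (V i)
  V_sym : ∀ i j x, pd j (V i) x = pd i (V j) x
  sl : ∀ x, SLmat Θ α (Matrix.of fun i j => pd j (V i) x)

namespace Dat
variable (d : Dat n)

/-- Hessian -/
noncomputable def H (x : EE n) : Matrix (Fin n) (Fin n) ℝ := Matrix.of fun i j => pd j (d.V i) x

/-- derivative of Hessian -/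
noncomputable def T (k : Fin n) (x : EE n) : Matrix (Fin n) (Fin n) ℝ := pdM k d.H x

/-- inverse metric -/
noncomputable def G (x : EE n) : Matrix (Fin n) (Fin n) ℝ := Gm (d.H x)

/-- volume element -/
noncomputable def J (x : EE n) : ℝ := (Complex.exp (-(Complex.I * d.Θ)) * (cM (d.H x)).det).re

theorem H_apply (x : EE n) (i j : Fin n) : d.H x i j = pd j (d.V i) x := rfl

theorem slH (x : EE n) : SLmat d.Θ d.α (d.H x) := d.sl x

theorem H_sm : SmM d.H := fun i j => (d.V_sm i).pd j

theorem T_apply (k : Fin n) (x : EE n) (i j : Fin n) : d.T k x i j = pd k (pd j (d.V i)) x := rfl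

theorem Hs (x : EE n) (i j : Fin n) : d.H x i j = d.H x j i := d.V_sym i j x

theorem T_symm (k : Fin n) (x : EE n) (i j : Fin n) : d.T k x i j = d.T k x j i := by
  rw [T_apply, T_apply]
  have : pd j (d.V i) = pd i (d.V j) := funext fun y => d.V_sym i j y
  rw [this]

theorem T_swap (k : Fin n) (x : EE n) (i j : Fin n) : d.T k x i j = d.T j x i k := by
  rw [T_apply, T_apply]
  exact pd_comm (d.V_sm i).two k j x

theorem Tt (k : Fin n) (x : EE n) : (d.T k x)ᵀ = d.T k x := by
  ext i j; exact d.T_symm k x j i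

theorem G_sm : SmM d.G :=
  SmM.inv ((SmM.const 1).add (d.H_sm.mul d.H_sm)) fun x => (d.slH x).det_ne d.hα

theorem det_eq (x : EE n) : 1 ≤ d.J x ∧ d.J x ≤ ((sin d.α)⁻¹) ^ n ∧
    (cM (d.H x)).det = d.J x * Complex.exp (Complex.I * d.Θ) := by
  obtain ⟨J, h1, h2, h3⟩ := (d.slH x).det_cM d.hα d.hα2
  have : d.J x = J := by
    unfold Dat.J
    rw [h3, mul_left_comm, ← Complex.exp_add, neg_add_cancel, Complex.exp_zero]
    simp
  rw [this]
  exact ⟨h1, h2, h3⟩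

theorem arr_sm : ContDiff ℝ (⊤ : ℕ∞) (fun x : EE n => fun i j => d.H x i j) :=
  contDiff_pi.2 fun i => contDiff_pi.2 fun j => d.H_sm i j

theorem det_sm : ContDiff ℝ (⊤ : ℕ∞) (fun x : EE n => (cM (d.H x)).det) :=
  Fdet_contDiff.comp d.arr_sm

theorem J_sm : Sm d.J := by
  have : ContDiff ℝ (⊤ : ℕ∞) (fun x : EE n => Complex.exp (-(Complex.I * d.Θ)) * (cM (d.H x)).det) :=
    contDiff_const.mul d.det_sm
  exact Complex.reCLM.contDiff.comp this

theorem jacobi (k : Fin n) (x : EE n) : pd k d.J x = d.J x * (d.G x * d.H x * d.T k x).trace ∧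
    (d.G x * d.T k x).trace = 0 := by
  have hJ := d.det_eq x
  have hE : Complex.exp (Complex.I * d.Θ) ≠ 0 := Complex.exp_ne_zero _
  have a1 : fderiv ℝ (fun x : EE n => (cM (d.H x)).det) x (EuclideanSpace.single k 1) =
      (pd k d.J x : ℂ) * Complex.exp (Complex.I * d.Θ) := by
    have : (fun x : EE n => (cM (d.H x)).det) = fun x => (d.J x : ℂ) * Complex.exp (Complex.I * d.Θ) :=
      funext fun x => (d.det_eq x).2.2
    rw [this]
    have h1 : HasFDerivAt (fun x => (d.J x : ℂ)) (Complex.ofRealCLM.comp (fderiv ℝ d.J x)) x :=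
      Complex.ofRealCLM.hasFDerivAt.comp x (d.J_sm.diff x).hasFDerivAt
    have h2 := h1.mul_const (Complex.exp (Complex.I * d.Θ))
    rw [h2.fderiv]
    simp [pd, mul_comm]
  have a2 : fderiv ℝ (fun x : EE n => (cM (d.H x)).det) x (EuclideanSpace.single k 1) =
      fderiv ℝ Fdet (fun i j => d.H x i j) (fun i j => d.T k x i j) := by
    have h1 : HasFDerivAt Fdet (fderiv ℝ Fdet (fun i j => d.H x i j)) (fun i j => d.H x i j) :=
      (Fdet_contDiff.differentiable (by simp)).differentiableAt.hasFDerivAt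
    have h2 := (d.arr_sm.differentiable (by simp) x).hasFDerivAt
    have h3 := (h1.comp x h2).fderiv
    change fderiv ℝ (Fdet ∘ fun x i j => d.H x i j) x _ = _
    rw [h3, ContinuousLinearMap.comp_apply]
    congr 1
    funext i j
    have e1 := hasFDerivAt_pi'.1 (hasFDerivAt_pi'.1 h2 i) j
    have e2 := e1.fderiv
    have e3 : d.T k x i j = fderiv ℝ (fun x => d.H x i j) x (EuclideanSpace.single k 1) := rfl
    rw [e3, e2]
    rfl
  rw [Fdet_fderiv ((d.slH x).mulG d.hα) ((d.slH x).GH d.hα), a1] at a2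
  have a3 : Fdet (fun i j => d.H x i j) = d.J x * Complex.exp (Complex.I * d.Θ) := hJ.2.2
  rw [a3] at a2
  have a4 : (pd k d.J x : ℂ) = d.J x * (((Gm (d.H x) * d.H x * d.T k x).trace : ℝ) +
      Complex.I * ((Gm (d.H x) * d.T k x).trace : ℝ)) := by
    apply mul_right_cancel₀ hE
    rw [a2]; ring
  have r := congrArg Complex.re a4
  have i := congrArg Complex.im a4
  simp at r i
  refine ⟨r, ?_⟩
  rcases i with i | i
  · exact absurd i (by linarith [hJ.1])
  · exact i

theorem trGT (k : Fin n) (x : EE n) : ∑ i, ∑ j, d.G x i j * d.T k x i j = 0 := by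
  have := (d.jacobi k x).2
  rw [trace] at this
  rw [← this]
  refine Finset.sum_congr rfl fun i _ => ?_
  rw [diag_apply, Matrix.mul_apply]
  exact Finset.sum_congr rfl fun j _ => by rw [d.T_symm k x i j]

theorem pd_G (k : Fin n) (x : EE n) :
    pdM k d.G x = -(d.G x * (d.T k x * d.H x + d.H x * d.T k x) * d.G x) := by
  have h1 : pdM k (fun x => d.G x * (1 + d.H x * d.H x)) x = 0 := by
    have : (fun x => d.G x * (1 + d.H x * d.H x)) = fun _ => 1 :=
      funext fun x => (d.slH x).Gmul d.hα
    rw [this, pdM_const]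
  rw [pdM_mul d.G_sm ((SmM.const 1).add (d.H_sm.mul d.H_sm)),
    pdM_add (SmM.const 1) (d.H_sm.mul d.H_sm), pdM_const, zero_add, pdM_mul d.H_sm d.H_sm] at h1
  have h2 := congrArg (· * d.G x) h1
  simp only [Matrix.add_mul, Matrix.zero_mul] at h2
  have h3 : pdM k d.G x * (1 + d.H x * d.H x) * d.G x = pdM k d.G x := by
    rw [Matrix.mul_assoc]
    have : (1 + d.H x * d.H x) * d.G x = 1 := (d.slH x).mulG d.hα
    rw [this, Matrix.mul_one]
  rw [h3] at h2
  exact eq_neg_of_add_eq_zero_left h2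

end Dat
end
end YuanSL

namespace YuanSL
open MeasureTheory Set Matrix

section
variable {n : ℕ}
namespace Dat
variable (d : Dat n)

theorem sum_PTQ (P Q : Matrix (Fin n) (Fin n) ℝ) (x : EE n) (j : Fin n) :
    ∑ i, (P * d.T i x * Q) i j = ∑ b, (∑ i, ∑ a, P i a * d.T b x i a) * Q b j := by
  simp only [Matrix.mul_apply]
  rw [Finset.sum_comm]
  refine Finset.sum_congr rfl fun b _ => ?_
  rw [Finset.sum_mul]
  refine Finset.sum_congr rfl fun i _ => ?_
  congr 1
  refine Finset.sum_congr rfl fun a _ => ?_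
  rw [d.T_swap i x a b, d.T_symm b x a i]

theorem a_div (j : Fin n) (x : EE n) : ∑ i, pd i (fun x => d.J x * d.G x i j) x = 0 := by
  have h1 : ∀ i, pd i (fun x => d.J x * d.G x i j) x =
      d.J x * ((d.G x * d.H x * d.T i x).trace * d.G x i j) - d.J x * ((d.G x * d.T i x * (d.H x * d.G x)) i j +
        (d.G x * d.H x * d.T i x * d.G x) i j) := fun i => by
    rw [pd_mul (d.J_sm.diff x) ((d.G_sm i j).diff x), (d.jacobi i x).1]
    have : pd i (fun y => d.G y i j) x = pdM i d.G x i j := rfl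
    rw [this, d.pd_G, ← Matrix.add_apply]
    have e : d.G x * (d.T i x * d.H x + d.H x * d.T i x) * d.G x =
        d.G x * d.T i x * (d.H x * d.G x) + d.G x * d.H x * d.T i x * d.G x := by
      simp only [Matrix.mul_add, Matrix.add_mul, Matrix.mul_assoc]
    rw [e, Matrix.neg_apply]
    ring
  simp only [h1]
  rw [Finset.sum_sub_distrib, ← Finset.mul_sum, ← Finset.mul_sum, Finset.sum_add_distrib,
    d.sum_PTQ, d.sum_PTQ]
  simp only [d.trGT, zero_mul, Finset.sum_const_zero, zero_add]
  rw [sub_eq_zero]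
  congr 1
  refine Finset.sum_congr rfl fun b _ => ?_
  congr 1
  rw [trace]
  refine Finset.sum_congr rfl fun i _ => ?_
  rw [diag_apply, Matrix.mul_apply]
  exact Finset.sum_congr rfl fun a _ => by rw [d.T_symm b x a i]

/-- extrinsic squared distance -/
noncomputable def s (x₀ x : EE n) : ℝ :=
  ∑ i, ((x i - x₀ i) * (x i - x₀ i) + (d.V i x - d.V i x₀) * (d.V i x - d.V i x₀))

theorem coord_sm (i : Fin n) (c : ℝ) : Sm (fun x : EE n => x i - c) :=
  ((EuclideanSpace.proj i : EE n →L[ℝ] ℝ).contDiff).sub contDiff_const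

theorem dV_sm (i : Fin n) (c : ℝ) : Sm (fun x : EE n => d.V i x - c) :=
  (d.V_sm i).sub contDiff_const

theorem pd_coord_sub (k i : Fin n) (c : ℝ) (x : EE n) :
    pd k (fun x : EE n => x i - c) x = if k = i then 1 else 0 := by
  rw [pd_sub (f := fun x : EE n => x i) (g := fun _ => c)
    ((EuclideanSpace.proj i : EE n →L[ℝ] ℝ).differentiableAt) (by fun_prop), pd_coord, pd_const, sub_zero]

theorem pd_dV (k i : Fin n) (c : ℝ) (x : EE n) :
    pd k (fun x : EE n => d.V i x - c) x = d.H x i k := by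
  rw [pd_sub ((d.V_sm i).diff x) (by fun_prop), pd_const, sub_zero]; rfl

theorem s_sm (x₀ : EE n) : Sm (d.s x₀) :=
  ContDiff.sum fun i _ => ((coord_sm i _).mul (coord_sm i _)).add ((d.dV_sm i _).mul (d.dV_sm i _))

theorem pd_s (x₀ : EE n) (k : Fin n) : pd k (d.s x₀) = fun x =>
    2 * ((x k - x₀ k) + ∑ i, d.H x k i * (d.V i x - d.V i x₀)) := by
  funext x
  unfold s
  rw [pd_sum (f := fun i (x : EE n) => (x i - x₀ i) * (x i - x₀ i) + (d.V i x - d.V i x₀) * (d.V i x - d.V i x₀)) _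
    (fun i _ => Sm.diff (((coord_sm i _).mul (coord_sm i _)).add ((d.dV_sm i _).mul (d.dV_sm i _))) x)]
  have : ∀ i, pd k (fun (x : EE n) => (x i - x₀ i) * (x i - x₀ i) + (d.V i x - d.V i x₀) * (d.V i x - d.V i x₀)) x
      = 2 * ((if k = i then 1 else 0) * (x i - x₀ i)) + 2 * (d.H x k i * (d.V i x - d.V i x₀)) := fun i => by
    rw [pd_add (Sm.diff ((coord_sm i _).mul (coord_sm i _)) x) (Sm.diff ((d.dV_sm i _).mul (d.dV_sm i _)) x),
      pd_mul ((coord_sm i _).diff x) ((coord_sm i _).diff x), pd_mul ((d.dV_sm i _).diff x) ((d.dV_sm i _).diff x),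
      pd_coord_sub, pd_dV, d.Hs x i k]
    ring
  simp only [this]
  rw [Finset.sum_add_distrib, ← Finset.mul_sum, ← Finset.mul_sum]
  simp [mul_add]

theorem pd2_s (x₀ : EE n) (l k : Fin n) (x : EE n) : pd l (pd k (d.s x₀)) x =
    2 * ((1 : Matrix (Fin n) (Fin n) ℝ) k l + ∑ i, d.T i x l k * (d.V i x - d.V i x₀) + (d.H x * d.H x) k l) := by
  rw [d.pd_s]
  have hsm : ∀ i, Sm (fun x => d.H x k i * (d.V i x - d.V i x₀)) := fun i => (d.H_sm k i).mul (d.dV_sm i _)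
  have hs2 : Sm (fun x => ∑ i, d.H x k i * (d.V i x - d.V i x₀)) := ContDiff.sum fun i _ => hsm i
  rw [pd_const_mul (Sm.diff ((coord_sm k _).add hs2) x), pd_add ((coord_sm k _).diff x) (hs2.diff x),
    pd_sum (f := fun i x => d.H x k i * (d.V i x - d.V i x₀)) _ (fun i _ => (hsm i).diff x), pd_coord_sub]
  have : ∀ i, pd l (fun x => d.H x k i * (d.V i x - d.V i x₀)) x =
      d.T i x l k * (d.V i x - d.V i x₀) + d.H x k i * d.H x i l := fun i => by
    rw [pd_mul ((d.H_sm k i).diff x) ((d.dV_sm i _).diff x), pd_dV]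
    have e : pd l (fun y => d.H y k i) x = d.T l x k i := rfl
    rw [e, d.T_swap l x k i, d.T_symm i x k l]
  simp only [this]
  rw [Finset.sum_add_distrib, Matrix.mul_apply, Matrix.one_apply]
  simp only [eq_comm, add_assoc]

theorem s_lap (x₀ x : EE n) : ∑ i, ∑ j, d.J x * d.G x i j * pd i (pd j (d.s x₀)) x = 2 * n * d.J x := by
  have e0 : ∑ i, ∑ j, d.G x i j * (1 + d.H x * d.H x) j i = n := by
    have : (d.G x * (1 + d.H x * d.H x)).trace = n := by
      have : d.G x * (1 + d.H x * d.H x) = 1 := (d.slH x).Gmul d.hα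
      rw [this]; simp
    rw [← this, trace]
    simp only [diag_apply, Matrix.mul_apply]
  have e1 : ∑ i, ∑ j, d.G x i j * ∑ l, d.T l x i j * (d.V l x - d.V l x₀) = 0 := by
    simp only [Finset.mul_sum]
    have : ∀ i, ∑ j, ∑ l, d.G x i j * (d.T l x i j * (d.V l x - d.V l x₀)) =
        ∑ l, ∑ j, d.G x i j * (d.T l x i j * (d.V l x - d.V l x₀)) := fun i => Finset.sum_comm
    simp only [this]
    rw [Finset.sum_comm]
    refine Finset.sum_eq_zero fun l _ => ?_
    simp only [← mul_assoc, ← Finset.sum_mul, d.trGT, zero_mul]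
  have : ∀ i j, d.J x * d.G x i j * pd i (pd j (d.s x₀)) x = 2 * d.J x * (d.G x i j * (1 + d.H x * d.H x) j i)
      + 2 * d.J x * (d.G x i j * ∑ l, d.T l x i j * (d.V l x - d.V l x₀)) := fun i j => by
    rw [d.pd2_s, Matrix.add_apply]; ring
  simp only [this, Finset.sum_add_distrib, ← Finset.mul_sum]
  rw [e0, e1]; ring

theorem s_eq (x₀ x : EE n) : d.s x₀ x = ∑ i, (x i - x₀ i) ^ 2 + ∑ i, (d.V i x - d.V i x₀) ^ 2 := by
  unfold s
  rw [Finset.sum_add_distrib]; simp only [sq]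

theorem s_grad (x₀ x : EE n) : ∑ i, ∑ j, d.J x * d.G x i j * pd i (d.s x₀) x * pd j (d.s x₀) x ≤
    4 * d.s x₀ x * d.J x := by
  have h := (d.slH x).proj_ineq d.hα (fun i => x i - x₀ i) (fun i => d.V i x - d.V i x₀)
  set y : Fin n → ℝ := (fun i => x i - x₀ i) + d.H x *ᵥ (fun i => d.V i x - d.V i x₀) with hy
  have hp : ∀ k, pd k (d.s x₀) x = 2 * y k := fun k => by rw [d.pd_s]; rfl
  have e : ∑ i, ∑ j, d.J x * d.G x i j * pd i (d.s x₀) x * pd j (d.s x₀) x =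
      4 * d.J x * (y ⬝ᵥ (Gm (d.H x) *ᵥ y)) := by
    simp only [hp, dotProduct, mulVec, Finset.mul_sum]
    refine Finset.sum_congr rfl fun i _ => Finset.sum_congr rfl fun j _ => ?_
    unfold G; ring
  rw [e, d.s_eq]
  have := (d.det_eq x).1
  calc _ ≤ 4 * d.J x * (∑ i, (x i - x₀ i) ^ 2 + ∑ i, (d.V i x - d.V i x₀) ^ 2) := by
        exact mul_le_mul_of_nonneg_left h (by linarith)
    _ = _ := by ring

theorem V_lip (i : Fin n) (x₀ x : EE n) : (d.V i x - d.V i x₀) ^ 2 ≤ (sin d.α ^ 2)⁻¹ * ‖x - x₀‖ ^ 2 := by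
  have hs : 0 < sin d.α := sin_pos_of_pos_of_lt_pi d.hα (by linarith [pi_pos, d.hα2])
  have h1 : ∀ y ∈ (univ : Set (EE n)), ‖fderiv ℝ (d.V i) y‖ ≤ (sin d.α)⁻¹ := fun y _ => by
    refine abs_le_of_sq_le_sq' ?_ (by positivity) |>.2
    refine (norm_fderiv_le y).trans ?_
    rw [inv_pow]
    exact (d.slH y).row_bound d.hα d.hα2 i
  have h2 := Convex.norm_image_sub_le_of_norm_fderiv_le (fun y _ => (d.V_sm i).diff y) h1 convex_univ
    (mem_univ x₀) (mem_univ x)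
  rw [Real.norm_eq_abs] at h2
  rw [← sq_abs, ← inv_pow, ← mul_pow]
  gcongr

theorem norm_sq (v : EE n) : ‖v‖ ^ 2 = ∑ i, v i ^ 2 := by
  rw [EuclideanSpace.norm_sq_eq]
  simp

/-- the associated analytic context -/
noncomputable def ctx : Ctx n where
  a i j x := d.J x * d.G x i j
  a_sm i j := d.J_sm.mul (d.G_sm i j)
  a_sym i j x := by
    have : d.G x i j = d.G x j i := by
      have := (d.slH x).Gsymm d.hα
      exact congrFun (congrFun this j) i
    rw [this]
  a_div := d.a_div
  lam := sin d.α ^ 2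
  lam_pos := by
    have hs : 0 < sin d.α := sin_pos_of_pos_of_lt_pi d.hα (by linarith [pi_pos, d.hα2])
    positivity
  ell x ξ := by
    have h := (d.slH x).Gell d.hα d.hα2 ξ
    have h1 := (d.det_eq x).1
    have e : ∑ i, ∑ j, d.J x * d.G x i j * ξ i * ξ j = d.J x * (ξ ⬝ᵥ (Gm (d.H x) *ᵥ ξ)) := by
      simp only [dotProduct, mulVec, Finset.mul_sum]
      refine Finset.sum_congr rfl fun i _ => Finset.sum_congr rfl fun j _ => ?_
      unfold G; ring
    rw [e]
    have h0 : 0 ≤ sin d.α ^ 2 * ∑ i, ξ i ^ 2 :=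
      mul_nonneg (sq_nonneg _) (Finset.sum_nonneg fun _ _ => sq_nonneg _)
    nlinarith
  J := d.J
  J_cont := d.J_sm.continuous
  J_one x := (d.det_eq x).1
  CJ := ((sin d.α)⁻¹) ^ n
  J_le x := (d.det_eq x).2.1
  s := d.s
  s_sm := d.s_sm
  K := 1 + n * (sin d.α ^ 2)⁻¹
  s_ge x₀ x := by
    rw [d.s_eq, norm_sq]
    simp only [PiLp.sub_apply]
    have : 0 ≤ ∑ i, (d.V i x - d.V i x₀) ^ 2 := Finset.sum_nonneg fun _ _ => sq_nonneg _
    linarith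
  s_le x₀ x := by
    rw [d.s_eq]
    have h1 : ∑ i, (x i - x₀ i) ^ 2 = ‖x - x₀‖ ^ 2 := by
      rw [norm_sq]; simp only [PiLp.sub_apply]
    have h2 : ∑ i, (d.V i x - d.V i x₀) ^ 2 ≤ ∑ i : Fin n, (sin d.α ^ 2)⁻¹ * ‖x - x₀‖ ^ 2 :=
      Finset.sum_le_sum fun i _ => d.V_lip i x₀ x
    rw [Finset.sum_const, Finset.card_univ, Fintype.card_fin, nsmul_eq_mul] at h2
    rw [h1]
    linarith
  K_one := by
    have : 0 ≤ (n : ℝ) * (sin d.α ^ 2)⁻¹ := by positivity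
    linarith
  s_lap := d.s_lap
  s_grad := d.s_grad

/-- pure second derivative in direction `e` -/
noncomputable def v (e : Fin n → ℝ) (x : EE n) : ℝ := ∑ i, ∑ j, e i * e j * d.H x i j

theorem v_sm (e : Fin n → ℝ) : Sm (d.v e) :=
  ContDiff.sum fun i _ => ContDiff.sum fun j _ => contDiff_const.mul (d.H_sm i j)

theorem pd_lin (e : Fin n → ℝ) {F : Fin n → Fin n → EE n → ℝ} (hF : ∀ i j, Sm (F i j)) (k : Fin n) :
    pd k (fun x => ∑ i, ∑ j, e i * e j * F i j x) = fun x => ∑ i, ∑ j, e i * e j * pd k (F i j) x := by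
  funext x
  rw [pd_sum (f := fun i x => ∑ j, e i * e j * F i j x) _
    fun i _ => Sm.diff (ContDiff.sum fun j _ => contDiff_const.mul (hF i j)) x]
  refine Finset.sum_congr rfl fun i _ => ?_
  rw [pd_sum (f := fun j x => e i * e j * F i j x) _
    fun j _ => Sm.diff (contDiff_const.mul (hF i j)) x]
  exact Finset.sum_congr rfl fun j _ => pd_const_mul ((hF i j).diff x) _ _

theorem fourth (k l i j : Fin n) (x : EE n) :
    pd k (pd l (fun y => d.H y i j)) x = pdM j (d.T i) x l k := by
  change pd k (pd l (pd j (d.V i))) x = pd j (pd i (pd k (d.V l))) x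
  have h1 : pd l (pd j (d.V i)) = pd j (pd l (d.V i)) := funext fun y => pd_comm (d.V_sm i).two l j y
  have h2 : pd l (d.V i) = pd i (d.V l) := funext fun y => d.V_sym i l y
  have h3 : pd k (pd i (d.V l)) = pd i (pd k (d.V l)) := funext fun y => pd_comm (d.V_sm l).two k i y
  rw [h1, h2, pd_comm (((d.V_sm l).pd i).two) k j, h3]

theorem T_sm (i : Fin n) : SmM (d.T i) := d.H_sm.pdM i

theorem tr_second (i j : Fin n) (x : EE n) : (d.G x * pdM j (d.T i) x).trace =
    (d.G x * (d.T j x * d.H x + d.H x * d.T j x) * d.G x * d.T i x).trace := by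
  have h : pd j (fun y => (d.G y * d.T i y).trace) x = 0 := by
    have : (fun y => (d.G y * d.T i y).trace) = fun _ => 0 := funext fun y => (d.jacobi i y).2
    rw [this, pd_const]
  rw [pd_trace (d.G_sm.mul (d.T_sm i)), pdM_mul d.G_sm (d.T_sm i), d.pd_G, trace_add, Matrix.neg_mul,
    trace_neg] at h
  linarith

theorem lap_v (e : Fin n → ℝ) (x : EE n) : 0 ≤ d.ctx.lap (d.v e) x := by
  set TT : Matrix (Fin n) (Fin n) ℝ := ∑ i, e i • d.T i x with hTT
  have hsymm : TTᵀ = TT := by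
    rw [hTT, transpose_sum]
    exact Finset.sum_congr rfl fun i _ => by rw [transpose_smul, d.Tt]
  have htr : (Gm (d.H x) * TT).trace = 0 := by
    rw [hTT, Finset.mul_sum, trace_sum]
    refine Finset.sum_eq_zero fun i _ => ?_
    rw [Matrix.mul_smul, trace_smul]
    have : (Gm (d.H x) * d.T i x).trace = 0 := (d.jacobi i x).2
    rw [this, smul_zero]
  have key := (d.slH x).trace_ineq d.hα d.hΘ TT hsymm htr
  have exp1 : (Gm (d.H x) * (TT * d.H x + d.H x * TT) * Gm (d.H x) * TT).trace =
      ∑ i, ∑ j, e i * e j * (d.G x * pdM j (d.T i) x).trace := by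
    simp only [d.tr_second]
    rw [hTT]
    simp only [Finset.sum_mul, Finset.mul_sum, Matrix.smul_mul, Matrix.mul_smul, trace_sum, trace_smul,
      ← Finset.sum_add_distrib, ← smul_add, smul_smul, smul_eq_mul]
    rfl
  have exp2 : d.ctx.lap (d.v e) x = d.J x * ∑ i, ∑ j, e i * e j * (d.G x * pdM j (d.T i) x).trace := by
    have hv : ∀ k l, pd k (pd l (d.v e)) x = ∑ i, ∑ j, e i * e j * pdM j (d.T i) x l k := fun k l => by
      unfold v
      rw [pd_lin e (fun i j => d.H_sm i j), pd_lin e (fun i j => (d.H_sm i j).pd l)]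
      simp only [d.fourth]
    unfold Ctx.lap
    simp only [hv]
    change ∑ k, ∑ l, d.J x * d.G x k l * _ = _
    simp only [Finset.mul_sum, trace, diag_apply, Matrix.mul_apply]
    rw [Finset.sum_congr rfl fun k _ => Finset.sum_comm, Finset.sum_comm]
    refine Finset.sum_congr rfl fun i _ => ?_
    rw [Finset.sum_congr rfl fun k _ => Finset.sum_comm, Finset.sum_comm]
    refine Finset.sum_congr rfl fun j _ => ?_
    refine Finset.sum_congr rfl fun k _ => Finset.sum_congr rfl fun l _ => ?_
    ring
  rw [exp2, ← exp1]
  exact mul_nonneg (by linarith [(d.det_eq x).1]) key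

end Dat
end
end YuanSL

namespace YuanSL
open MeasureTheory Set Matrix

section
variable {n : ℕ}

theorem q_eq (M : Matrix (Fin n) (Fin n) ℝ) (e : Fin n → ℝ) :
    ∑ i, ∑ j, e i * e j * M i j = e ⬝ᵥ (M *ᵥ e) := by
  simp only [dotProduct, mulVec, Finset.mul_sum]
  exact Finset.sum_congr rfl fun i _ => Finset.sum_congr rfl fun j _ => by ring

theorem Ctx.lap_const_sub (c : Ctx n) {f : EE n → ℝ} (hf : Sm f) (C : ℝ) (x : EE n) :
    c.lap (fun x => C - f x) x = - c.lap f x := by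
  unfold Ctx.lap
  have h1 : ∀ j, pd j (fun x => C - f x) = fun x => (-1) * pd j f x := fun j => by
    funext x
    rw [pd_sub (by fun_prop) (hf.diff x), pd_const]; ring
  have h2 : ∀ i j, pd i (pd j (fun x => C - f x)) x = - pd i (pd j f) x := fun i j => by
    rw [h1, pd_const_mul ((hf.pd j).diff x)]; ring
  simp only [h2, mul_neg, Finset.sum_neg_distrib]

namespace Dat
variable (d : Dat n)

theorem H_bound (x : EE n) (i j : Fin n) : |d.H x i j| ≤ (sin d.α)⁻¹ := by
  have hs : 0 < sin d.α := sin_pos_of_pos_of_lt_pi d.hα (by linarith [pi_pos, d.hα2])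
  have h := (d.slH x).row_bound d.hα d.hα2 i
  have h2 : d.H x i j ^ 2 ≤ ∑ k, d.H x i k ^ 2 :=
    Finset.single_le_sum (f := fun k => d.H x i k ^ 2) (fun k _ => sq_nonneg _) (Finset.mem_univ j)
  refine abs_le_of_sq_le_sq ?_ (by positivity)
  rw [inv_pow]; linarith

theorem v_bdd (e : Fin n → ℝ) : BddAbove (range (d.v e)) := by
  refine ⟨∑ i, ∑ j, |e i * e j| * (sin d.α)⁻¹, ?_⟩
  rintro _ ⟨x, rfl⟩
  refine Finset.sum_le_sum fun i _ => Finset.sum_le_sum fun j _ => ?_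
  refine (le_abs_self _).trans ?_
  rw [abs_mul]
  exact mul_le_mul_of_nonneg_left (d.H_bound x i j) (abs_nonneg _)

/-- supremum of the pure second derivative -/
noncomputable def M (e : Fin n → ℝ) : ℝ := ⨆ x, d.v e x

theorem v_le (e : Fin n → ℝ) (x : EE n) : d.v e x ≤ d.M e := le_ciSup (d.v_bdd e) x

theorem approx (S : Finset (Fin n → ℝ)) {ε : ℝ} (hε : 0 < ε) :
    ∃ y, ∀ e ∈ S, d.M e - ε < d.v e y := by
  have hω := om_pos n
  set θ : ℝ := (2 ^ n * (S.card + 1 : ℝ))⁻¹ with hθd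
  have hθ : 0 < θ := by positivity
  obtain ⟨κ, hκ, hw⟩ := d.ctx.weak_harnack hθ
  have hx : ∀ e, ∃ x, d.M e - κ * ε / 2 < d.v e x := fun e =>
    exists_lt_of_lt_ciSup (by have : 0 < κ * ε / 2 := by positivity
                              change d.M e - _ < d.M e; linarith)
  choose xx hxx using hx
  set R : ℝ := 1 + ∑ e ∈ S, ‖xx e‖ with hR
  have hR0 : 0 < R := by
    have : 0 ≤ ∑ e ∈ S, ‖xx e‖ := Finset.sum_nonneg fun _ _ => norm_nonneg _
    linarith
  have hxR : ∀ e ∈ S, ‖xx e‖ ≤ R := fun e he => by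
    have := Finset.single_le_sum (f := fun e => ‖xx e‖) (fun _ _ => norm_nonneg _) he
    linarith
  have hmeas : ∀ e ∈ S, volume.real ({x | d.v e x ≤ d.M e - ε} ∩ Metric.ball 0 R) ≤
      θ * ((2 * R) ^ n * om n) := fun e he => by
    by_contra hcon
    push Not at hcon
    set η := κ * ε / 4 with hη
    have hη0 : 0 < η := by positivity
    have hbig : θ * ((2 * R) ^ n * om n) ≤
        volume.real ({x | ε ≤ (d.M e + η) - d.v e x} ∩ Metric.ball (xx e) (2 * R)) := by
      refine hcon.le.trans (measureReal_mono ?_ ?_)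
      · rintro x ⟨h1, h2⟩
        refine ⟨?_, ?_⟩
        · simp only [mem_ofPred_eq] at h1 ⊢; linarith
        · rw [Metric.mem_ball, dist_eq_norm]
          have h3 : ‖x‖ < R := by simpa using h2
          have := norm_sub_le x (xx e)
          have := hxR e he
          linarith
      · exact ((measure_mono inter_subset_right).trans_lt measure_ball_lt_top).ne
    have := hw (fun x => (d.M e + η) - d.v e x) (contDiff_const.sub (d.v_sm e))
      (fun x => by have := d.v_le e x; linarith)
      (fun x => by rw [d.ctx.lap_const_sub (d.v_sm e)]; have := d.lap_v e x; linarith)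
      (xx e) (2 * R) ε (by positivity) hε hbig
    have h5 := hxx e
    have : 0 < κ * ε := by positivity
    linarith
  by_contra hno
  push Not at hno
  have hcov : Metric.ball (0 : EE n) R ⊆ ⋃ e ∈ S, ({x | d.v e x ≤ d.M e - ε} ∩ Metric.ball 0 R) := by
    intro y hy
    obtain ⟨e, he, h⟩ := hno y
    simp only [mem_iUnion]
    exact ⟨e, he, h, hy⟩
  have h1 : volume.real (Metric.ball (0 : EE n) R) ≤
      ∑ e ∈ S, volume.real ({x | d.v e x ≤ d.M e - ε} ∩ Metric.ball 0 R) := by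
    refine (measureReal_mono hcov ?_).trans (measureReal_biUnion_finset_le _ _)
    refine (lt_of_le_of_lt (measure_mono ?_) (measure_ball_lt_top (μ := volume) (x := (0 : EE n)) (r := R))).ne
    intro y hy
    simp only [mem_iUnion] at hy
    obtain ⟨e, _, h⟩ := hy
    exact h.2
  rw [vol_ball _ hR0] at h1
  have h2 := h1.trans (Finset.sum_le_sum hmeas)
  rw [Finset.sum_const, nsmul_eq_mul] at h2
  have hRn : 0 < R ^ n * om n := by positivity
  have h3 : (S.card : ℝ) * (θ * ((2 * R) ^ n * om n)) = S.card / (S.card + 1) * (R ^ n * om n) := by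
    rw [hθd, mul_pow]; field_simp
  rw [h3] at h2
  have h4 : (S.card : ℝ) / (S.card + 1) < 1 := by
    rw [div_lt_one (by positivity)]; linarith
  nlinarith

theorem v_eq (e : Fin n → ℝ) (x : EE n) : d.v e x = e ⬝ᵥ (d.H x *ᵥ e) := q_eq _ _

/-- the limit matrix -/
noncomputable def A : Matrix (Fin n) (Fin n) ℝ := Matrix.of fun i j =>
  (d.M (Pi.single i 1 + Pi.single j 1) - d.M (Pi.single i 1) - d.M (Pi.single j 1)) / 2

theorem A_symm : (d.A)ᵀ = d.A := by
  ext i j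
  simp only [A, transpose_apply, Matrix.of_apply]
  rw [add_comm (Pi.single j 1 : Fin n → ℝ)]; ring

theorem H_polar (x : EE n) (i j : Fin n) : d.H x i j =
    (d.v (Pi.single i 1 + Pi.single j 1) x - d.v (Pi.single i 1) x - d.v (Pi.single j 1) x) / 2 := by
  simp only [v_eq, Matrix.mulVec_add, dotProduct_add, add_dotProduct, mulVec_single_one,
    single_one_dotProduct, col_apply]
  rw [d.Hs x j i]; ring

theorem approxA (e : Fin n → ℝ) {ε : ℝ} (hε : 0 < ε) :
    ∃ y, (∀ i j, |d.H y i j - d.A i j| ≤ 2 * ε) ∧ d.M e - ε < d.v e y := by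
  classical
  obtain ⟨y, hy⟩ := d.approx ({e} ∪ (Finset.univ.image fun i : Fin n => (Pi.single i 1 : Fin n → ℝ)) ∪
    (Finset.univ.image fun p : Fin n × Fin n => (Pi.single p.1 1 + Pi.single p.2 1 : Fin n → ℝ))) hε
  refine ⟨y, fun i j => ?_, hy e (by simp)⟩
  have h1 := hy (Pi.single i 1) (by simp)
  have h2 := hy (Pi.single j 1) (by simp)
  have h3 := hy (Pi.single i 1 + Pi.single j 1) (by
    refine Finset.mem_union_right _ (Finset.mem_image.2 ⟨(i, j), Finset.mem_univ _, rfl⟩))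
  have g1 := d.v_le (Pi.single i 1) y
  have g2 := d.v_le (Pi.single j 1) y
  have g3 := d.v_le (Pi.single i 1 + Pi.single j 1) y
  rw [d.H_polar]
  simp only [A, Matrix.of_apply]
  rw [abs_le]
  constructor <;> linarith

theorem A_ge (e : Fin n → ℝ) (x : EE n) : d.v e x ≤ ∑ i, ∑ j, e i * e j * d.A i j := by
  refine (d.v_le e x).trans ?_
  set C := ∑ i, ∑ j, |e i * e j| with hC
  have hC0 : 0 ≤ C := Finset.sum_nonneg fun _ _ => Finset.sum_nonneg fun _ _ => abs_nonneg _
  refine le_of_forall_pos_le_add fun δ hδ => ?_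
  obtain ⟨y, h1, h2⟩ := d.approxA e (ε := δ / (1 + 2 * C)) (by positivity)
  have h3 : d.v e y - ∑ i, ∑ j, e i * e j * d.A i j ≤ C * (2 * (δ / (1 + 2 * C))) := by
    unfold v
    rw [← Finset.sum_sub_distrib, hC, Finset.sum_mul]
    refine Finset.sum_le_sum fun i _ => ?_
    rw [← Finset.sum_sub_distrib, Finset.sum_mul]
    refine Finset.sum_le_sum fun j _ => ?_
    rw [← mul_sub]
    refine (le_abs_self _).trans ?_
    rw [abs_mul]
    exact mul_le_mul_of_nonneg_left (h1 i j) (abs_nonneg _)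
  have h4 : δ / (1 + 2 * C) + C * (2 * (δ / (1 + 2 * C))) = δ := by field_simp
  linarith

end Dat
end
end YuanSL

namespace YuanSL
open MeasureTheory Set Matrix

section
variable {n : ℕ}

theorem spectral {A : Matrix (Fin n) (Fin n) ℝ} (hA : A.IsHermitian) :
    ∃ U : Matrix (Fin n) (Fin n) ℝ, U * Uᵀ = 1 ∧ Uᵀ * U = 1 ∧ A = cd U hA.eigenvalues := by
  refine ⟨hA.eigenvectorUnitary, ?_, ?_, ?_⟩
  · have := Unitary.mul_star_self_of_mem hA.eigenvectorUnitary.2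
    rwa [star_eq_conjTranspose, conjTranspose_eq_transpose_of_trivial] at this
  · have := Unitary.star_mul_self_of_mem hA.eigenvectorUnitary.2
    rwa [star_eq_conjTranspose, conjTranspose_eq_transpose_of_trivial] at this
  · have := hA.spectral_theorem
    rw [Unitary.conjStarAlgAut_apply, star_eq_conjTranspose,
      conjTranspose_eq_transpose_of_trivial] at this
    exact this

theorem exists_alpha (θ : Fin n → ℝ) (h : ∀ i, |θ i| < π / 2) : ∃ α, 0 < α ∧ α < π / 2 ∧ ∀ i, |θ i| ≤ π / 2 - α := by
  rcases isEmpty_or_nonempty (Fin n) with he | he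
  · exact ⟨π / 4, by positivity, by linarith [pi_pos], fun i => he.elim i⟩
  · obtain ⟨i, hi⟩ := Finite.exists_max fun i => |θ i|
    have := h i
    have := abs_nonneg (θ i)
    refine ⟨(π / 2 - |θ i|) / 2, by linarith, by linarith [pi_pos], fun j => ?_⟩
    have := hi j
    linarith

theorem exists_SLmat {A : Matrix (Fin n) (Fin n) ℝ} (hA : Aᵀ = A) : ∃ Θ α, 0 < α ∧ α < π / 2 ∧ SLmat Θ α A := by
  have hA' : A.IsHermitian := by
    unfold IsHermitian; rw [conjTranspose_eq_transpose_of_trivial, hA]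
  obtain ⟨U, h1, h2, h3⟩ := spectral hA'
  obtain ⟨α, h4, h5, h6⟩ := exists_alpha (fun i => arctan (hA'.eigenvalues i))
    (fun i => abs_lt.2 ⟨by linarith [neg_pi_div_two_lt_arctan (hA'.eigenvalues i)], arctan_lt_pi_div_two _⟩)
  refine ⟨_, α, h4, h5, U, fun i => arctan (hA'.eigenvalues i), h1, h2, ?_, h6, rfl⟩
  simp only [tan_arctan]
  exact h3

theorem SLmat.trace_lower {Θ α : ℝ} {A : Matrix (Fin n) (Fin n) ℝ} (h : SLmat Θ α A) (hα : 0 < α)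
    (hα2 : α < π / 2) (B : Matrix (Fin n) (Fin n) ℝ) (hB : ∀ e, 0 ≤ e ⬝ᵥ (B *ᵥ e)) :
    sin α ^ 2 * B.trace ≤ (Gm A * B).trace := by
  obtain ⟨U, θ, h1, h2, h3, h4, h5⟩ := h
  have hs : 0 < sin α := sin_pos_of_pos_of_lt_pi hα (by linarith [pi_pos])
  rw [Gm_eq_cd h1 h2 (fun i => cos_pos' hα (h4 i)) h3, trace_rot]
  have e : B.trace = ∑ i, (Uᵀ * B * U) i i := by
    have := trace_rot (U := U) (fun _ => 1) B
    rw [cd_one h1, Matrix.one_mul] at this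
    rw [this]; simp
  rw [e, Finset.mul_sum]
  refine Finset.sum_le_sum fun i _ => ?_
  have h0 : 0 ≤ (Uᵀ * B * U) i i := by
    have := hB (fun k => U k i)
    have e2 : (Uᵀ * B * U) i i = (fun k => U k i) ⬝ᵥ (B *ᵥ (fun k => U k i)) := by
      rw [Matrix.mul_assoc, Matrix.mul_apply]; rfl
    rw [e2]; exact this
  have := sin_le_cos hα (h4 i)
  gcongr

theorem entry_le {B : Matrix (Fin n) (Fin n) ℝ} (hs : Bᵀ = B) (hB : ∀ e, 0 ≤ e ⬝ᵥ (B *ᵥ e)) (i j : Fin n) :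
    |B i j| ≤ B.trace := by
  have hd : ∀ k, 0 ≤ B k k := fun k => by
    have := hB (Pi.single k 1)
    simpa [mulVec_single_one] using this
  have hd2 : ∀ k, B k k ≤ B.trace := fun k =>
    Finset.single_le_sum (f := fun k => B k k) (fun k _ => hd k) (Finset.mem_univ k)
  have h1 := hB (Pi.single i 1 + Pi.single j 1)
  have h2 := hB (Pi.single i 1 - Pi.single j 1)
  have hji : B j i = B i j := congrFun (congrFun hs i) j
  simp only [Matrix.mulVec_add, dotProduct_add, add_dotProduct, Matrix.mulVec_sub, dotProduct_sub,
    sub_dotProduct, mulVec_single_one, single_one_dotProduct, col_apply] at h1 h2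
  have := hd2 i
  have := hd2 j
  rw [abs_le]; constructor <;> linarith

namespace Dat
variable (d : Dat n)

theorem A_det : ∃ JA : ℝ, 1 ≤ JA ∧ Fdet (fun i j => d.A i j) = JA * Complex.exp (Complex.I * d.Θ) := by
  set E := Complex.exp (-(Complex.I * d.Θ)) with hE
  set S : Set (Fin n → Fin n → ℝ) := {M | (E * Fdet M).im = 0 ∧ 1 ≤ (E * Fdet M).re} with hS
  have hc : Continuous fun M : Fin n → Fin n → ℝ => E * Fdet M :=
    continuous_const.mul Fdet_contDiff.continuous
  have hcl : IsClosed S :=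
    (isClosed_eq (Complex.continuous_im.comp hc) continuous_const).inter
      (isClosed_le continuous_const (Complex.continuous_re.comp hc))
  have hmem : (fun i j => d.A i j) ∈ closure S := by
    rw [Metric.mem_closure_iff]
    intro ε hε
    obtain ⟨y, hy, _⟩ := d.approxA 0 (ε := ε / 4) (by positivity)
    refine ⟨fun i j => d.H y i j, ?_, ?_⟩
    · have h := d.det_eq y
      have : E * Fdet (fun i j => d.H y i j) = d.J y := by
        change E * (cM (d.H y)).det = _
        rw [h.2.2, mul_left_comm, hE, ← Complex.exp_add, neg_add_cancel, Complex.exp_zero, mul_one]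
      refine ⟨?_, ?_⟩
      · rw [this]; simp
      · rw [this]; simpa using h.1
    · refine lt_of_le_of_lt ?_ (by linarith : ε / 2 < ε)
      rw [dist_pi_le_iff (by positivity)]
      intro i
      rw [dist_pi_le_iff (by positivity)]
      intro j
      rw [dist_comm, Real.dist_eq]
      have := hy i j
      linarith
  rw [hcl.closure_eq] at hmem
  refine ⟨(E * Fdet (fun i j => d.A i j)).re, hmem.2, ?_⟩
  have : (((E * Fdet (fun i j => d.A i j)).re : ℝ) : ℂ) = E * Fdet (fun i j => d.A i j) := by
    apply Complex.ext
    · simp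
    · simp only [Complex.ofReal_im]; exact hmem.1.symm
  rw [this, hE, mul_right_comm, ← Complex.exp_add, neg_add_cancel, Complex.exp_zero, one_mul]

theorem near : ∃ ρ, 0 < ρ ∧ ∀ x, (∀ i j, |d.H x i j - d.A i j| < ρ) → d.H x = d.A := by
  obtain ⟨JA, hJ1, hJ⟩ := d.A_det
  obtain ⟨Θ', α', ha, ha2, hA⟩ := exists_SLmat d.A_symm
  have hs : 0 < sin α' := sin_pos_of_pos_of_lt_pi ha (by linarith [pi_pos])
  have hder : HasFDerivAt Fdet (fderiv ℝ Fdet (fun i j => d.A i j)) (fun i j => d.A i j) :=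
    (Fdet_contDiff.differentiable (by simp)).differentiableAt.hasFDerivAt
  set c := sin α' ^ 2 / 2 with hc
  have hc0 : 0 < c := by positivity
  have hlo := (hasFDerivAt_iff_isLittleO.1 hder).def hc0
  rw [Metric.eventually_nhds_iff] at hlo
  obtain ⟨ρ, hρ, hlo⟩ := hlo
  refine ⟨ρ, hρ, fun x hx => ?_⟩
  have hdist : dist (fun i j => d.H x i j) (fun i j => d.A i j) < ρ := by
    rw [dist_pi_lt_iff hρ]; intro i
    rw [dist_pi_lt_iff hρ]; intro j
    rw [Real.dist_eq]; exact hx i j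
  have h := hlo hdist
  set B : Matrix (Fin n) (Fin n) ℝ := d.A - d.H x with hB
  have hBs : Bᵀ = B := by rw [hB, transpose_sub, d.A_symm, (d.slH x).symm]
  have hBp : ∀ e, 0 ≤ e ⬝ᵥ (B *ᵥ e) := fun e => by
    have := d.A_ge e x
    rw [q_eq, v_eq] at this
    rw [hB, sub_mulVec, dotProduct_sub]; linarith
  have hent := entry_le hBs hBp
  by_cases htr : B.trace ≤ 0
  · ext i j
    have h1 := hent i j
    have h2 : B i j = 0 := abs_nonpos_iff.1 (h1.trans htr)
    have : d.A i j - d.H x i j = 0 := h2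
    linarith
  exfalso
  push Not at htr
  have hnorm : ‖(fun i j => d.H x i j) - (fun i j => d.A i j)‖ ≤ B.trace := by
    rw [pi_norm_le_iff_of_nonneg htr.le]; intro i
    rw [pi_norm_le_iff_of_nonneg htr.le]; intro j
    have : ((fun i j => d.H x i j) - (fun i j => d.A i j)) i j = - B i j := by
      simp [hB]
    rw [this, norm_neg]; exact hent i j
  have hlin : fderiv ℝ Fdet (fun i j => d.A i j) ((fun i j => d.H x i j) - (fun i j => d.A i j)) =
      - (JA * Complex.exp (Complex.I * d.Θ) *
      (((Gm d.A * d.A * B).trace : ℝ) + Complex.I * ((Gm d.A * B).trace : ℝ))) := by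
    rw [← hJ, ← Fdet_fderiv (hA.mulG ha) (hA.GH ha), ← map_neg]
    congr 1
    funext i j
    simp [hB]
  have hFx : Fdet (fun i j => d.H x i j) = d.J x * Complex.exp (Complex.I * d.Θ) := (d.det_eq x).2.2
  rw [hlin, hFx, hJ] at h
  set t1 := (Gm d.A * d.A * B).trace
  set t2 := (Gm d.A * B).trace with ht2
  have e : (d.J x : ℂ) * Complex.exp (Complex.I * d.Θ) - JA * Complex.exp (Complex.I * d.Θ) -
      -(JA * Complex.exp (Complex.I * d.Θ) * ((t1 : ℝ) + Complex.I * (t2 : ℝ))) =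
      (((d.J x - JA + JA * t1 : ℝ) : ℂ) + ((JA * t2 : ℝ) : ℂ) * Complex.I) * Complex.exp (Complex.I * d.Θ) := by
    push_cast; ring
  rw [e, norm_mul, mul_comm Complex.I, Complex.norm_exp_ofReal_mul_I, mul_one] at h
  have him := Complex.abs_im_le_norm (((d.J x - JA + JA * t1 : ℝ) : ℂ) + ((JA * t2 : ℝ) : ℂ) * Complex.I)
  have e2 : (((d.J x - JA + JA * t1 : ℝ) : ℂ) + ((JA * t2 : ℝ) : ℂ) * Complex.I).im = JA * t2 := by
    rw [Complex.add_im, Complex.ofReal_im, Complex.im_ofReal_mul, Complex.I_im]; ring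
  rw [e2] at him
  have hlow := hA.trace_lower ha ha2 B hBp
  rw [← ht2] at hlow
  have h6 : JA * t2 ≤ c * B.trace :=
    ((le_abs_self _).trans (him.trans h)).trans (mul_le_mul_of_nonneg_left hnorm hc0.le)
  have h7 : 0 < sin α' ^ 2 * B.trace := by positivity
  have h8 : t2 ≤ JA * t2 := by nlinarith
  rw [hc] at h6
  linarith

theorem const (x : EE n) : d.H x = d.A := by
  obtain ⟨ρ, hρ, hnear⟩ := d.near
  have hcont : ∀ i j, Continuous fun x => d.H x i j := fun i j => (d.H_sm i j).continuous
  have hclosed : IsClosed {x | d.H x = d.A} := by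
    have : {x | d.H x = d.A} = ⋂ i, ⋂ j, {x | d.H x i j = d.A i j} := by
      ext x; simp only [mem_ofPred_eq, mem_iInter]
      exact ⟨fun h i j => by rw [h], fun h => by ext i j; exact h i j⟩
    rw [this]
    exact isClosed_iInter fun i => isClosed_iInter fun j => isClosed_eq (hcont i j) continuous_const
  have hopen : IsOpen {x | d.H x = d.A} := by
    have : {x | d.H x = d.A} = ⋂ i, ⋂ j, {x | |d.H x i j - d.A i j| < ρ} := by
      ext x; simp only [mem_ofPred_eq, mem_iInter]
      exact ⟨fun h i j => by rw [h]; simpa using hρ, fun h => hnear x h⟩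
    rw [this]
    exact isOpen_iInter_of_finite fun i => isOpen_iInter_of_finite fun j =>
      isOpen_lt ((hcont i j).sub continuous_const).abs continuous_const
  have hne : {x | d.H x = d.A}.Nonempty := by
    obtain ⟨y, hy, _⟩ := d.approxA 0 (ε := ρ / 4) (by positivity)
    exact ⟨y, hnear y fun i j => by have := hy i j; linarith⟩
  have := IsClopen.eq_univ ⟨hclosed, hopen⟩ hne
  have hx : x ∈ {x | d.H x = d.A} := this ▸ mem_univ x
  exact hx

end Dat
end
end YuanSL

namespace YuanSL
open MeasureTheory Set Matrix
section
variable {n : ℕ}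

theorem diffeo {X : EE n → EE n} (hX : ContDiff ℝ (⊤ : ℕ∞) X) {m : ℝ} (hm : 0 < m)
    (h : ∀ x v, m * ‖v‖ ^ 2 ≤ inner ℝ (fderiv ℝ X x v) v) :
    ∃ Y : EE n → EE n, ContDiff ℝ (⊤ : ℕ∞) Y ∧ (∀ z, X (Y z) = z) ∧ ∀ x, Y (X x) = x := by
  have hd : Differentiable ℝ X := hX.differentiable (by simp)
  have mono : ∀ a b, m * ‖a - b‖ ^ 2 ≤ inner ℝ (X a - X b) (a - b) := by
    intro a b
    have hg : ∀ t : ℝ, HasDerivAt (fun t : ℝ => inner ℝ (X (b + t • (a - b))) (a - b))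
        (inner ℝ (fderiv ℝ X (b + t • (a - b)) (a - b)) (a - b)) t := by
      intro t
      have h1 : HasDerivAt (fun t : ℝ => b + t • (a - b)) (a - b) t := by
        simpa using ((hasDerivAt_id t).smul_const (a - b)).const_add b
      have h2 := (hd (b + t • (a - b))).hasFDerivAt.comp_hasDerivAt t h1
      have := h2.inner ℝ (hasDerivAt_const t (a - b))
      simpa using this
    have := mul_sub_le_image_sub_of_le_deriv (fun t => (hg t).differentiableAt)
      (C := m * ‖a - b‖ ^ 2) (fun t => by rw [(hg t).deriv]; exact h _ _) (x := 0) (y := 1) (by norm_num)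
    simpa [inner_sub_left] using this
  have lip : ∀ a b, m * ‖a - b‖ ≤ ‖X a - X b‖ := by
    intro a b
    rcases eq_or_ne (a - b) 0 with h0 | h0
    · simp [h0]
    · have h1 := (mono a b).trans (real_inner_le_norm _ _)
      have h2 : 0 < ‖a - b‖ := norm_pos_iff.2 h0
      nlinarith
  have inj : Function.Injective X := by
    intro a b hab
    have := lip a b
    rw [hab, sub_self, norm_zero] at this
    have h3 : ‖a - b‖ ≤ 0 := by nlinarith [norm_nonneg (a - b)]
    exact sub_eq_zero.1 (norm_le_zero_iff.1 h3)
  have dinj : ∀ x, Function.Injective (fderiv ℝ X x : EE n →ₗ[ℝ] EE n) := by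
    intro x
    rw [injective_iff_map_eq_zero]
    intro v hv
    have h1 := h x v
    have hv' : fderiv ℝ X x v = 0 := hv
    rw [hv', inner_zero_left] at h1
    have : ‖v‖ ^ 2 ≤ 0 := by nlinarith [sq_nonneg ‖v‖]
    have := pow_eq_zero_iff (two_ne_zero) |>.1 (le_antisymm this (sq_nonneg ‖v‖))
    exact norm_eq_zero.1 this
  let F : EE n → (EE n ≃L[ℝ] EE n) := fun x =>
    (LinearEquiv.ofInjectiveEndo _ (dinj x)).toContinuousLinearEquiv
  have hF : ∀ x, (F x : EE n →L[ℝ] EE n) = fderiv ℝ X x := by intro x; ext v; rfl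
  have hFd : ∀ x, HasFDerivAt X (F x : EE n →L[ℝ] EE n) x := by
    intro x; rw [hF]; exact (hd x).hasFDerivAt
  have hopen : IsOpenMap X := by
    rw [isOpenMap_iff_nhds_le]
    intro x
    exact ((hX.contDiffAt.hasStrictFDerivAt' (hFd x) (by simp)).map_nhds_eq_of_equiv).ge
  have hanti : AntilipschitzWith (Real.toNNReal m⁻¹) X := by
    refine AntilipschitzWith.of_le_mul_dist fun a b => ?_
    rw [Real.coe_toNNReal _ (by positivity), dist_eq_norm, dist_eq_norm]
    rw [inv_mul_eq_div, le_div_iff₀ hm]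
    linarith [lip a b]
  have hprop : IsProperMap X := by
    rw [isProperMap_iff_tendsto_cocompact]
    refine ⟨hd.continuous, ?_⟩
    rw [← Metric.cobounded_eq_cocompact]
    exact hanti.tendsto_cobounded
  have hsurj : Function.Surjective X := by
    rw [← range_eq_univ]
    exact IsClopen.eq_univ ⟨hprop.isClosedMap.isClosed_range, hopen.isOpen_range⟩ (range_nonempty X)
  let e : EE n ≃ₜ EE n := (Equiv.ofBijective X ⟨inj, hsurj⟩).toHomeomorphOfContinuousOpen hd.continuous hopen
  refine ⟨e.symm, e.contDiff_symm (f₀' := F) hFd hX, fun z => e.apply_symm_apply z, fun x => e.symm_apply_apply x⟩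

theorem const_of_pd {f : EE n → ℝ} (hf : Sm f) (h : ∀ k x, pd k f x = 0) (x : EE n) : f x = f 0 := by
  refine is_const_of_fderiv_eq_zero (𝕜 := ℝ) (fun x => hf.diff x) (fun x => ?_) x 0
  ext v
  rw [fderiv_eq_sum]
  simp [h]

theorem csm (i : Fin n) : Sm (fun x : EE n => x i) := by
  have : (fun y : EE n => y i) = (EuclideanSpace.proj i : EE n →L[ℝ] ℝ) := by ext; simp
  unfold Sm
  rw [this]; exact ContinuousLinearMap.contDiff _

theorem quad_of_const {u : EE n → ℝ} (hu : Sm u) (K : Matrix (Fin n) (Fin n) ℝ)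
    (h : ∀ x i j, pd i (pd j u) x = K i j) : IsQuadraticPoly u := by
  have hK : ∀ i j, K i j = K j i := by
    intro i j
    rw [← h 0 i j, ← h 0 j i]
    exact pd_comm hu.two i j 0
  have h1 : ∀ j x, pd j u x = ∑ i, K i j * x i + pd j u 0 := by
    intro j x
    have hs : ∀ i, Sm (fun x : EE n => K i j * x i) := fun i => contDiff_const.mul (csm i)
    have hs1 : Sm (fun x : EE n => ∑ i, K i j * x i) := ContDiff.sum fun i _ => hs i
    have := const_of_pd (f := fun x => pd j u x - ∑ i, K i j * x i)
      ((hu.pd j).sub hs1) (fun k x => by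
        rw [pd_sub ((hu.pd j).diff x) (hs1.diff x), pd_sum _ (fun i _ => (hs i).diff x)]
        simp_rw [pd_const_mul ((csm _).diff x), pd_coord]
        simp [h]) x
    simp at this
    linarith
  refine ⟨K, fun i => pd i u 0, u 0, by ext i j; exact hK j i, fun x => ?_⟩
  have hq : ∀ i j, Sm (fun x : EE n => K i j * x i * x j) := fun i j =>
    (contDiff_const.mul (csm i)).mul (csm j)
  have hq1 : ∀ i, Sm (fun x : EE n => ∑ j, K i j * x i * x j) := fun i => ContDiff.sum fun j _ => hq i j
  have hq2 : Sm (fun x : EE n => ∑ i, ∑ j, K i j * x i * x j) := ContDiff.sum fun i _ => hq1 i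
  have hq3 : Sm (fun x : EE n => (1/2) * ∑ i, ∑ j, K i j * x i * x j) := contDiff_const.mul hq2
  have hl : ∀ i, Sm (fun x : EE n => pd i u 0 * x i) := fun i => contDiff_const.mul (csm i)
  have hl1 : Sm (fun x : EE n => ∑ i, pd i u 0 * x i) := ContDiff.sum fun i _ => hl i
  have := const_of_pd (f := fun x => u x - (1/2) * (∑ i, ∑ j, K i j * x i * x j) - ∑ i, pd i u 0 * x i)
    ((hu.sub hq3).sub hl1) (fun k x => by
      rw [pd_sub (Sm.diff (hu.sub hq3) x) (hl1.diff x), pd_sub (hu.diff x) (hq3.diff x),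
        pd_const_mul (hq2.diff x), pd_sum _ (fun i _ => (hq1 i).diff x), pd_sum _ (fun i _ => (hl i).diff x), h1]
      have e1 : ∀ i, pd k (fun x : EE n => ∑ j, K i j * x i * x j) x =
          ∑ j, ((K i j * (if k = i then 1 else 0)) * x j + K i j * x i * (if k = j then 1 else 0)) := by
        intro i
        rw [pd_sum _ (fun j _ => (hq i j).diff x)]
        refine Finset.sum_congr rfl fun j _ => ?_
        rw [pd_mul (Sm.diff (contDiff_const.mul (csm i)) x) ((csm j).diff x),
          pd_const_mul ((csm _).diff x), pd_coord, pd_coord]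
      simp_rw [e1, pd_const_mul ((csm _).diff x), pd_coord, Finset.sum_add_distrib]
      simp
      have : ∑ i, K k i * x i = ∑ i, K i k * x i := Finset.sum_congr rfl fun i _ => by rw [hK]
      linarith) x
  simp at this
  simp
  linarith

end
end YuanSL

namespace YuanSL
open MeasureTheory Set Matrix
section
variable {n : ℕ}

theorem tan_id1 {θ α : ℝ} (h1 : cos θ ≠ 0) (h2 : cos (θ - α) ≠ 0) (hs : sin α ≠ 0) :
    cos α + sin α * tan θ = cos (θ - α) / cos θ ∧
    (cos α - (cos (θ - α) / cos θ)⁻¹) / sin α = tan (θ - α) := by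
  constructor
  · rw [tan_eq_sin_div_cos, cos_sub]; field_simp
  · rw [tan_eq_sin_div_cos]
    have : cos θ = cos (θ - α) * cos α - sin (θ - α) * sin α := by
      rw [← cos_add]; congr 1; ring
    rw [inv_div, div_eq_div_iff hs h2, sub_mul, div_mul_cancel₀ _ h2]
    rw [this]; ring

/-- the angle description -/
def Ang (Θ : ℝ) (H : Matrix (Fin n) (Fin n) ℝ) : Prop :=
  ∃ (U : Matrix (Fin n) (Fin n) ℝ) (θ : Fin n → ℝ), U * Uᵀ = 1 ∧ Uᵀ * U = 1 ∧
    H = cd U (fun i => tan (θ i)) ∧ (∀ j, |θ j| < π / 2) ∧ ∑ i, θ i = Θ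

theorem angle_lower {Θ : ℝ} {θ : Fin n → ℝ} (h : ∀ j, |θ j| < π / 2) (hs : ∑ i, θ i = Θ) (j : Fin n) :
    Θ - ((n : ℝ) - 2) * π / 2 - π / 2 ≤ θ j := by
  have h1 : ∑ i ∈ Finset.univ.erase j, θ i ≤ ∑ i ∈ Finset.univ.erase j, (π / 2) :=
    Finset.sum_le_sum fun i _ => (abs_lt.1 (h i)).2.le
  rw [Finset.sum_const, Finset.card_erase_of_mem (Finset.mem_univ j), Finset.card_univ, Fintype.card_fin,
    nsmul_eq_mul, Nat.cast_pred (Nat.lt_of_le_of_lt (Nat.zero_le _) j.2)] at h1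
  have := Finset.add_sum_erase Finset.univ θ (Finset.mem_univ j)
  linarith

theorem core (hn : 2 ≤ n) {Θ : ℝ} (hΘ : ((n : ℝ) - 2) * π / 2 < Θ) {u : EE n → ℝ} (hu : Sm u)
    (hA : ∀ x, Ang Θ (Matrix.of fun i j => pd i (pd j u) x)) : IsQuadraticPoly u := by
  have hn' : (2 : ℝ) ≤ n := by exact_mod_cast hn
  have hnpos : (0 : ℝ) < n := by linarith
  set δ := Θ - ((n : ℝ) - 2) * π / 2 with hδ
  have hδ0 : 0 < δ := by linarith
  have hδ1 : δ < π := by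
    obtain ⟨U, θ, -, -, -, h4, h5⟩ := hA 0
    have := angle_lower h4 h5 ⟨0, by omega⟩
    have := (abs_lt.1 (h4 ⟨0, by omega⟩)).2
    linarith
  obtain ⟨α, hαdef⟩ : ∃ α, α = δ / (2 * n) := ⟨_, rfl⟩
  have hnα : (n : ℝ) * α = δ / 2 := by rw [hαdef]; field_simp
  have hα0 : 0 < α := by rw [hαdef]; positivity
  have h4α : 4 * α ≤ δ := by nlinarith
  have hα2 : α < π / 2 := by linarith
  have hs0 : 0 < sin α := sin_pos_of_pos_of_lt_pi hα0 (by linarith)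
  -- pointwise facts
  obtain ⟨M, hMdef⟩ : ∃ M : EE n → Matrix (Fin n) (Fin n) ℝ, ∀ x i k,
      M x i k = cos α * (if k = i then 1 else 0) + sin α * pd k (pd i u) x :=
    ⟨fun x i k => _, fun _ _ _ => rfl⟩
  have pt : ∀ x, ∃ (U : Matrix (Fin n) (Fin n) ℝ) (θ : Fin n → ℝ), U * Uᵀ = 1 ∧ Uᵀ * U = 1 ∧
      M x = cd U (fun i => cos (θ i - α) / cos (θ i)) ∧ (∀ j, |θ j - α| ≤ π / 2 - α) ∧
      (∀ j, sin α ≤ cos (θ j - α) / cos (θ j)) ∧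
      (∀ j, (cos α - (cos (θ j - α) / cos (θ j))⁻¹) / sin α = tan (θ j - α)) ∧
      ∑ i, (θ i - α) = Θ - δ / 2 := by
    intro x
    obtain ⟨U, θ, h1, h2, h3, h4, h5⟩ := hA x
    have hb : ∀ j, |θ j - α| ≤ π / 2 - α := by
      intro j
      have := angle_lower h4 h5 j
      have := (abs_lt.1 (h4 j)).2
      rw [abs_le]; constructor <;> linarith
    have hc : ∀ j, 0 < cos (θ j) := fun j => cos_pos_of_mem_Ioo ⟨(abs_lt.1 (h4 j)).1, (abs_lt.1 (h4 j)).2⟩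
    have hc2 : ∀ j, 0 < cos (θ j - α) := fun j => cos_pos' hα0 (hb j)
    refine ⟨U, θ, h1, h2, ?_, hb, ?_, ?_, ?_⟩
    · have e : (fun i => cos (θ i - α) / cos (θ i)) = fun i => cos α * 1 + sin α * tan (θ i) := by
        ext i
        rw [← (tan_id1 (hc i).ne' (hc2 i).ne' hs0.ne').1, mul_one]
      have e2 : ∀ (t : ℝ) (f : Fin n → ℝ), cd U (fun i => t * f i) = t • cd U f := by
        intro t f
        unfold cd
        rw [show (fun i => t * f i) = t • f from rfl, diagonal_smul, Matrix.mul_smul, Matrix.smul_mul]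
      rw [e, ← cd_add, e2, e2, cd_one h1, ← h3]
      ext i k
      rw [hMdef, pd_comm hu.two]
      simp [Matrix.one_apply, eq_comm]
    · intro j
      rw [le_div_iff₀ (hc j)]
      have := sin_le_cos hα0 (hb j)
      have := cos_le_one (θ j)
      nlinarith
    · intro j
      exact (tan_id1 (hc j).ne' (hc2 j).ne' hs0.ne').2
    · rw [Finset.sum_sub_distrib, h5]; simp; linarith
  -- the map
  let X : EE n → EE n := fun x => WithLp.toLp 2 fun i => cos α * x i + sin α * pd i u x
  have hXi : ∀ i, Sm (fun x => X x i) := fun i =>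
    (contDiff_const.mul (csm i)).add (contDiff_const.mul (hu.pd i))
  have hX : ContDiff ℝ (⊤ : ℕ∞) X := contDiff_euclidean.2 hXi
  have pdX : ∀ x i k, pd k (fun x => X x i) x = M x i k := by
    intro x i k
    have : (fun x => X x i) = fun x => cos α * x i + sin α * pd i u x := rfl
    rw [this, pd_add (Sm.diff (contDiff_const.mul (csm i)) x) (Sm.diff (contDiff_const.mul (hu.pd i)) x),
      pd_const_mul ((csm i).diff x), pd_const_mul ((hu.pd i).diff x), pd_coord, hMdef]
  have comp : ∀ (F : EE n → EE n) (_ : ContDiff ℝ (⊤ : ℕ∞) F) (x v : EE n) i,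
      (fderiv ℝ F x v) i = fderiv ℝ (fun x => F x i) x v := by
    intro F hF x v i
    have h1 := (hF.differentiable (by simp) x).hasFDerivAt
    have h2 := ((EuclideanSpace.proj i : EE n →L[ℝ] ℝ).hasFDerivAt (x := F x)).comp x h1
    have h3 : (fun x => F x i) = (EuclideanSpace.proj i : EE n →L[ℝ] ℝ) ∘ F := by ext; simp
    rw [h3, h2.fderiv]; simp
  obtain ⟨Y, hY, hXY, hYX⟩ := diffeo hX hs0 (fun x v => by
    obtain ⟨U, θ, h1, h2, h3, h4, h5, h6, h7⟩ := pt x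
    have e : inner ℝ (fderiv ℝ X x v) v = (fun i => v i) ⬝ᵥ (M x *ᵥ (fun i => v i)) := by
      rw [PiLp.inner_apply]
      simp only [dotProduct, mulVec]
      refine Finset.sum_congr rfl fun i _ => ?_
      rw [comp X hX, fderiv_eq_sum]
      simp only [pdX]
      simp [mul_comm]
    rw [e, h3, cd_quad, Dat.norm_sq, ← norm_rot h1 (fun i => v i), Finset.mul_sum]
    exact Finset.sum_le_sum fun i _ => mul_le_mul_of_nonneg_right (h5 i) (sq_nonneg _))
  have hYi : ∀ i, Sm (fun z => Y z i) := fun i => contDiff_euclidean.1 hY i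
  let DY : EE n → Matrix (Fin n) (Fin n) ℝ := fun z => Matrix.of fun j k => pd k (fun z => Y z j) z
  have hMD : ∀ z, M (Y z) * DY z = 1 := by
    intro z
    ext i k
    have h1 : pd k (fun z => X (Y z) i) z = if k = i then 1 else 0 := by
      simp only [hXY]; exact pd_coord k i z
    have h2 : pd k (fun z => X (Y z) i) z = ∑ j, M (Y z) i j * DY z j k := by
      have hc := ((hXi i).diff (Y z)).hasFDerivAt.comp z (hY.differentiable (by simp) z).hasFDerivAt
      have : (fun z => X (Y z) i) = (fun x => X x i) ∘ Y := rfl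
      rw [pd, this, hc.fderiv, ContinuousLinearMap.comp_apply, fderiv_eq_sum]
      refine Finset.sum_congr rfl fun j _ => ?_
      rw [pdX, comp Y hY, mul_comm]; rfl
    rw [Matrix.mul_apply, ← h2, h1, Matrix.one_apply]
    simp [eq_comm]
  let V : Fin n → EE n → ℝ := fun i z => (sin α)⁻¹ * (cos α * z i - Y z i)
  have hV0 : ∀ i, Sm (fun z => cos α * z i - Y z i) := fun i => (contDiff_const.mul (csm i)).sub (hYi i)
  have hV : ∀ i, Sm (V i) := fun i => contDiff_const.mul (hV0 i)
  have pdV : ∀ z i k, pd k (V i) z = (sin α)⁻¹ * (cos α * (if k = i then 1 else 0) - DY z i k) := by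
    intro z i k
    rw [show V i = fun z => (sin α)⁻¹ * (cos α * z i - Y z i) from rfl, pd_const_mul ((hV0 i).diff z),
      pd_sub (Sm.diff (contDiff_const.mul (csm i)) z) ((hYi i).diff z), pd_const_mul ((csm i).diff z), pd_coord]
    rfl
  have sl : ∀ z, SLmat (Θ - δ / 2) α (Matrix.of fun i j => pd j (V i) z) := by
    intro z
    obtain ⟨U, θ, h1, h2, h3, h4, h5, h6, h7⟩ := pt (Y z)
    refine ⟨U, fun i => θ i - α, h1, h2, ?_, h4, h7⟩
    have hg : ∀ i, cos (θ i - α) / cos (θ i) ≠ 0 := fun i => (hs0.trans_le (h5 i)).ne'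
    have hDY : DY z = cd U (fun i => (cos (θ i - α) / cos (θ i))⁻¹) := by
      have e : cd U (fun i => (cos (θ i - α) / cos (θ i))⁻¹) * M (Y z) = 1 := by
        rw [h3, cd_mul h2, ← cd_one h1]
        congr 1; ext i; exact inv_mul_cancel₀ (hg i)
      exact (left_inv_eq_right_inv e (hMD z)).symm
    have e2 : ∀ (t : ℝ) (f : Fin n → ℝ), cd U (fun i => t * f i) = t • cd U f := by
      intro t f
      unfold cd
      rw [show (fun i => t * f i) = t • f from rfl, diagonal_smul, Matrix.mul_smul, Matrix.smul_mul]
    have e3 : (fun i => tan (θ i - α)) = fun i => (sin α)⁻¹ * (cos α * 1 + (-1) * (cos (θ i - α) / cos (θ i))⁻¹) := by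
      ext i; rw [← h6 i]; field_simp; ring
    change _ = cd U _
    rw [e3, e2, ← cd_add, e2, e2, cd_one h1, ← hDY]
    ext i j
    simp only [Matrix.of_apply, pdV]
    simp [Matrix.one_apply, eq_comm, sub_eq_add_neg]
  let d : Dat n :=
    { Θ := Θ - δ / 2
      α := α
      hΘ := by linarith
      hα := hα0
      hα2 := hα2
      V := V
      V_sm := hV
      V_sym := by
        intro i j x
        have := SLmat.symm (sl x)
        exact congrFun (congrFun this j) i
      sl := sl }
  have hconst : ∀ z, DY z = DY 0 := by
    intro z
    ext i k
    have h1 : d.H z i k = d.H 0 i k := by rw [d.const z, d.const 0]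
    have h2 : pd k (V i) z = pd k (V i) 0 := h1
    rw [pdV, pdV] at h2
    have := mul_left_cancel₀ (inv_ne_zero hs0.ne') h2
    linarith
  have hMc : ∀ x, M x = M (Y 0) := by
    intro x
    have h1 := hMD (X x)
    rw [hYX, hconst] at h1
    have h2 := mul_eq_one_comm.1 (hMD 0)
    exact left_inv_eq_right_inv h1 h2
  refine quad_of_const hu (fun i j => pd i (pd j u) (Y 0)) fun x i j => ?_
  have h1 := congrFun (congrFun (hMc x) j) i
  rw [hMdef, hMdef] at h1
  have := mul_left_cancel₀ hs0.ne' (add_left_cancel h1)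
  exact this

theorem Ang.neg {Θ : ℝ} {H : Matrix (Fin n) (Fin n) ℝ} (h : Ang Θ H) : Ang (-Θ) (-H) := by
  obtain ⟨U, θ, h1, h2, h3, h4, h5⟩ := h
  refine ⟨U, fun i => -θ i, h1, h2, ?_, fun j => by rw [abs_neg]; exact h4 j, by simp [h5]⟩
  rw [h3]
  unfold cd
  simp only [tan_neg]
  rw [← diagonal_neg, Matrix.mul_neg, Matrix.neg_mul]

theorem IsQuad_neg {u : EE n → ℝ} (h : IsQuadraticPoly (fun x => - u x)) : IsQuadraticPoly u := by
  obtain ⟨A, b, c, hA, h⟩ := h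
  refine ⟨-A, -b, -c, hA.neg, fun x => ?_⟩
  have := h x
  simp only [Matrix.neg_apply, Pi.neg_apply, neg_mul, Finset.sum_neg_distrib]
  linarith

theorem main (n : ℕ) (hn : 2 ≤ n) (Θ : ℝ) (hΘ : ((n : ℝ) - 2) * Real.pi / 2 < |Θ|) (u : EuclideanSpace ℝ (Fin n) → ℝ) (hu : ContDiff ℝ (⊤ : ℕ∞) u) (hsym : ∀ x, (hessianMatrix u x).IsHermitian) (hSL : ∀ x, ∑ i, Real.arctan ((hsym x).eigenvalues i) = Θ) : IsQuadraticPoly u := by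
  have hA : ∀ x, Ang Θ (Matrix.of fun i j => pd i (pd j u) x) := by
    intro x
    obtain ⟨U, h1, h2, h3⟩ := spectral (hsym x)
    refine ⟨U, fun i => arctan ((hsym x).eigenvalues i), h1, h2, ?_, fun j => ?_, hSL x⟩
    · simp only [tan_arctan]; exact h3
    · exact abs_lt.2 ⟨by linarith [neg_pi_div_two_lt_arctan ((hsym x).eigenvalues j)], arctan_lt_pi_div_two _⟩
  rcases le_total 0 Θ with h0 | h0
  · rw [abs_of_nonneg h0] at hΘ
    exact core hn hΘ hu hA
  · rw [abs_of_nonpos h0] at hΘ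
    refine IsQuad_neg (core hn hΘ (u := fun x => - u x) hu.neg fun x => ?_)
    have e : ∀ i j, pd i (pd j (fun x => - u x)) x = - pd i (pd j u) x := by
      intro i j
      have : pd j (fun x => - u x) = fun x => - pd j u x := by
        ext y; simp [pd, fderiv_fun_neg]
      rw [this]
      unfold pd; rw [fderiv_fun_neg]; rfl
    simp only [e]
    exact (hA x).neg

end
end YuanSL

/-- Yuan's rigidity theorem for the special Lagrangian equation with large phase
`|Θ| > (n−2)π/2`: entire smooth solutions are quadratic polynomials. -/
theorem yuan_rigidity_special_lagrangian (n : ℕ) (hn : 2 ≤ n) (Θ : ℝ)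
    (hΘ : ((n : ℝ) - 2) * Real.pi / 2 < |Θ|)
    (u : EuclideanSpace ℝ (Fin n) → ℝ)
    (hu : ContDiff ℝ (⊤ : ℕ∞) u)
    (hsym : ∀ x, (hessianMatrix u x).IsHermitian)
    (hSL : ∀ x, ∑ i, Real.arctan ((hsym x).eigenvalues i) = Θ) :
    IsQuadraticPoly u := by
  exact YuanSL.main n hn Θ hΘ u hu hsym hSL
end

section
/- (Convexity of the level sets of ∑ arctan) Let n ≥ 2 and let x ∈ ℝⁿ satisfy ∑_{i=1}^n arctan(xᵢ) ≥ (n−2)π/2. Then for every z ∈ ℝⁿ with ∑_{i=1}^n zᵢ(1+xᵢ²)^{-1} = 0, one has ∑_{i=1}^n xᵢ zᵢ² (1+xᵢ²)^{-2} ≥ 0. -/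
open Real

lemma aux_tan_add {a b : ℝ} (ha : 0 ≤ a) (hb : 0 ≤ b) (hab : a + b < π / 2) :
    tan a + tan b ≤ tan (a + b) := by
  have hca : 0 < cos a := cos_pos_of_mem_Ioo ⟨by linarith [pi_pos], by linarith⟩
  have hcb : 0 < cos b := cos_pos_of_mem_Ioo ⟨by linarith [pi_pos], by linarith⟩
  have hc : 0 < cos (a + b) := cos_pos_of_mem_Ioo ⟨by linarith [pi_pos], by linarith⟩
  have hsa : 0 ≤ sin a := sin_nonneg_of_nonneg_of_le_pi ha (by linarith [pi_pos])
  have hsb : 0 ≤ sin b := sin_nonneg_of_nonneg_of_le_pi hb (by linarith [pi_pos])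
  have hs : 0 ≤ sin (a + b) := sin_nonneg_of_nonneg_of_le_pi (by linarith) (by linarith [pi_pos])
  have e : tan a + tan b = sin (a + b) / (cos a * cos b) := by
    rw [tan_eq_sin_div_cos, tan_eq_sin_div_cos, sin_add]
    field_simp
  rw [e, tan_eq_sin_div_cos (a + b)]
  apply div_le_div_of_nonneg_left hs hc
  rw [cos_add]
  nlinarith [mul_nonneg hsa hsb]

lemma aux_tan_sum {ι : Type*} [DecidableEq ι] (s : Finset ι) (a : ι → ℝ) (ha : ∀ i, 0 ≤ a i)
    (h : ∑ i ∈ s, a i < π / 2) : ∑ i ∈ s, tan (a i) ≤ tan (∑ i ∈ s, a i) := by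
  induction s using Finset.induction_on with
  | empty => simp
  | insert j s hj ih =>
    rw [Finset.sum_insert hj] at h ⊢
    rw [Finset.sum_insert hj]
    have h1 := ih (by linarith [ha j])
    have h2 := aux_tan_add (ha j) (Finset.sum_nonneg fun i (_ : i ∈ s) => ha i) h
    linarith

/-- Convexity of the level sets of `x ↦ ∑ arctan xᵢ` above height `(n−2)π/2`:
for tangent vectors `z`, the quantity `−(1/2)D²H(z,z)` is nonnegative. -/
theorem arctan_level_set_convexity (n : ℕ) (hn : 2 ≤ n) (x : Fin n → ℝ)
    (hx : ((n : ℝ) - 2) * Real.pi / 2 ≤ ∑ i, Real.arctan (x i))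
    (z : Fin n → ℝ) (hz : ∑ i, z i * (1 + x i ^ 2)⁻¹ = 0) :
    0 ≤ ∑ i, x i * z i ^ 2 * ((1 + x i ^ 2) ^ 2)⁻¹ := by
  by_cases hall : ∀ i, 0 ≤ x i
  · exact Finset.sum_nonneg fun i _ => by have := hall i; positivity
  push Not at hall
  obtain ⟨k, hk⟩ := hall
  obtain ⟨w, hw⟩ : ∃ w : Fin n → ℝ, ∀ i, w i = z i * (1 + x i ^ 2)⁻¹ := ⟨_, fun _ => rfl⟩
  have e : ∀ i, x i * z i ^ 2 * ((1 + x i ^ 2) ^ 2)⁻¹ = x i * w i ^ 2 := fun i => by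
    rw [hw, mul_pow, inv_pow, mul_assoc]
  simp only [e]
  simp only [← hw] at hz
  obtain ⟨a, ha⟩ : ∃ a : Fin n → ℝ, ∀ i, a i = π / 2 - arctan (x i) := ⟨_, fun _ => rfl⟩
  have ha0 : ∀ i, 0 ≤ a i := fun i => by rw [ha]; linarith [arctan_lt_pi_div_two (x i)]
  have hsum : ∑ i, a i ≤ π := by
    simp only [ha, Finset.sum_sub_distrib, Finset.sum_const, Finset.card_univ, Fintype.card_fin,
      nsmul_eq_mul]
    linarith
  have htan : ∀ i, tan (a i) = (x i)⁻¹ := fun i => by rw [ha, tan_pi_div_two_sub, tan_arctan]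
  rw [← Finset.add_sum_erase _ _ (Finset.mem_univ k)] at hsum hz ⊢
  set s := Finset.univ.erase k with hs
  have hak : arctan (x k) < 0 := arctan_lt_zero.2 hk
  have hS : ∑ i ∈ s, a i ≤ π / 2 - arctan (-x k) := by
    rw [arctan_neg]; have := ha k; linarith
  have hS2 : ∑ i ∈ s, a i < π / 2 := by rw [arctan_neg] at hS; linarith
  have hpos : ∀ i ∈ s, 0 < x i := fun i hi => by
    have h1 := Finset.single_le_sum (fun j _ => ha0 j) hi
    rw [← arctan_pos]; have := ha i; linarith
  have hT : ∑ i ∈ s, (x i)⁻¹ ≤ (-x k)⁻¹ := by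
    have h1 := aux_tan_sum s a ha0 hS2
    simp only [htan] at h1
    refine h1.trans ?_
    rw [← tan_arctan (-x k), ← tan_pi_div_two_sub]
    have h0 : 0 ≤ ∑ i ∈ s, a i := Finset.sum_nonneg fun i _ => ha0 i
    apply strictMonoOn_tan.monotoneOn ⟨by linarith [pi_pos], hS2⟩ _ hS
    rw [arctan_neg] at hS ⊢
    exact ⟨by linarith [pi_pos], by linarith⟩
  have hC := Finset.sum_sq_le_sum_mul_sum_of_sq_eq_mul s (r := w)
    (f := fun i => x i * w i ^ 2) (g := fun i => (x i)⁻¹)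
    (fun i hi => by have := hpos i hi; positivity)
    (fun i hi => by have := hpos i hi; positivity)
    (fun i hi => by have := hpos i hi; field_simp)
  have hQ : 0 ≤ ∑ i ∈ s, x i * w i ^ 2 :=
    Finset.sum_nonneg fun i hi => by have := hpos i hi; positivity
  have h3 := hC.trans (mul_le_mul_of_nonneg_left hT hQ)
  have h4 : ∑ i ∈ s, w i = - w k := by linarith
  rw [h4, ← div_eq_mul_inv, le_div_iff₀ (by linarith)] at h3
  linarith
end

section
/- Let n ≥ 2 and let x ∈ ℝⁿ satisfy ∑_{i=1}^n arctan(xᵢ) ≥ (n−2)π/2, and suppose that xₙ = min_i xᵢ < 0. Then xᵢ > 0 for every i ≠ n, and ∑_{i=1}^n xᵢ^{-1} ≤ 0. -/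
open Real

lemma arctan_subadd {a b : ℝ} (ha : 0 ≤ a) (hb : 0 ≤ b) :
    Real.arctan (a + b) ≤ Real.arctan a + Real.arctan b := by
  by_cases h : a * b < 1
  · rw [Real.arctan_add h]
    apply Real.arctan_mono
    rw [le_div_iff₀ (by linarith)]
    nlinarith [mul_nonneg ha hb, mul_nonneg (add_nonneg ha hb) (mul_nonneg ha hb)]
  · push Not at h
    have hb' : 0 < b := by
      rcases hb.lt_or_eq with h1 | h1
      · exact h1
      · rw [← h1] at h; norm_num at h
    have h2 : Real.arctan b⁻¹ ≤ Real.arctan a := by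
      apply Real.arctan_mono
      rw [inv_le_iff_one_le_mul₀ hb']
      exact h
    rw [Real.arctan_inv_of_pos hb'] at h2
    linarith [Real.arctan_lt_pi_div_two (a + b)]

lemma arctan_sum_le {ι : Type*} (s : Finset ι) (y : ι → ℝ) (hy : ∀ i ∈ s, 0 ≤ y i) :
    Real.arctan (∑ i ∈ s, y i) ≤ ∑ i ∈ s, Real.arctan (y i) := by
  classical
  induction s using Finset.induction_on with
  | empty => simp
  | insert a s ha ih =>
    rw [Finset.sum_insert ha, Finset.sum_insert ha]
    have h1 : ∀ i ∈ s, 0 ≤ y i := fun i hi => hy i (Finset.mem_insert_of_mem hi)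
    have := arctan_subadd (hy a (Finset.mem_insert_self a s)) (Finset.sum_nonneg h1)
    linarith [ih h1]

/-- If `∑ arctan xᵢ ≥ (n−2)π/2` and the smallest entry `xₙ` is negative, then all
other entries are positive and `∑ xᵢ⁻¹ ≤ 0`. -/
theorem arctan_sum_min_negative (n : ℕ) (hn : 2 ≤ n) (x : Fin n → ℝ)
    (hx : ((n : ℝ) - 2) * Real.pi / 2 ≤ ∑ i, Real.arctan (x i))
    (last : Fin n) (hlast : (last : ℕ) = n - 1)
    (hmin : ∀ i, x last ≤ x i) (hneg : x last < 0) :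
    (∀ i, i ≠ last → 0 < x i) ∧ ∑ i, (x i)⁻¹ ≤ 0 := by
  have hsum : ∀ f : Fin n → ℝ, ∑ i, f i = f last + ∑ i ∈ Finset.univ.erase last, f i :=
    fun f => (Finset.add_sum_erase _ f (Finset.mem_univ last)).symm
  have hc : (Finset.univ.erase last).card = n - 1 := by
    rw [Finset.card_erase_of_mem (Finset.mem_univ last)]; simp
  have hl : Real.arctan (x last) < 0 := by
    simpa using Real.arctan_strictMono hneg
  rw [hsum] at hx
  have hpos : ∀ i, i ≠ last → 0 < x i := by
    intro i hi
    have him : i ∈ Finset.univ.erase last := by simp [hi]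
    rw [← Finset.add_sum_erase _ _ him] at hx
    have h1 : ∑ j ∈ (Finset.univ.erase last).erase i, Real.arctan (x j)
        ≤ ((Finset.univ.erase last).erase i).card • (Real.pi / 2) :=
      Finset.sum_le_card_nsmul _ _ _ (fun j _ => (Real.arctan_lt_pi_div_two _).le)
    have hc2 : ((Finset.univ.erase last).erase i).card = n - 2 := by
      rw [Finset.card_erase_of_mem him, hc]; omega
    rw [hc2, nsmul_eq_mul, Nat.cast_sub hn] at h1
    push_cast at h1
    have h2 : 0 < Real.arctan (x i) := by linarith
    by_contra h3
    push Not at h3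
    have := Real.arctan_mono h3
    rw [Real.arctan_zero] at this
    linarith
  refine ⟨hpos, ?_⟩
  have hp : ∀ i ∈ Finset.univ.erase last, 0 < x i := fun i hi => hpos i (Finset.ne_of_mem_erase hi)
  rw [hsum]
  have h1 := arctan_sum_le (Finset.univ.erase last) (fun i => (x i)⁻¹)
    (fun i hi => (inv_pos.mpr (hp i hi)).le)
  have h2 : ∑ i ∈ Finset.univ.erase last, Real.arctan (x i)⁻¹
      = ∑ i ∈ Finset.univ.erase last, (Real.pi / 2 - Real.arctan (x i)) :=
    Finset.sum_congr rfl (fun i hi => Real.arctan_inv_of_pos (hp i hi))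
  rw [Finset.sum_sub_distrib, Finset.sum_const, hc, nsmul_eq_mul,
    Nat.cast_sub (by omega)] at h2
  push_cast at h2
  have h3 : Real.arctan (-(x last)⁻¹) = Real.pi / 2 + Real.arctan (x last) := by
    rw [Real.arctan_neg, Real.arctan_inv_of_neg hneg]; ring
  have h4 : Real.arctan (∑ i ∈ Finset.univ.erase last, (x i)⁻¹) ≤ Real.arctan (-(x last)⁻¹) := by
    linarith
  have h5 := Real.arctan_strictMono.le_iff_le.mp h4
  linarith
end
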